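/- arXiv:1904.08578 — 4 statements merged into one kernel-verified Lean document; each statement's English description precedes it below -/
import Mathlib

section
/- Let V be a nontrivial simple cuspidal module over the N=2 Ramond algebra 𝔤 of length 2, i.e., dim(V_λ ∩ V_τ) ≤ 2 for all λ ∈ ℂ and τ ∈ {0,1}, with equality attained for some λ and τ. Then there exist a, b, c ∈ ℂ with 2b + c ≠ 2 and 2b − c ≠ 2 such that V is isomorphic, either as a graded 𝔤-module or after interchanging the two parities, to R_{a,b,c}. -/
open Submodule

/-- A module over the `N = 2` Ramond algebra `𝔤`: a `ℤ/2`-graded complex vector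
space `V = even ⊕ odd` with parity-preserving operators `L m`, `H m`,
parity-reversing operators `Gp m` (`G_m^+`), `Gm m` (`G_m^-`), and a scalar `c₀`
(the action of the central element `C`), subject to the defining relations. -/
structure RamondRep (V : Type) [AddCommGroup V] [Module ℂ V] : Type where
  L : ℤ → V →ₗ[ℂ] V
  H : ℤ → V →ₗ[ℂ] V
  Gp : ℤ → V →ₗ[ℂ] V
  Gm : ℤ → V →ₗ[ℂ] V
  c₀ : ℂ
  even : Submodule ℂ V
  odd : Submodule ℂ V
  grading : IsCompl even odd
  L_even : ∀ (m : ℤ), ∀ v ∈ even, L m v ∈ even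
  L_odd : ∀ (m : ℤ), ∀ v ∈ odd, L m v ∈ odd
  H_even : ∀ (m : ℤ), ∀ v ∈ even, H m v ∈ even
  H_odd : ∀ (m : ℤ), ∀ v ∈ odd, H m v ∈ odd
  Gp_even : ∀ (m : ℤ), ∀ v ∈ even, Gp m v ∈ odd
  Gp_odd : ∀ (m : ℤ), ∀ v ∈ odd, Gp m v ∈ even
  Gm_even : ∀ (m : ℤ), ∀ v ∈ even, Gm m v ∈ odd
  Gm_odd : ∀ (m : ℤ), ∀ v ∈ odd, Gm m v ∈ even
  rel_LL : ∀ (m n : ℤ) (v : V),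
    L m (L n v) - L n (L m v) =
      ((n : ℂ) - (m : ℂ)) • L (m + n) v +
        ((1 / 12 : ℂ) * ((n : ℂ) ^ 3 - (n : ℂ)) *
          (if m + n = 0 then (1 : ℂ) else 0) * c₀) • v
  rel_HH : ∀ (m n : ℤ) (v : V),
    H m (H n v) - H n (H m v) =
      ((1 / 3 : ℂ) * (m : ℂ) * (if m + n = 0 then (1 : ℂ) else 0) * c₀) • v
  rel_LH : ∀ (m n : ℤ) (v : V),
    L m (H n v) - H n (L m v) = (n : ℂ) • H (m + n) v
  rel_LGp : ∀ (m p : ℤ) (v : V),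
    L m (Gp p v) - Gp p (L m v) = ((p : ℂ) - (m : ℂ) / 2) • Gp (p + m) v
  rel_LGm : ∀ (m p : ℤ) (v : V),
    L m (Gm p v) - Gm p (L m v) = ((p : ℂ) - (m : ℂ) / 2) • Gm (p + m) v
  rel_HGp : ∀ (m p : ℤ) (v : V),
    H m (Gp p v) - Gp p (H m v) = Gp (m + p) v
  rel_HGm : ∀ (m p : ℤ) (v : V),
    H m (Gm p v) - Gm p (H m v) = -(Gm (m + p) v)
  rel_GpGm : ∀ (p q : ℤ) (v : V),
    Gp p (Gm q v) + Gm q (Gp p v) =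
      (-2 : ℂ) • L (p + q) v + ((p : ℂ) - (q : ℂ)) • H (p + q) v +
        ((1 / 3 : ℂ) * ((p : ℂ) ^ 2 - 1 / 4) *
          (if p + q = 0 then (1 : ℂ) else 0) * c₀) • v
  rel_GpGp : ∀ (p q : ℤ) (v : V), Gp p (Gp q v) + Gp q (Gp p v) = 0
  rel_GmGm : ∀ (p q : ℤ) (v : V), Gm p (Gm q v) + Gm q (Gm p v) = 0

namespace RamondRep

variable {V : Type} [AddCommGroup V] [Module ℂ V]

/-- The weight space `V_μ = {v ∈ V : L₀ v = μ v}`. -/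
def wt (ρ : RamondRep V) (μ : ℂ) : Submodule ℂ V :=
  Module.End.eigenspace (ρ.L 0) μ

/-- The parity components, indexed by `ZMod 2`. -/
def parity (ρ : RamondRep V) (τ : ZMod 2) : Submodule ℂ V :=
  if τ = 0 then ρ.even else ρ.odd

/-- `V` is a weight module: it is the sum of its weight spaces. -/
def IsWeight (ρ : RamondRep V) : Prop := (⨆ μ : ℂ, ρ.wt μ) = ⊤

/-- `V` is cuspidal: a weight module with uniformly bounded weight multiplicities
in each parity. -/
def Cuspidal (ρ : RamondRep V) : Prop :=
  ρ.IsWeight ∧ ∃ p : ℕ, ∀ (μ : ℂ) (τ : ZMod 2),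
    Module.rank ℂ ↥(ρ.wt μ ⊓ ρ.parity τ) ≤ (p : Cardinal)

/-- A subspace invariant under all the operators. -/
def IsSubmod (ρ : RamondRep V) (W : Submodule ℂ V) : Prop :=
  (∀ (m : ℤ), ∀ v ∈ W, ρ.L m v ∈ W) ∧ (∀ (m : ℤ), ∀ v ∈ W, ρ.H m v ∈ W) ∧
    (∀ (m : ℤ), ∀ v ∈ W, ρ.Gp m v ∈ W) ∧ (∀ (m : ℤ), ∀ v ∈ W, ρ.Gm m v ∈ W)

/-- A graded subspace invariant under all the operators. -/
def IsGradedSubmod (ρ : RamondRep V) (W : Submodule ℂ V) : Prop :=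
  ρ.IsSubmod W ∧ W = (W ⊓ ρ.even) ⊔ (W ⊓ ρ.odd)

/-- The trivial representation: all operators act by zero. -/
def IsTrivialRep (ρ : RamondRep V) : Prop :=
  ∀ (m : ℤ) (v : V), ρ.L m v = 0 ∧ ρ.H m v = 0 ∧ ρ.Gp m v = 0 ∧ ρ.Gm m v = 0

/-- `V` is simple: nontrivial, and its only graded submodules are `⊥` and `⊤`. -/
def IsSimple (ρ : RamondRep V) : Prop :=
  ¬ ρ.IsTrivialRep ∧
    ∀ W : Submodule ℂ V, ρ.IsGradedSubmod W → W = ⊥ ∨ W = ⊤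

/-- `V` is generated by `v` as a `𝔤`-module. -/
def GeneratedBy (ρ : RamondRep V) (v : V) : Prop :=
  ∀ W : Submodule ℂ V, ρ.IsSubmod W → v ∈ W → W = ⊤

/-- `V` is a highest weight module. -/
def IsHighestWeight (ρ : RamondRep V) : Prop :=
  ∃ v : V, v ≠ 0 ∧ ρ.GeneratedBy v ∧
    (∃ h h' : ℂ, ρ.L 0 v = h • v ∧ ρ.H 0 v = h' • v) ∧
    (∀ m : ℤ, 0 < m → ρ.L m v = 0 ∧ ρ.H m v = 0 ∧ ρ.Gp m v = 0 ∧ ρ.Gm m v = 0) ∧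
    ρ.Gp 0 v = 0

/-- `V` is a lowest weight module. -/
def IsLowestWeight (ρ : RamondRep V) : Prop :=
  ∃ v : V, v ≠ 0 ∧ ρ.GeneratedBy v ∧
    (∃ h h' : ℂ, ρ.L 0 v = h • v ∧ ρ.H 0 v = h' • v) ∧
    (∀ m : ℤ, m < 0 → ρ.L m v = 0 ∧ ρ.H m v = 0 ∧ ρ.Gp m v = 0 ∧ ρ.Gm m v = 0) ∧
    ρ.Gm 0 v = 0

end RamondRep

/-- The families `(u i)ᵢ, (upm i)ᵢ` (even, `upm = v^{+-}`) and `(up i)ᵢ, (um i)ᵢ`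
(odd) realize the `𝔤`-module `R_{a,b,c}` inside `(W, σ)`: together they form a
basis, spanning the even/odd parts as indicated, `c₀ = 0`, and the action is given
by the `R_{a,b,c}` formulas. -/
def RamondRep.IsRabc {W : Type} [AddCommGroup W] [Module ℂ W] (σ : RamondRep W)
    (u upm up um : ℤ → W) (a b c : ℂ) : Prop :=
  σ.c₀ = 0 ∧
  LinearIndependent ℂ (fun x : (Bool × Bool) × ℤ =>
    if x.1.1 then (if x.1.2 then um x.2 else up x.2)
    else (if x.1.2 then upm x.2 else u x.2)) ∧
  Submodule.span ℂ
    (Set.range u ∪ Set.range upm ∪ Set.range up ∪ Set.range um) = ⊤ ∧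
  σ.even = Submodule.span ℂ (Set.range u ∪ Set.range upm) ∧
  σ.odd = Submodule.span ℂ (Set.range up ∪ Set.range um) ∧
  (∀ m i : ℤ, σ.L m (u i) = (a + (i : ℂ) + b * (m : ℂ)) • u (m + i)) ∧
  (∀ m k : ℤ, σ.L m (up k) = (a + (k : ℂ) + (b - 1 / 2) * (m : ℂ)) • up (m + k)) ∧
  (∀ m k : ℤ, σ.L m (um k) = (a + (k : ℂ) + (b - 1 / 2) * (m : ℂ)) • um (m + k)) ∧
  (∀ m i : ℤ, σ.L m (upm i) = (a + (i : ℂ) + (b - 1) * (m : ℂ)) • upm (m + i) +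
    ((1 / 2 : ℂ) * (2 * b - c - 2) * (m : ℂ) ^ 2) • u (i + m)) ∧
  (∀ m i : ℤ, σ.H m (u i) = c • u (m + i)) ∧
  (∀ m k : ℤ, σ.H m (up k) = (c + 1) • up (m + k)) ∧
  (∀ m k : ℤ, σ.H m (um k) = (c - 1) • um (m + k)) ∧
  (∀ m i : ℤ, σ.H m (upm i) = c • upm (m + i) -
    ((m : ℂ) * (2 * b - c - 2)) • u (m + i)) ∧
  (∀ r i : ℤ, σ.Gp r (u i) = up (r + i)) ∧
  (∀ r i : ℤ, σ.Gm r (u i) = um (r + i)) ∧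
  (∀ r i : ℤ, σ.Gp r (up i) = 0) ∧
  (∀ r i : ℤ, σ.Gm r (um i) = 0) ∧
  (∀ r k : ℤ, σ.Gp r (um k) = upm (k + r) +
    ((c + 2 - 2 * b) * (r : ℂ)) • u (k + r)) ∧
  (∀ r k : ℤ, σ.Gm r (up k) = -upm (r + k) -
    ((2 * a + 2 * (k : ℂ) + (2 * b + c) * (r : ℂ))) • u (k + r)) ∧
  (∀ r i : ℤ, σ.Gm r (upm i) =
    (-(2 * a + 2 * (i : ℂ) + (2 * b + c - 2) * (r : ℂ))) • um (r + i)) ∧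
  (∀ r i : ℤ, σ.Gp r (upm i) = ((2 * b - c - 2) * (r : ℂ)) • up (r + i))

namespace Ramond15

/-- A derivation preserves nilpotency (over `ℂ`). -/
lemma nilp_deriv_aux {R : Type*} [CommRing R] [Algebra ℂ R] (d : Derivation ℂ R R) (x : R) (n : ℕ) :
    ∀ e : ℕ, x ^ n * (d x) ^ e = 0 → IsNilpotent (d x) := by
  induction n with
  | zero => intro e h; exact ⟨e, by simpa using h⟩
  | succ n ih =>
    intro e h
    apply ih (2 * e + 1)
    have h1 : d (x ^ (n + 1) * (d x) ^ e) = 0 := by rw [h]; simp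
    rw [Derivation.leibniz, Derivation.leibniz_pow d x (n + 1)] at h1
    simp only [smul_eq_mul, nsmul_eq_mul, Nat.add_sub_cancel] at h1
    have h2 : ((n + 1 : ℕ) : R) * (x ^ n * (d x) ^ (2 * e + 1)) = 0 := by
      have : x ^ (n + 1) * d (d x ^ e) * (d x) ^ e = 0 := by
        rw [mul_right_comm, h, zero_mul]
      calc _ = (x ^ (n + 1) * d (d x ^ e) + d x ^ e * (((n + 1 : ℕ) : R) * (x ^ n * d x))) * (d x) ^ e
            - x ^ (n + 1) * d (d x ^ e) * (d x) ^ e := by ring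
        _ = 0 := by rw [h1, this]; simp
    have hu : IsUnit ((n + 1 : ℕ) : R) := by
      have : ((n + 1 : ℕ) : R) = algebraMap ℂ R ((n + 1 : ℕ) : ℂ) := by simp
      rw [this]
      apply IsUnit.map
      exact IsUnit.mk0 _ (by exact_mod_cast Nat.succ_ne_zero n)
    exact (hu.mul_right_eq_zero).1 h2

lemma nilp_deriv {R : Type*} [CommRing R] [Algebra ℂ R] (d : Derivation ℂ R R) {x : R}
    (h : IsNilpotent x) : IsNilpotent (d x) := by
  obtain ⟨n, hn⟩ := h
  exact nilp_deriv_aux d x n 0 (by simpa using hn)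

/-- The reduced computation. -/
lemma reduced {R : Type*} [CommRing R] [Algebra ℂ R] (d : ℤ → Derivation ℂ R R) (h : ℤ → R)
    (C : ℂ) (hC : C ≠ 0)
    (hd : ∀ k n : ℤ, d k (h n) = (n : R) * h (n + k)) (h0 : h 0 = algebraMap ℂ R C)
    (hs : ∀ m, ∃ χ : ℂ, IsNilpotent (h m * h (-m) - algebraMap ℂ R χ)) (m n : ℤ) :
    IsNilpotent (h m * h n - algebraMap ℂ R C * h (m + n)) := by
  set π := Ideal.Quotient.mk (nilradical R) with hπ
  have key : ∀ x : R, IsNilpotent x ↔ π x = 0 := fun x => by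
    rw [hπ, Ideal.Quotient.eq_zero_iff_mem, mem_nilradical]
  set c : R ⧸ nilradical R := π (algebraMap ℂ R C) with hc
  have hI : ∀ k : ℤ, k ≠ 0 → IsUnit (k : R ⧸ nilradical R) := by
    intro k hk
    have : (k : R ⧸ nilradical R) = π (algebraMap ℂ R (k : ℂ)) := by simp
    rw [this]
    exact ((IsUnit.mk0 (k : ℂ) (by exact_mod_cast hk)).map (algebraMap ℂ R)).map π
  have hcu : IsUnit c := ((IsUnit.mk0 C hC).map (algebraMap ℂ R)).map π
  have red : IsReduced (R ⧸ nilradical R) :=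
    (Ideal.isRadical_iff_quotient_reduced _).1 (Ideal.radical_isRadical _)
  set g : ℤ → R ⧸ nilradical R := fun i => π (h i) with hg
  have g0 : g 0 = c := by simp [hg, h0, hc]
  -- evenness
  have hev : ∀ k m : ℤ, g m * g (k - m) = g (-m) * g (k + m) := by
    intro k m
    obtain ⟨χ, hχ⟩ := hs m
    have h1 := (key _).1 (nilp_deriv (d k) hχ)
    rw [map_sub, Derivation.leibniz, Derivation.map_algebraMap] at h1
    simp only [smul_eq_mul, hd, sub_zero, map_add, map_mul, map_intCast] at h1
    rcases eq_or_ne m 0 with rfl | hm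
    · simp
    · apply (hI m hm).mul_left_cancel
      have e1 : π (h (k - m)) = π (h (-m + k)) := by congr 2; ring
      have e2 : π (h (k + m)) = π (h (m + k)) := by congr 2; ring
      simp only [hg, e1, e2]
      push_cast at h1
      linear_combination -h1
  -- degree one
  have h1c : ∀ m : ℤ, g m * g (1 - m) = c * g 1 := by
    have step : ∀ m : ℤ, g (m + 1) * g (1 - (m + 1)) = g m * g (1 - m) := by
      intro m
      have := hev 1 (-m)
      rw [show (1 : ℤ) - -m = m + 1 by ring, neg_neg, show (1 : ℤ) + -m = 1 - m by ring] at this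
      rw [show (1 : ℤ) - (m + 1) = -m by ring]
      linear_combination this
    intro m
    induction m using Int.induction_on with
    | zero => simp [g0]
    | succ i ih => rw [step, ih]
    | pred i ih =>
      have := step (-(i : ℤ) - 1)
      rw [show -(i : ℤ) - 1 + 1 = -i by ring, ih] at this
      rw [this]
  have hrec : ∀ n m : ℤ, (m : R ⧸ nilradical R) * (g (m - 1) * g (n - (m - 1)))
      = ((m : R ⧸ nilradical R) - 1) * (g m * g (n - m)) + c * g n := by
    intro n m
    have hx : IsNilpotent (h m * h (1 - m) - algebraMap ℂ R C * h 1) := by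
      rw [key]; simp only [map_sub, map_mul]
      have := h1c m
      simp only [hg] at this
      rw [this]; simp [hc]
    have h1 := (key _).1 (nilp_deriv (d (n - 1)) hx)
    rw [map_sub, Derivation.leibniz, Derivation.leibniz, Derivation.map_algebraMap] at h1
    simp only [smul_eq_mul, hd, map_sub, map_add, map_mul, map_intCast, mul_zero, add_zero] at h1
    have e1 : h (1 - m + (n - 1)) = h (n - m) := by congr 1; ring
    have e2 : h (m + (n - 1)) = h (n + (m - 1)) := by congr 1; ring
    have e3 : h (1 + (n - 1)) = h n := by congr 1; ring
    rw [e1, e2, e3] at h1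
    have h3 := hev n (m - 1)
    simp only [hg] at h3 ⊢
    rw [show -(m - 1) = 1 - m by ring] at h3
    push_cast at h1
    have hc' : π (algebraMap ℂ R C) = c := rfl
    rw [hc'] at h1
    linear_combination (m : R ⧸ nilradical R) * h3 + h1
  have hlin : ∀ (n : ℤ) (j : ℕ), g (j + 1) * g (n - (j + 1)) - c * g n
      = ((j : R ⧸ nilradical R) + 1) * (g 1 * g (n - 1) - c * g n) := by
    intro n j
    induction j with
    | zero => simp
    | succ j ih =>
      have := hrec n (j + 2)
      rw [show (j : ℤ) + 2 - 1 = j + 1 by ring] at this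
      push_cast at this ⊢
      rw [show (j : ℤ) + 1 + 1 = j + 2 by ring]
      have hu : IsUnit ((j : R ⧸ nilradical R) + 1) := by
        have := hI (j + 1) (by omega); push_cast at this; exact this
      apply hu.mul_left_cancel
      linear_combination -this + ((j : R ⧸ nilradical R) + 2) * ih
  -- nonzero degrees
  have hg1 : ∀ n : ℤ, n ≠ 0 → g 1 * g (n - 1) - c * g n = 0 := by
    intro n hn
    obtain ⟨j, hj⟩ : ∃ j : ℕ, (j : ℤ) + 1 = |n| :=
      ⟨(|n| - 1).toNat, by have := abs_pos.2 hn; omega⟩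
    have h1 := hlin n j
    have h2 : g (j + 1) * g (n - (j + 1)) = c * g n := by
      rw [hj]
      rcases abs_choice n with h | h
      · rw [h]; simp [g0, mul_comm]
      · rw [h]
        have := hev n n
        rw [show n - -n = n + n by ring, ← this]; simp [g0, mul_comm]
    have hu : IsUnit ((j : R ⧸ nilradical R) + 1) := by
      have := hI (j + 1) (by omega); push_cast at this; exact this
    rw [h2, sub_self] at h1
    exact (hu.mul_right_eq_zero).1 h1.symm
  have fin1 : ∀ n m : ℤ, g 1 * g (n - 1) - c * g n = 0 → g m * g (n - m) = c * g n := by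
    intro n m h1
    have pos : ∀ j : ℕ, g j * g (n - j) = c * g n := by
      intro j
      cases j with
      | zero => simp [g0]
      | succ j =>
        have := hlin n j
        rw [h1, mul_zero, sub_eq_zero] at this
        push_cast; exact this
    obtain ⟨j, rfl | rfl⟩ := Int.eq_nat_or_neg m
    · exact pos j
    · have := hev n j
      rw [sub_neg_eq_add, ← this, pos]
  have hg1' : ∀ n : ℤ, g 1 * g (n - 1) - c * g n = 0 := by
    intro n
    rcases eq_or_ne n 0 with rfl | hn
    · have a1 := fin1 2 1 (hg1 2 (by norm_num))
      have a2 := fin1 (-2) (-1) (hg1 (-2) (by norm_num))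
      have a3 := hlin 0 1
      norm_num at a1 a2 a3 ⊢
      have a4 : (g 1 * g (-1) - c * g 0) ^ 2 = 0 := by
        rw [g0] at *
        linear_combination (g (-1) * g (-1)) * a1 + c * g 2 * a2 + c ^ 2 * a3
      exact pow_eq_zero_iff (two_ne_zero) |>.1 a4
    · exact hg1 n hn
  rw [key]
  have := fin1 (m + n) m (hg1' _)
  rw [show m + n - m = n by ring] at this
  simp only [hg] at this
  simp [this, hc]

end Ramond15

namespace Ramond15

variable {M : Type} [AddCommGroup M] [Module ℂ M]

lemma not_indep3 {S : Submodule ℂ M} (hS : Module.rank ℂ S ≤ 2) (v : Fin 3 → M) (hv : ∀ i, v i ∈ S) :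
    ¬ LinearIndependent ℂ v := by
  intro h
  have h1 : LinearIndependent ℂ (fun i => (⟨v i, hv i⟩ : S)) :=
    LinearIndependent.of_comp S.subtype h
  have h2 := h1.cardinal_le_rank.trans hS
  simp only [Cardinal.mk_fin] at h2
  norm_num at h2

lemma loc_nil {z : Module.End ℂ M} {v : M} {r : ℕ} (h : z v = v) (hr : (z ^ r) v = 0) : v = 0 := by
  have : ∀ r : ℕ, (z ^ r) v = v := by
    intro r
    induction r with
    | zero => simp
    | succ r ih => rw [pow_succ, Module.End.mul_apply, h, ih]
  rw [← this r, hr]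

lemma nil2 {x y : Module.End ℂ M} (hxy : Commute x y) (hx : ∀ v, ∃ r, (x ^ r) v = 0)
    (hy : ∀ v, ∃ r, (y ^ r) v = 0) {S : Submodule ℂ M} (hS : Module.rank ℂ S ≤ 2)
    (hxS : ∀ v ∈ S, x v ∈ S) (hyS : ∀ v ∈ S, y v ∈ S) {v : M} (hv : v ∈ S) : x (y v) = 0 := by
  by_contra hne
  apply not_indep3 hS ![v, x v, y (x v)]
  · intro i; fin_cases i
    · exact hv
    · exact hxS _ hv
    · exact hyS _ (hxS _ hv)
  have hcomm : y (x v) = x (y v) := by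
    have := congrArg (fun f : Module.End ℂ M => f v) hxy.eq
    exact this.symm
  rw [Fintype.linearIndependent_iff]
  intro g hg
  simp only [Fin.sum_univ_three, Matrix.cons_val_zero, Matrix.cons_val_one, Matrix.cons_val] at hg
  have g0 : g 0 = 0 := by
    by_contra h0
    have hv0 : v = 0 := by
      obtain ⟨r, hr⟩ := hx v
      set p : Module.End ℂ M := (-(g 1 / g 0)) • 1 + (-(g 2 / g 0)) • y with hp
      have hpx : Commute p x := by
        rw [hp]
        exact ((Commute.one_left x).smul_left _).add_left (hxy.symm.smul_left _)
      refine loc_nil (z := p * x) (r := r) ?_ ?_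
      · rw [Module.End.mul_apply, hp]
        simp only [LinearMap.add_apply, LinearMap.smul_apply, Module.End.one_apply]
        have : v = (g 0)⁻¹ • (g 0 • v) := by rw [smul_smul, inv_mul_cancel₀ h0, one_smul]
        have h2 : g 0 • v = -(g 1 • x v + g 2 • y (x v)) := by
          rw [eq_neg_iff_add_eq_zero]; rw [← hg]; abel
        conv_rhs => rw [this, h2]
        module
      · rw [hpx.mul_pow, Module.End.mul_apply, hr, map_zero]
    rw [hv0] at hne; simp at hne
  have g1 : g 1 = 0 := by
    by_contra h0
    have hv0 : x v = 0 := by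
      obtain ⟨r, hr⟩ := hy (x v)
      refine loc_nil (z := (-(g 2 / g 1)) • y) (r := r) ?_ ?_
      · simp only [LinearMap.smul_apply]
        have : x v = (g 1)⁻¹ • (g 1 • x v) := by rw [smul_smul, inv_mul_cancel₀ h0, one_smul]
        have h2 : g 1 • x v = -(g 2 • y (x v)) := by
          rw [eq_neg_iff_add_eq_zero, ← hg, g0]; simp
        conv_rhs => rw [this, h2]
        module
      · rw [smul_pow, LinearMap.smul_apply, hr, smul_zero]
    rw [← hcomm, hv0] at hne; simp at hne
  have g2 : g 2 = 0 := by
    rw [g0, g1] at hg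
    simp only [zero_smul, zero_add, smul_eq_zero] at hg
    rcases hg with h | h
    · exact h
    · exact absurd (hcomm ▸ h) hne
  intro i; fin_cases i <;> assumption

lemma exists_eigvec {S : Submodule ℂ M} (hS : Module.rank ℂ S ≤ 2) (hne : S ≠ ⊥)
    (f : Module.End ℂ M) (hf : ∀ v ∈ S, f v ∈ S) : ∃ (χ : ℂ) (v : M), v ∈ S ∧ v ≠ 0 ∧ f v = χ • v := by
  have : FiniteDimensional ℂ S := by
    rw [FiniteDimensional, ← Module.rank_lt_aleph0_iff]
    exact hS.trans_lt (by exact_mod_cast Cardinal.natCast_lt_aleph0 (n := 2))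
  have : Nontrivial S := Submodule.nontrivial_iff_ne_bot.2 hne
  obtain ⟨χ, hχ⟩ := Module.End.exists_eigenvalue (f.restrict hf)
  obtain ⟨v, hv⟩ := hχ.exists_hasEigenvector
  refine ⟨χ, v, v.2, by simpa using hv.2, ?_⟩
  have := hv.apply_eq_smul
  simpa using congrArg Subtype.val this

/-- Lemma A -/
theorem lemA (L H : ℤ → Module.End ℂ M) (Mi : ℤ → Submodule ℂ M) (a C : ℂ) (hC : C ≠ 0)
    (hMi : ∀ i v, v ∈ Mi i ↔ L 0 v = (a + i) • v)
    (hsup : ⨆ i, Mi i = ⊤) (hrank : ∀ i, Module.rank ℂ (Mi i) ≤ 2)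
    (hH0 : H 0 = C • 1)
    (hHH : ∀ m n, H m * H n = H n * H m)
    (hLH : ∀ m n : ℤ, L m * H n - H n * L m = (n : ℂ) • H (m + n))
    (hLMi : ∀ m i : ℤ, ∀ v ∈ Mi i, L m v ∈ Mi (i + m))
    (hne : ∃ i, Mi i ≠ ⊥)
    (hsim : ∀ N : ℤ → Submodule ℂ M, (∀ i, N i ≤ Mi i) → (∀ m i : ℤ, ∀ v ∈ N i, L m v ∈ N (i + m)) →
      (∀ m i : ℤ, ∀ v ∈ N i, H m v ∈ N (i + m)) → (∀ i, N i = ⊥) ∨ (∀ i, N i = Mi i)) (m n : ℤ) :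
    H m * H n = C • H (m + n) := by
  have hHMi : ∀ m i : ℤ, ∀ v ∈ Mi i, H m v ∈ Mi (i + m) := by
    intro m i v hv
    rw [hMi] at hv ⊢
    have := congrArg (fun f : Module.End ℂ M => f v) (hLH 0 m)
    simp only [LinearMap.sub_apply, Module.End.mul_apply, LinearMap.smul_apply, hv, map_smul,
      zero_add] at this
    rw [sub_eq_iff_eq_add] at this
    rw [this]; push_cast; module
  have extM : ∀ f g : Module.End ℂ M, (∀ i, ∀ v ∈ Mi i, f v = g v) → f = g := by
    intro f g h
    rw [← sub_eq_zero, ← LinearMap.ker_eq_top, eq_top_iff, ← hsup]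
    refine iSup_le fun i v hv => ?_
    rw [LinearMap.mem_ker, LinearMap.sub_apply, h i v hv, sub_self]
  set P := Algebra.adjoin ℂ (Set.range H) with hP
  have hcommS : ∀ x ∈ Set.range H, ∀ y ∈ Set.range H, x * y = y * x := by
    rintro _ ⟨i, rfl⟩ _ ⟨j, rfl⟩; exact hHH i j
  have hPc : ∀ x ∈ P, ∀ y ∈ P, Commute x y := by
    intro x hx y hy
    refine Algebra.commute_of_mem_adjoin_of_forall_mem_commute hy ?_
    intro b hb
    refine (Algebra.commute_of_mem_adjoin_of_forall_mem_commute hx ?_).symm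
    intro b' hb'
    exact hcommS b hb b' hb'
  have hHP : ∀ k, H k ∈ P := fun k => Algebra.subset_adjoin ⟨k, rfl⟩
  have hδP : ∀ k, ∀ x ∈ P, L k * x - x * L k ∈ P := by
    intro k x hx
    induction hx using Algebra.adjoin_induction with
    | mem x hx =>
      obtain ⟨n, rfl⟩ := hx
      rw [hLH]; exact P.smul_mem (hHP _) _
    | algebraMap r =>
      rw [Algebra.commutes, sub_self]; exact P.zero_mem
    | add x y hx hy h1 h2 =>
      have : L k * (x + y) - (x + y) * L k = (L k * x - x * L k) + (L k * y - y * L k) := by noncomm_ring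
      rw [this]; exact P.add_mem h1 h2
    | mul x y hx hy h1 h2 =>
      have : L k * (x * y) - (x * y) * L k = (L k * x - x * L k) * y + x * (L k * y - y * L k) := by
        noncomm_ring
      rw [this]; exact P.add_mem (P.mul_mem h1 hy) (P.mul_mem hx h2)
  -- degree zero elements have a single eigenvalue
  have hdeg0 : ∀ x ∈ P, Commute (L 0) x → ∀ i, ∀ v ∈ Mi i, x v ∈ Mi i := by
    intro x hx hx0 i v hv
    rw [hMi] at hv ⊢
    have := congrArg (fun f : Module.End ℂ M => f v) hx0.eq
    simp only [Module.End.mul_apply, hv, map_smul] at this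
    exact this
  have heig : ∀ x ∈ P, Commute (L 0) x → ∃ χ : ℂ, (x - algebraMap ℂ _ χ) ^ 2 = 0 := by
    intro x hx hx0
    obtain ⟨i0, hi0⟩ := hne
    obtain ⟨χ, v0, hv0, hv0ne, hv0e⟩ := exists_eigvec (hrank i0) hi0 x (hdeg0 x hx hx0 i0)
    refine ⟨χ, ?_⟩
    set y := x - algebraMap ℂ (Module.End ℂ M) χ with hy
    have hyP : y ∈ P := P.sub_mem hx (P.algebraMap_mem _)
    have hy0 : Commute (L 0) y := hx0.sub_right (Algebra.commutes χ (L 0)).symm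
    let Y : Submodule ℂ M :=
      { carrier := {v | ∃ r, (y ^ r) v = 0}
        add_mem' := by
          rintro u v ⟨r, hr⟩ ⟨s, hs⟩
          refine ⟨r + s, ?_⟩
          rw [map_add, pow_add, Module.End.mul_apply, Module.End.mul_apply, hs, map_zero, add_zero,
            ← Module.End.mul_apply, ← pow_add, add_comm, pow_add, Module.End.mul_apply, hr, map_zero]
        zero_mem' := ⟨0, by simp⟩
        smul_mem' := by
          rintro c v ⟨r, hr⟩
          exact ⟨r, by rw [map_smul, hr, smul_zero]⟩ }
    have hLy : ∀ k (r : ℕ), ∃ z ∈ P, L k * y ^ (r + 1) - y ^ (r + 1) * L k = z * y ^ r := by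
      intro k r
      induction r with
      | zero => exact ⟨_, hδP k y hyP, by simp⟩
      | succ r ih =>
        obtain ⟨z, hz, hzr⟩ := ih
        refine ⟨z + (L k * y - y * L k), P.add_mem hz (hδP k y hyP), ?_⟩
        have hc := hPc _ (P.pow_mem hyP (r + 1)) _ (hδP k y hyP)
        calc L k * y ^ (r + 1 + 1) - y ^ (r + 1 + 1) * L k
            = (L k * y ^ (r + 1) - y ^ (r + 1) * L k) * y + y ^ (r + 1) * (L k * y - y * L k) := by
              rw [pow_succ y (r + 1)]; noncomm_ring
          _ = _ := by rw [hzr, hc.eq, mul_assoc, ← pow_succ]; noncomm_ring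
    have := hsim (fun i => Y ⊓ Mi i) (fun i => inf_le_right) ?_ ?_
    · rcases this with h | h
      · exfalso
        have : v0 ∈ (⊥ : Submodule ℂ M) := by
          rw [← h i0]
          refine ⟨⟨1, ?_⟩, hv0⟩
          simp [hy, hv0e, Module.algebraMap_end_apply]
        exact hv0ne (by simpa using this)
      · have hY : Y = ⊤ := by
          rw [eq_top_iff, ← hsup]
          refine iSup_le fun i => ?_
          rw [← h i]; exact inf_le_left
        have hYm : ∀ v, ∃ r, (y ^ r) v = 0 := fun v => by
          have : v ∈ Y := by rw [hY]; trivial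
          exact this
        apply extM
        intro i v hv
        rw [pow_two, Module.End.mul_apply]
        exact nil2 (Commute.refl y) hYm hYm (hrank i) (hdeg0 y hyP hy0 i) (hdeg0 y hyP hy0 i) hv
    · rintro k i v ⟨⟨r, hr⟩, hv⟩
      refine ⟨⟨r + 1, ?_⟩, hLMi k i v hv⟩
      obtain ⟨z, hz, hzr⟩ := hLy k r
      have := congrArg (fun f : Module.End ℂ M => f v) hzr
      simp only [LinearMap.sub_apply, Module.End.mul_apply, hr, map_zero] at this
      have e0 : (y ^ (r + 1)) v = 0 := by rw [pow_succ', Module.End.mul_apply, hr, map_zero]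
      rw [e0, map_zero, zero_sub, neg_eq_zero] at this
      exact this
    · rintro k i v ⟨⟨r, hr⟩, hv⟩
      refine ⟨⟨r, ?_⟩, hHMi k i v hv⟩
      have := congrArg (fun f : Module.End ℂ M => f v) (hPc _ (P.pow_mem hyP r) _ (hHP k)).eq
      simp only [Module.End.mul_apply, hr, map_zero] at this
      exact this
  -- the commutative ring
  let _ : CommRing P := { (inferInstance : Ring P) with
    mul_comm := fun x y => Subtype.ext (hPc x.1 x.2 y.1 y.2).eq }
  let d : ℤ → Derivation ℂ P P := fun k => Derivation.mk'
    { toFun := fun x => ⟨L k * x.1 - x.1 * L k, hδP k x.1 x.2⟩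
      map_add' := fun x y => Subtype.ext (by simp; noncomm_ring)
      map_smul' := fun c x => Subtype.ext (by simp [smul_sub]) }
    (fun x y => Subtype.ext (by
      have e : ((y • (⟨L k * x.1 - x.1 * L k, hδP k x.1 x.2⟩ : P) : P) : Module.End ℂ M)
        = (L k * x.1 - x.1 * L k) * y.1 := (hPc _ y.2 _ (hδP k x.1 x.2)).eq
      have e2 : ((x • (⟨L k * y.1 - y.1 * L k, hδP k y.1 y.2⟩ : P) : P) : Module.End ℂ M)
        = x.1 * (L k * y.1 - y.1 * L k) := rfl
      change L k * (x.1 * y.1) - (x.1 * y.1) * L k = 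
        ((x • (⟨L k * y.1 - y.1 * L k, hδP k y.1 y.2⟩ : P) : P) : Module.End ℂ M) + 
        ((y • (⟨L k * x.1 - x.1 * L k, hδP k x.1 x.2⟩ : P) : P) : Module.End ℂ M)
      rw [e, e2]; noncomm_ring))
  let h : ℤ → P := fun n => ⟨H n, hHP n⟩
  have hred : ∀ m n, IsNilpotent (h m * h n - algebraMap ℂ P C * h (m + n)) := by
    apply reduced d h C hC
    · intro k n
      apply Subtype.ext
      change L k * H n - H n * L k = _
      rw [hLH]
      have e : (((n : P) * h (n + k) : P) : Module.End ℂ M) = ((n : P) : Module.End ℂ M) * H (n + k) := rfl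
      rw [e, add_comm]
      have e2 : ((n : P) : Module.End ℂ M) = ((n : ℤ) : Module.End ℂ M) := by simp
      rw [e2]
      ext v; simp [Int.cast_smul_eq_zsmul]
    · apply Subtype.ext
      change H 0 = _
      rw [hH0]; rfl
    · intro m
      obtain ⟨χ, hχ⟩ := heig (H m * H (-m)) (P.mul_mem (hHP _) (hHP _)) (by
        change L 0 * (H m * H (-m)) = (H m * H (-m)) * L 0
        have h1 := hLH 0 m
        have h2 := hLH 0 (-m)
        rw [sub_eq_iff_eq_add, zero_add] at h1 h2
        calc L 0 * (H m * H (-m)) = (L 0 * H m) * H (-m) := by rw [mul_assoc]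
          _ = (m : ℂ) • (H m * H (-m)) + H m * (L 0 * H (-m)) := by
            rw [h1, add_mul, smul_mul_assoc, mul_assoc]
          _ = _ := by
            rw [h2, mul_add, mul_smul_comm, mul_assoc]; push_cast; module)
      refine ⟨χ, 2, Subtype.ext ?_⟩
      exact hχ
  set T : ℤ → ℤ → Module.End ℂ M := fun m n => H m * H n - C • H (m + n) with hT
  have hTP : ∀ m n, T m n ∈ P := fun m n =>
    P.sub_mem (P.mul_mem (hHP _) (hHP _)) (P.smul_mem (hHP _) _)
  have hTnil : ∀ m n, IsNilpotent (T m n) := by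
    intro m n
    obtain ⟨r, hr⟩ := hred m n
    refine ⟨r, ?_⟩
    have := congrArg Subtype.val hr
    have e : (h m * h n - algebraMap ℂ P C * h (m + n) : P).1 = T m n := by
      change H m * H n - (algebraMap ℂ (Module.End ℂ M) C) * H (m + n) = _
      rw [hT]; ext v; simp
    rw [← e]
    exact this
  have hTM : ∀ m n i : ℤ, ∀ v ∈ Mi i, T m n v ∈ Mi (i + (m + n)) := by
    intro m n i v hv
    simp only [hT, LinearMap.sub_apply, Module.End.mul_apply, LinearMap.smul_apply]
    refine Submodule.sub_mem _ ?_ (Submodule.smul_mem _ _ (hHMi _ _ _ hv))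
    have := hHMi m _ _ (hHMi n i v hv)
    rwa [add_assoc, add_comm n m] at this
  have hunit : ∀ j, ∀ v, H j v = 0 → v = 0 := by
    intro j v hv
    obtain ⟨r, hr⟩ := hTnil (-j) j
    have e : T (-j) j v = (-(C * C)) • v := by
      simp [hT, hv, hH0, smul_smul]
    have : ∀ r : ℕ, (T (-j) j ^ r) v = ((-(C * C)) ^ r) • v := by
      intro r
      induction r with
      | zero => simp
      | succ r ih => rw [pow_succ, Module.End.mul_apply, e, map_smul, ih, smul_smul, pow_succ']
    have h2 := this r
    rw [hr] at h2
    simp only [LinearMap.zero_apply] at h2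
    rcases smul_eq_zero.1 h2.symm with h3 | h3
    · exfalso; exact pow_ne_zero r (neg_ne_zero.2 (mul_ne_zero hC hC)) h3
    · exact h3
  have hTT : ∀ m n m' n', T m n * T m' n' = 0 := by
    intro m n m' n'
    apply extM
    intro i v hv
    rw [Module.End.mul_apply, LinearMap.zero_apply]
    have locnil : ∀ m n, ∀ w, ∃ r, ((H (-(m + n)) * T m n) ^ r) w = 0 := by
      intro m n w
      obtain ⟨r, hr⟩ := hTnil m n
      exact ⟨r, by rw [(hPc _ (hHP _) _ (hTP _ _)).mul_pow, hr]; simp⟩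
    have pres : ∀ m n : ℤ, ∀ w ∈ Mi i, (H (-(m + n)) * T m n) w ∈ Mi i := by
      intro m n w hw
      have := hHMi (-(m + n)) _ _ (hTM m n i w hw)
      rw [add_neg_cancel_right] at this
      exact this
    have := nil2 (hPc _ (P.mul_mem (hHP (-(m + n))) (hTP m n)) _ (P.mul_mem (hHP (-(m' + n'))) (hTP m' n')))
      (locnil m n) (locnil m' n') (hrank i) (pres m n) (pres m' n') hv
    simp only [Module.End.mul_apply] at this
    have h1 := hunit _ _ this
    have h2 := congrArg (fun f : Module.End ℂ M => f (T m' n' v)) (hPc _ (hTP m n) _ (hHP (-(m' + n')))).eq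
    simp only [Module.End.mul_apply] at h2
    rw [h2] at h1
    exact hunit _ _ h1
  let N : Submodule ℂ M := ⨅ m, ⨅ n, LinearMap.ker (T m n)
  have hN : ∀ v, v ∈ N ↔ ∀ m n, T m n v = 0 := by
    intro v; simp [N, Submodule.mem_iInf]
  have := hsim (fun i => N ⊓ Mi i) (fun i => inf_le_right) ?_ ?_
  · rcases this with h | h
    · exfalso
      obtain ⟨i, hi⟩ := hne
      obtain ⟨v, hv, hv0⟩ := Submodule.exists_mem_ne_zero_of_ne_bot hi
      have hall : ∀ m n, T m n v = 0 := by
        intro m n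
        have : T m n v ∈ N ⊓ Mi (i + (m + n)) := by
          refine ⟨(hN _).2 fun m' n' => ?_, hTM m n i v hv⟩
          have := congrArg (fun f : Module.End ℂ M => f v) (hTT m' n' m n)
          exact this
        rw [h] at this
        simpa using this
      have : v ∈ N ⊓ Mi i := ⟨(hN v).2 hall, hv⟩
      rw [h] at this
      exact hv0 (by simpa using this)
    · rw [← sub_eq_zero]
      apply extM
      intro i v hv
      rw [← h i] at hv
      exact (hN v).1 hv.1 m n
  · rintro k i v ⟨hv, hvi⟩
    refine ⟨(hN _).2 fun m n => ?_, hLMi _ _ _ hvi⟩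
    replace hv := (hN v).1 hv
    have e : L k * T m n - T m n * L k = (m : ℂ) • T (k + m) n + (n : ℂ) • T m (k + n) := by
      have h1 := hLH k m
      have h2 := hLH k n
      have h3 := hLH k (m + n)
      rw [sub_eq_iff_eq_add] at h1 h2 h3
      simp only [hT]
      have e1 : L k * (H m * H n) = (m : ℂ) • (H (k + m) * H n) + (n : ℂ) • (H m * H (k + n)) + H m * H n * L k := by
        rw [← mul_assoc, h1, add_mul, mul_assoc (H m), h2, mul_add, smul_mul_assoc, mul_smul_comm, mul_assoc]
        abel
      rw [mul_sub, e1, mul_smul_comm, h3, sub_mul, smul_mul_assoc,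
        show k + m + n = k + (m + n) by ring, show m + (k + n) = k + (m + n) by ring]
      push_cast
      module
    have := congrArg (fun f : Module.End ℂ M => f v) e
    simp only [LinearMap.sub_apply, Module.End.mul_apply, LinearMap.add_apply, LinearMap.smul_apply, hv,
      map_zero, smul_zero, add_zero, zero_sub, neg_eq_zero] at this
    exact this
  · rintro k i v ⟨hv, hvi⟩
    refine ⟨(hN _).2 fun m n => ?_, hHMi _ _ _ hvi⟩
    replace hv := (hN v).1 hv
    have h2 := congrArg (fun f : Module.End ℂ M => f v) (hPc _ (hTP m n) _ (hHP k)).eq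
    simp only [Module.End.mul_apply, hv, map_zero] at h2
    exact h2

end Ramond15

namespace Ramond15

variable {V : Type} [AddCommGroup V] [Module ℂ V]

/-- Interchange of the two parities. -/
def pshift (ρ : RamondRep V) : RamondRep V :=
  { ρ with
    even := ρ.odd
    odd := ρ.even
    grading := ρ.grading.symm
    L_even := ρ.L_odd
    L_odd := ρ.L_even
    H_even := ρ.H_odd
    H_odd := ρ.H_even
    Gp_even := ρ.Gp_odd
    Gp_odd := ρ.Gp_even
    Gm_even := ρ.Gm_odd
    Gm_odd := ρ.Gm_even }

/-- The mirror automorphism. -/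
def flip (ρ : RamondRep V) : RamondRep V :=
  { ρ with
    H := fun m => -ρ.H m
    Gp := ρ.Gm
    Gm := ρ.Gp
    H_even := fun m v hv => neg_mem (ρ.H_even m v hv)
    H_odd := fun m v hv => neg_mem (ρ.H_odd m v hv)
    Gp_even := ρ.Gm_even
    Gp_odd := ρ.Gm_odd
    Gm_even := ρ.Gp_even
    Gm_odd := ρ.Gp_odd
    rel_HH := fun m n v => by
      have := ρ.rel_HH m n v
      simp only [LinearMap.neg_apply, map_neg, neg_neg]
      exact this
    rel_LH := fun m n v => by
      have := ρ.rel_LH m n v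
      simp only [LinearMap.neg_apply, map_neg, smul_neg, ← this]
      abel
    rel_LGp := ρ.rel_LGm
    rel_LGm := ρ.rel_LGp
    rel_HGp := fun m n v => by
      have := ρ.rel_HGm m n v
      simp only [LinearMap.neg_apply, map_neg]
      rw [← neg_eq_iff_eq_neg] at this
      rw [← this]; abel
    rel_HGm := fun m n v => by
      have := ρ.rel_HGp m n v
      simp only [LinearMap.neg_apply, map_neg]
      rw [← this]; abel
    rel_GpGm := fun p q v => by
      have := ρ.rel_GpGm q p v
      simp only [LinearMap.neg_apply]
      rw [add_comm, this, add_comm q p]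
      by_cases h : p + q = 0
      · have : q = -p := by omega
        subst this
        simp only [add_neg_cancel, if_true]
        push_cast
        module
      · simp only [h, if_false]
        module
    rel_GpGp := ρ.rel_GmGm
    rel_GmGm := ρ.rel_GpGp }

lemma pshift_pshift (ρ : RamondRep V) : pshift (pshift ρ) = ρ := rfl

lemma flip_flip (ρ : RamondRep V) : flip (flip ρ) = ρ := by
  cases ρ
  simp [flip]

structure Hyp (ρ : RamondRep V) : Prop where
  simple : ρ.IsSimple
  weight : ρ.IsWeight
  bd : ∀ (μ : ℂ) (τ : ZMod 2), Module.rank ℂ ↥(ρ.wt μ ⊓ ρ.parity τ) ≤ 2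
  eq : ∃ (μ : ℂ) (τ : ZMod 2), Module.rank ℂ ↥(ρ.wt μ ⊓ ρ.parity τ) = 2

lemma parity_pshift (ρ : RamondRep V) (τ : ZMod 2) : (pshift ρ).parity τ = ρ.parity (τ + 1) := by
  have h01 : τ = 0 ∨ τ = 1 := by revert τ; decide
  have h2 : (1 + 1 : ZMod 2) = 0 := by decide
  rcases h01 with rfl | rfl
  · simp [RamondRep.parity, pshift]
  · simp [RamondRep.parity, pshift, h2]

lemma Hyp.pshift {ρ : RamondRep V} (h : Hyp ρ) : Hyp (pshift ρ) where
  simple := ⟨h.simple.1, fun W hW => h.simple.2 W ⟨hW.1, by rw [sup_comm]; exact hW.2⟩⟩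
  weight := h.weight
  bd := fun μ τ => by rw [parity_pshift]; exact h.bd μ _
  eq := by
    obtain ⟨μ, τ, h2⟩ := h.eq
    refine ⟨μ, τ + 1, ?_⟩
    rw [parity_pshift, add_assoc, show (1 + 1 : ZMod 2) = 0 by decide, add_zero]
    exact h2

lemma Hyp.flip {ρ : RamondRep V} (h : Hyp ρ) : Hyp (flip ρ) where
  simple := by
    refine ⟨fun ht => h.simple.1 fun m v => ?_, fun W hW => h.simple.2 W ⟨⟨hW.1.1, ?_, hW.1.2.2.2, hW.1.2.2.1⟩, hW.2⟩⟩
    · obtain ⟨h1, h2, h3, h4⟩ := ht m v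
      exact ⟨h1, neg_eq_zero.1 h2, h4, h3⟩
    · intro m v hv
      have := hW.1.2.1 m v hv
      exact neg_mem_iff.1 this
  weight := h.weight
  bd := h.bd
  eq := h.eq

/-- parity component by integer -/
def par (ρ : RamondRep V) (k : ℤ) : Submodule ℂ V := if Even k then ρ.even else ρ.odd

lemma par_pshift (ρ : RamondRep V) (k : ℤ) : par (pshift ρ) k = par ρ (k + 1) := by
  unfold par
  by_cases h : Even k
  · have : ¬ Even (k + 1) := by rw [Int.even_add_one]; simpa using h
    simp [h, this, pshift]
  · have : Even (k + 1) := by rw [Int.even_add_one]; exact h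
    simp [h, this, pshift]

lemma par_add_two (ρ : RamondRep V) (k : ℤ) : par ρ (k + 1 + 1) = par ρ k := by
  rw [← par_pshift, ← par_pshift, pshift_pshift]

lemma par_parity (ρ : RamondRep V) (k : ℤ) : ∃ τ, par ρ k = ρ.parity τ := by
  by_cases h : Even k
  · exact ⟨0, by simp [par, h, RamondRep.parity]⟩
  · exact ⟨1, by simp [par, h, RamondRep.parity]⟩

lemma par_neg (ρ : RamondRep V) (k : ℤ) : par ρ (-k) = par ρ k := by simp [par]

lemma L_par (ρ : RamondRep V) (m k : ℤ) {v : V} (hv : v ∈ par ρ k) : ρ.L m v ∈ par ρ k := by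
  unfold par at *
  split_ifs at * with h
  · exact ρ.L_even m v hv
  · exact ρ.L_odd m v hv

lemma H_par (ρ : RamondRep V) (m k : ℤ) {v : V} (hv : v ∈ par ρ k) : ρ.H m v ∈ par ρ k := by
  unfold par at *
  split_ifs at * with h
  · exact ρ.H_even m v hv
  · exact ρ.H_odd m v hv

lemma Gp_par (ρ : RamondRep V) (m k : ℤ) {v : V} (hv : v ∈ par ρ k) : ρ.Gp m v ∈ par ρ (k + 1) := by
  unfold par at *
  by_cases h : Even k
  · simp only [h, if_true, Int.even_add_one, not_true, if_false] at *
    exact ρ.Gp_even m v hv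
  · simp only [h, if_false, Int.even_add_one, not_false_eq_true, if_true] at *
    exact ρ.Gp_odd m v hv

lemma Gm_par (ρ : RamondRep V) (m k : ℤ) {v : V} (hv : v ∈ par ρ k) : ρ.Gm m v ∈ par ρ (k - 1) := by
  have h1 : par ρ (k - 1) = par ρ (k + 1) := by rw [← par_add_two]; congr 1; ring
  rw [h1]
  exact Gp_par (flip ρ) m k hv

/-- joint weight components -/
def E (ρ : RamondRep V) (a c : ℂ) (i k : ℤ) : Submodule ℂ V :=
  ρ.wt (a + i) ⊓ Module.End.eigenspace (ρ.H 0) (c + k) ⊓ par ρ k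

lemma mem_E {ρ : RamondRep V} {a c : ℂ} {i k : ℤ} {v : V} :
    v ∈ E ρ a c i k ↔ ρ.L 0 v = (a + i) • v ∧ ρ.H 0 v = (c + k) • v ∧ v ∈ par ρ k := by
  simp only [E, RamondRep.wt, Submodule.mem_inf, Module.End.mem_eigenspace_iff, and_assoc]

variable {ρ : RamondRep V} {a c : ℂ}

lemma L_L0 {m : ℤ} {x : ℂ} {v : V} (h : ρ.L 0 v = x • v) : ρ.L 0 (ρ.L m v) = (x + m) • ρ.L m v := by
  have := ρ.rel_LL 0 m v
  rw [h, map_smul, sub_eq_iff_eq_add] at this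
  rw [this]
  by_cases hm : m = 0
  · subst hm; simp [h]
  · simp [hm]; module

lemma H_L0 {m : ℤ} {x : ℂ} {v : V} (h : ρ.L 0 v = x • v) : ρ.L 0 (ρ.H m v) = (x + m) • ρ.H m v := by
  have := ρ.rel_LH 0 m v
  rw [h, map_smul, sub_eq_iff_eq_add] at this
  rw [this, zero_add]; module

lemma Gp_L0 {m : ℤ} {x : ℂ} {v : V} (h : ρ.L 0 v = x • v) : ρ.L 0 (ρ.Gp m v) = (x + m) • ρ.Gp m v := by
  have := ρ.rel_LGp 0 m v
  rw [h, map_smul, sub_eq_iff_eq_add] at this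
  rw [this, add_zero]; simp; module

lemma Gm_L0 {m : ℤ} {x : ℂ} {v : V} (h : ρ.L 0 v = x • v) : ρ.L 0 (ρ.Gm m v) = (x + m) • ρ.Gm m v :=
  Gp_L0 (ρ := flip ρ) h

lemma L_H0 {m : ℤ} {x : ℂ} {v : V} (h : ρ.H 0 v = x • v) : ρ.H 0 (ρ.L m v) = x • ρ.L m v := by
  have := ρ.rel_LH m 0 v
  rw [h, map_smul, Int.cast_zero, zero_smul, sub_eq_zero] at this
  exact this.symm

lemma H_H0 {m : ℤ} {x : ℂ} {v : V} (h : ρ.H 0 v = x • v) : ρ.H 0 (ρ.H m v) = x • ρ.H m v := by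
  have := ρ.rel_HH 0 m v
  rw [h, map_smul] at this
  simpa [sub_eq_zero] using this

lemma Gp_H0 {m : ℤ} {x : ℂ} {v : V} (h : ρ.H 0 v = x • v) : ρ.H 0 (ρ.Gp m v) = (x + 1) • ρ.Gp m v := by
  have := ρ.rel_HGp 0 m v
  rw [h, map_smul, sub_eq_iff_eq_add, zero_add] at this
  rw [this]; module

lemma Gm_H0 {m : ℤ} {x : ℂ} {v : V} (h : ρ.H 0 v = x • v) : ρ.H 0 (ρ.Gm m v) = (x - 1) • ρ.Gm m v := by
  have := ρ.rel_HGm 0 m v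
  rw [h, map_smul, sub_eq_iff_eq_add, zero_add] at this
  rw [this]; module

lemma L_E {m i k : ℤ} {v : V} (h : v ∈ E ρ a c i k) : ρ.L m v ∈ E ρ a c (i + m) k := by
  rw [mem_E] at *
  refine ⟨?_, L_H0 h.2.1, L_par ρ _ _ h.2.2⟩
  rw [L_L0 h.1]; push_cast; module

lemma H_E {m i k : ℤ} {v : V} (h : v ∈ E ρ a c i k) : ρ.H m v ∈ E ρ a c (i + m) k := by
  rw [mem_E] at *
  refine ⟨?_, H_H0 h.2.1, H_par ρ _ _ h.2.2⟩
  rw [H_L0 h.1]; push_cast; module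

lemma Gp_E {m i k : ℤ} {v : V} (h : v ∈ E ρ a c i k) : ρ.Gp m v ∈ E ρ a c (i + m) (k + 1) := by
  rw [mem_E] at *
  refine ⟨?_, ?_, Gp_par ρ _ _ h.2.2⟩
  · rw [Gp_L0 h.1]; push_cast; module
  · rw [Gp_H0 h.2.1]; push_cast; module

lemma Gm_E {m i k : ℤ} {v : V} (h : v ∈ E ρ a c i k) : ρ.Gm m v ∈ E ρ a c (i + m) (k - 1) := by
  rw [mem_E] at *
  refine ⟨?_, ?_, Gm_par ρ _ _ h.2.2⟩
  · rw [Gm_L0 h.1]; push_cast; module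
  · rw [Gm_H0 h.2.1]; push_cast; module

lemma E_le_D (i k : ℤ) : ∃ τ, E ρ a c i k ≤ ρ.wt (a + i) ⊓ ρ.parity τ := by
  obtain ⟨τ, h⟩ := par_parity ρ k
  exact ⟨τ, by rw [← h]; exact inf_le_inf_right _ inf_le_left⟩

lemma rank_E (h : Hyp ρ) (i k : ℤ) : Module.rank ℂ (E ρ a c i k) ≤ 2 := by
  obtain ⟨τ, hτ⟩ := E_le_D (ρ := ρ) (a := a) (c := c) i k
  exact (Submodule.rank_mono hτ).trans (h.bd _ _)

lemma indep_E (ρ : RamondRep V) (a c : ℂ) : iSupIndep (fun x : ℤ × ℤ => E ρ a c x.1 x.2) := by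
  have h1 := Module.End.eigenspaces_iSupIndep (ρ.L 0 + Complex.I • ρ.H 0)
  have hinj : Function.Injective (fun x : ℤ × ℤ => (a + x.1) + Complex.I * (c + x.2)) := by
    rintro ⟨i, k⟩ ⟨j, l⟩ h
    have h' : ((i : ℂ) - j) + Complex.I * ((k : ℂ) - l) = 0 := by
      simp only at h; linear_combination h
    have hr := congrArg Complex.re h'
    have hi := congrArg Complex.im h'
    simp at hr hi
    have hr' : (i : ℝ) = j := by linarith
    have hi' : (k : ℝ) = l := by linarith
    simp only [Prod.mk.injEq]
    exact ⟨by exact_mod_cast hr', by exact_mod_cast hi'⟩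
  refine (h1.comp hinj).mono ?_
  intro x v hv
  have hv' := mem_E.1 hv
  simp only [Function.comp, Module.End.mem_eigenspace_iff, LinearMap.add_apply, LinearMap.smul_apply, hv'.1, hv'.2.1]
  module

lemma fam_eq {ι : Type*} {E F : ι → Submodule ℂ V} (hE : iSupIndep E) (hF : ∀ x, F x ≤ E x)
    (hT : ⨆ x, F x = ⊤) (x : ι) : F x = E x := by
  refine le_antisymm (hF x) ?_
  intro v hv
  have h1 : F x ⊔ ⨆ (y) (_ : y ≠ x), F y = ⊤ := by
    rw [eq_top_iff, ← hT]
    refine iSup_le fun y => ?_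
    by_cases h : y = x
    · subst h; exact le_sup_left
    · have h3 : F y ≤ ⨆ (y) (_ : y ≠ x), F y := le_iSup₂ (f := fun y (_ : y ≠ x) => F y) y h
      exact h3.trans le_sup_right
  have h2 : v ∈ F x ⊔ ⨆ (y) (_ : y ≠ x), F y := by rw [h1]; trivial
  obtain ⟨p, hp, q, hq, hpq⟩ := Submodule.mem_sup.1 h2
  have hq1 : q ∈ E x := by
    have : q = v - p := by rw [← hpq]; abel
    rw [this]; exact sub_mem hv (hF x hp)
  have hq2 : q ∈ ⨆ (y) (_ : y ≠ x), E y := (iSup₂_mono fun y _ => hF y) hq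
  have : q = 0 := by
    have := (hE x).le_bot ⟨hq1, hq2⟩
    simpa using this
  rw [← hpq, this, add_zero]; exact hp

lemma graded_span {W : Submodule ℂ V} {s : Set V} (hW : W = Submodule.span ℂ s)
    (hs : ∀ v ∈ s, v ∈ ρ.even ∨ v ∈ ρ.odd) : W = (W ⊓ ρ.even) ⊔ (W ⊓ ρ.odd) := by
  refine le_antisymm ?_ (sup_le inf_le_left inf_le_left)
  conv_lhs => rw [hW]
  rw [Submodule.span_le]
  intro v hv
  have hvW : v ∈ W := by rw [hW]; exact Submodule.subset_span hv
  rcases hs v hv with h | h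
  · exact Submodule.mem_sup_left ⟨hvW, h⟩
  · exact Submodule.mem_sup_right ⟨hvW, h⟩

lemma par_or {k : ℤ} {v : V} (h : v ∈ par ρ k) : v ∈ ρ.even ∨ v ∈ ρ.odd := by
  unfold par at h
  split_ifs at h
  · exact Or.inl h
  · exact Or.inr h

/-- span of a set of homogeneous vectors stable under generators. -/
lemma span_simple (h : ρ.IsSimple) (s : Set V) (hs : ∀ v ∈ s, v ∈ ρ.even ∨ v ∈ ρ.odd)
    (hL : ∀ m : ℤ, ∀ v ∈ s, ρ.L m v ∈ Submodule.span ℂ s)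
    (hH : ∀ m : ℤ, ∀ v ∈ s, ρ.H m v ∈ Submodule.span ℂ s)
    (hGp : ∀ m : ℤ, ∀ v ∈ s, ρ.Gp m v ∈ Submodule.span ℂ s)
    (hGm : ∀ m : ℤ, ∀ v ∈ s, ρ.Gm m v ∈ Submodule.span ℂ s) :
    (∀ v ∈ s, v = 0) ∨ Submodule.span ℂ s = ⊤ := by
  have key : ∀ f : V →ₗ[ℂ] V, (∀ v ∈ s, f v ∈ Submodule.span ℂ s) →
      ∀ v ∈ Submodule.span ℂ s, f v ∈ Submodule.span ℂ s := by
    intro f hf v hv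
    have : Submodule.span ℂ s ≤ (Submodule.span ℂ s).comap f := Submodule.span_le.2 hf
    exact this hv
  have := h.2 (Submodule.span ℂ s) ⟨⟨fun m => key _ (hL m), fun m => key _ (hH m), fun m => key _ (hGp m),
    fun m => key _ (hGm m)⟩, graded_span rfl hs⟩
  rcases this with h1 | h1
  · left
    exact Submodule.span_eq_bot.1 h1
  · exact Or.inr h1

/-- Two-family contradiction. -/
lemma two_fam_false (h : Hyp ρ) (a : ℂ) (x y : ℤ → V) (hx : ∀ i, x i ∈ ρ.even ∧ ρ.L 0 (x i) = (a + i) • x i)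
    (hy : ∀ i, y i ∈ ρ.odd ∧ ρ.L 0 (y i) = (a + i) • y i)
    (hsp : Submodule.span ℂ (Set.range x ∪ Set.range y) = ⊤) : False := by
  obtain ⟨μ, τ, hr⟩ := h.eq
  have hpar : ∀ v ∈ ρ.even, v ∈ ρ.odd → v = 0 := by
    intro v h1 h2
    have := ρ.grading.disjoint.le_bot ⟨h1, h2⟩
    simpa using this
  -- general statement
  have gen : ∀ (P Q : Submodule ℂ V) (x y : ℤ → V), (∀ v ∈ P, v ∈ Q → v = 0) →
      (∀ i, x i ∈ P ∧ ρ.L 0 (x i) = (a + i) • x i) → (∀ i, y i ∈ Q ∧ ρ.L 0 (y i) = (a + i) • y i) →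
      Submodule.span ℂ (Set.range x ∪ Set.range y) = ⊤ → ∃ w : V, ρ.wt μ ⊓ P ≤ Submodule.span ℂ {w} := by
    intro P Q x y hPQ hx hy hsp
    have hind := Module.End.eigenspaces_iSupIndep (ρ.L 0)
    obtain ⟨w, w', hw', hww⟩ : ∃ w w' : V, w' ∈ ρ.wt μ ⊓ Q ∧ ∀ i : ℤ, a + i = μ → x i = w ∧ y i = w' := by
      by_cases hex : ∃ i : ℤ, a + i = μ
      · obtain ⟨i, rfl⟩ := hex
        refine ⟨x i, y i, ⟨?_, (hy i).1⟩, fun j hj => ?_⟩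
        · exact Module.End.mem_eigenspace_iff.2 (hy i).2
        · have : j = i := by
            have h3 := add_left_cancel hj
            exact_mod_cast h3
          subst this; exact ⟨rfl, rfl⟩
      · exact ⟨0, 0, zero_mem _, fun i hi => absurd ⟨i, hi⟩ hex⟩
    have key : (⊤ : Submodule ℂ V) ≤ (Submodule.span ℂ {w} ⊔ Submodule.span ℂ {w'}) ⊔ ⨆ (ν) (_ : ν ≠ μ), Module.End.eigenspace (ρ.L 0) ν := by
      rw [← hsp, Submodule.span_le]
      rintro v (⟨i, rfl⟩ | ⟨i, rfl⟩)
      · by_cases hi : a + i = μ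
        · rw [(hww i hi).1]
          exact Submodule.mem_sup_left (Submodule.mem_sup_left (Submodule.mem_span_singleton_self _))
        · exact Submodule.mem_sup_right (Submodule.mem_iSup_of_mem _ (Submodule.mem_iSup_of_mem hi (Module.End.mem_eigenspace_iff.2 (hx i).2)))
      · by_cases hi : a + i = μ
        · rw [(hww i hi).2]
          exact Submodule.mem_sup_left (Submodule.mem_sup_right (Submodule.mem_span_singleton_self _))
        · exact Submodule.mem_sup_right (Submodule.mem_iSup_of_mem _ (Submodule.mem_iSup_of_mem hi (Module.End.mem_eigenspace_iff.2 (hy i).2)))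
    have hwm : w ∈ ρ.wt μ ⊓ P ∨ ¬ ∃ i : ℤ, a + i = μ := by
      by_cases hex : ∃ i : ℤ, a + i = μ
      · left
        obtain ⟨i, hi⟩ := hex
        rw [← (hww i hi).1, ← hi]
        exact ⟨Module.End.mem_eigenspace_iff.2 (hx i).2, (hx i).1⟩
      · exact Or.inr hex
    by_cases hex : ∃ i : ℤ, a + i = μ
    · have hwm : w ∈ ρ.wt μ ⊓ P := hwm.resolve_right (not_not.2 hex)
      refine ⟨w, fun v hv => ?_⟩
      obtain ⟨p, hp, q, hq, hpq⟩ := Submodule.mem_sup.1 (key (Submodule.mem_top (x := v)))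
      obtain ⟨p1, hp1, p2, hp2, hp12⟩ := Submodule.mem_sup.1 hp
      have hp1' : p1 ∈ ρ.wt μ ⊓ P := (Submodule.span_singleton_le_iff_mem _ _).2 hwm hp1
      have hp2' : p2 ∈ ρ.wt μ ⊓ Q := (Submodule.span_singleton_le_iff_mem _ _).2 hw' hp2
      have hq1 : q ∈ ρ.wt μ := by
        have : q = v - p1 - p2 := by rw [← hpq, ← hp12]; abel
        rw [this]; exact sub_mem (sub_mem hv.1 hp1'.1) hp2'.1
      have hq0 : q = 0 := by
        have := (hind μ).le_bot ⟨hq1, hq⟩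
        simpa using this
      have hp20 : p2 = 0 := by
        apply hPQ _ _ hp2'.2
        have : p2 = v - p1 := by rw [← hpq, ← hp12, hq0]; abel
        rw [this]; exact sub_mem hv.2 hp1'.2
      rw [← hpq, ← hp12, hq0, hp20, add_zero, add_zero]
      exact hp1
    · refine ⟨0, fun v hv => ?_⟩
      have : (⊤ : Submodule ℂ V) ≤ ⨆ (ν) (_ : ν ≠ μ), Module.End.eigenspace (ρ.L 0) ν := by
        rw [← hsp, Submodule.span_le]
        push Not at hex
        rintro v (⟨i, rfl⟩ | ⟨i, rfl⟩)
        · exact (Submodule.mem_iSup_of_mem _ (Submodule.mem_iSup_of_mem (hex i) (Module.End.mem_eigenspace_iff.2 (hx i).2)))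
        · exact (Submodule.mem_iSup_of_mem _ (Submodule.mem_iSup_of_mem (hex i) (Module.End.mem_eigenspace_iff.2 (hy i).2)))
      have h0 := (hind μ).le_bot ⟨hv.1, this (Submodule.mem_top (x := v))⟩
      have : v = 0 := by simpa using h0
      rw [this]; exact zero_mem _
  have fin : ∀ P : Submodule ℂ V, Module.rank ℂ ↥(ρ.wt μ ⊓ P) = 2 → ¬ ∃ w : V, ρ.wt μ ⊓ P ≤ Submodule.span ℂ {w} := by
    rintro P hP ⟨w, hw⟩
    have h1 := (Submodule.rank_mono hw).trans (rank_span_le (R := ℂ) {w})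
    rw [hP, Cardinal.mk_singleton] at h1
    norm_num at h1
  by_cases hτ : τ = 0
  · have hp : ρ.parity τ = ρ.even := by simp [RamondRep.parity, hτ]
    rw [hp] at hr
    exact fin _ hr (gen ρ.even ρ.odd x y hpar hx hy hsp)
  · have hp : ρ.parity τ = ρ.odd := by simp [RamondRep.parity, hτ]
    rw [hp] at hr
    exact fin _ hr (gen ρ.odd ρ.even y x (fun v h1 h2 => hpar v h2 h1) hy hx (by rw [Set.union_comm]; exact hsp))

end Ramond15

namespace Ramond15

variable {V : Type} [AddCommGroup V] [Module ℂ V]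

structure Core (ρ : RamondRep V) (a b c : ℂ) (u : ℤ → V) : Prop where
  c0 : ρ.c₀ = 0
  ev : ∀ i, u i ∈ ρ.even
  ne : ∀ i, u i ≠ 0
  L : ∀ m i : ℤ, ρ.L m (u i) = (a + i + b * m) • u (m + i)
  H : ∀ m i : ℤ, ρ.H m (u i) = c • u (m + i)
  Gp : ∀ r i : ℤ, ρ.Gp r (u i) = ρ.Gp 0 (u (r + i))
  Gm : ∀ r i : ℤ, ρ.Gm r (u i) = ρ.Gm 0 (u (r + i))

lemma Core.flip {ρ : RamondRep V} {a b c : ℂ} {u : ℤ → V} (h : Core ρ a b c u) : Core (flip ρ) a b (-c) u where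
  c0 := h.c0
  ev := h.ev
  ne := h.ne
  L := h.L
  H := fun m i => by
    change -(ρ.H m (u i)) = _
    rw [h.H]; module
  Gp := h.Gm
  Gm := h.Gp

variable {ρ : RamondRep V} {a b c : ℂ} {u : ℤ → V}

lemma GpGp0 (p : ℤ) (v : V) : ρ.Gp p (ρ.Gp p v) = 0 := by
  have := ρ.rel_GpGp p p v
  rw [← two_smul ℂ] at this
  exact (smul_eq_zero.1 this).resolve_left two_ne_zero

namespace Core

variable (h : Core ρ a b c u)
include h

lemma L_up (m k : ℤ) : ρ.L m (ρ.Gp 0 (u k)) = (a + k + (b - 1 / 2) * m) • ρ.Gp 0 (u (m + k)) := by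
  have := ρ.rel_LGp m 0 (u k)
  rw [sub_eq_iff_eq_add, zero_add, h.Gp m k, h.L, map_smul] at this
  rw [this]; push_cast; module

lemma L_um (m k : ℤ) : ρ.L m (ρ.Gm 0 (u k)) = (a + k + (b - 1 / 2) * m) • ρ.Gm 0 (u (m + k)) :=
  h.flip.L_up m k

lemma H_up (m k : ℤ) : ρ.H m (ρ.Gp 0 (u k)) = (c + 1) • ρ.Gp 0 (u (m + k)) := by
  have := ρ.rel_HGp m 0 (u k)
  rw [sub_eq_iff_eq_add, add_zero, h.Gp m k, h.H, map_smul] at this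
  rw [this]; module

lemma H_um (m k : ℤ) : ρ.H m (ρ.Gm 0 (u k)) = (c - 1) • ρ.Gm 0 (u (m + k)) := by
  have := ρ.rel_HGm m 0 (u k)
  rw [sub_eq_iff_eq_add, add_zero, h.Gm m k, h.H, map_smul] at this
  rw [this]; module

lemma Gp_up (r k : ℤ) : ρ.Gp r (ρ.Gp 0 (u k)) = 0 := by
  have := ρ.rel_GpGp r 0 (u k)
  rw [h.Gp r k, GpGp0, add_zero] at this
  exact this

lemma Gm_um (r k : ℤ) : ρ.Gm r (ρ.Gm 0 (u k)) = 0 := h.flip.Gp_up r k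

lemma ST (p q N : ℤ) : ρ.Gp p (ρ.Gm 0 (u (N - p))) + ρ.Gm q (ρ.Gp 0 (u (N - q))) =
    (-2 * a - 2 * N + (2 - 2 * b + c) * p + (2 - 2 * b - c) * q) • u N := by
  have := ρ.rel_GpGm p q (u (N - p - q))
  rw [h.Gm, h.Gp, h.L, h.H, h.c0, show q + (N - p - q) = N - p by ring,
    show p + (N - p - q) = N - q by ring, show p + q + (N - p - q) = N by ring] at this
  rw [this]; push_cast; module

lemma Gp_um (r k : ℤ) : ρ.Gp r (ρ.Gm 0 (u k)) = ρ.Gp 0 (ρ.Gm 0 (u (k + r))) +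
    ((c + 2 - 2 * b) * (r : ℂ)) • u (k + r) := by
  have h1 := h.ST r 0 (k + r)
  have h2 := h.ST 0 0 (k + r)
  rw [add_sub_cancel_right] at h1
  rw [sub_zero] at h1 h2
  rw [← eq_sub_iff_add_eq] at h1 h2
  rw [h1, h2]; push_cast; module

lemma Gm_up (r k : ℤ) : ρ.Gm r (ρ.Gp 0 (u k)) = -ρ.Gp 0 (ρ.Gm 0 (u (r + k))) -
    ((2 * a + 2 * (k : ℂ) + (2 * b + c) * (r : ℂ))) • u (k + r) := by
  have h1 := h.ST 0 r (r + k)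
  rw [add_sub_cancel_left, sub_zero] at h1
  rw [← eq_sub_iff_add_eq'] at h1
  rw [h1, add_comm k r]; push_cast; module

lemma L_upm (m i : ℤ) : ρ.L m (ρ.Gp 0 (ρ.Gm 0 (u i))) = (a + (i : ℂ) + (b - 1) * (m : ℂ)) • ρ.Gp 0 (ρ.Gm 0 (u (m + i))) +
    ((1 / 2 : ℂ) * (2 * b - c - 2) * (m : ℂ) ^ 2) • u (i + m) := by
  have := ρ.rel_LGp m 0 (ρ.Gm 0 (u i))
  rw [sub_eq_iff_eq_add, zero_add, h.Gp_um m i, h.L_um, map_smul] at this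
  rw [this, add_comm i m]; push_cast; module

lemma H_upm (m i : ℤ) : ρ.H m (ρ.Gp 0 (ρ.Gm 0 (u i))) = c • ρ.Gp 0 (ρ.Gm 0 (u (m + i))) -
    ((m : ℂ) * (2 * b - c - 2)) • u (m + i) := by
  have := ρ.rel_HGp m 0 (ρ.Gm 0 (u i))
  rw [sub_eq_iff_eq_add, add_zero, h.Gp_um m i, h.H_um, map_smul] at this
  rw [this, add_comm i m]; module

lemma Gm_upm (r i : ℤ) : ρ.Gm r (ρ.Gp 0 (ρ.Gm 0 (u i))) =
    (-(2 * a + 2 * (i : ℂ) + (2 * b + c - 2) * (r : ℂ))) • ρ.Gm 0 (u (r + i)) := by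
  have := ρ.rel_GpGm 0 r (ρ.Gm 0 (u i))
  rw [h.Gm_um, map_zero, zero_add, zero_add, h.L_um, h.H_um, h.c0] at this
  rw [this]; push_cast; module

lemma Gp_upm (r i : ℤ) : ρ.Gp r (ρ.Gp 0 (ρ.Gm 0 (u i))) = ((2 * b - c - 2) * (r : ℂ)) • ρ.Gp 0 (u (r + i)) := by
  have := ρ.rel_GpGp r 0 (ρ.Gm 0 (u i))
  rw [h.Gp_um r i, map_add, GpGp0, zero_add, map_smul, ← eq_neg_iff_add_eq_zero] at this
  rw [this, add_comm i r]; module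

lemma span_top (hs : Hyp ρ) : Submodule.span ℂ
    (Set.range u ∪ Set.range (fun i => ρ.Gp 0 (ρ.Gm 0 (u i))) ∪ Set.range (fun i => ρ.Gp 0 (u i))
      ∪ Set.range (fun i => ρ.Gm 0 (u i))) = ⊤ := by
  set s := Set.range u ∪ Set.range (fun i => ρ.Gp 0 (ρ.Gm 0 (u i))) ∪ Set.range (fun i => ρ.Gp 0 (u i))
      ∪ Set.range (fun i => ρ.Gm 0 (u i)) with hsdef
  have m1 : ∀ (x : ℂ) i, x • u i ∈ Submodule.span ℂ s := fun x i =>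
    Submodule.smul_mem _ _ (Submodule.subset_span (Or.inl (Or.inl (Or.inl ⟨i, rfl⟩))))
  have m2 : ∀ (x : ℂ) i, x • ρ.Gp 0 (ρ.Gm 0 (u i)) ∈ Submodule.span ℂ s := fun x i =>
    Submodule.smul_mem _ _ (Submodule.subset_span (Or.inl (Or.inl (Or.inr ⟨i, rfl⟩))))
  have m3 : ∀ (x : ℂ) i, x • ρ.Gp 0 (u i) ∈ Submodule.span ℂ s := fun x i =>
    Submodule.smul_mem _ _ (Submodule.subset_span (Or.inl (Or.inr ⟨i, rfl⟩)))
  have m4 : ∀ (x : ℂ) i, x • ρ.Gm 0 (u i) ∈ Submodule.span ℂ s := fun x i =>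
    Submodule.smul_mem _ _ (Submodule.subset_span (Or.inr ⟨i, rfl⟩))
  have m2' : ∀ i, ρ.Gp 0 (ρ.Gm 0 (u i)) ∈ Submodule.span ℂ s := fun i => by simpa using m2 1 i
  have m3' : ∀ i, ρ.Gp 0 (u i) ∈ Submodule.span ℂ s := fun i => by simpa using m3 1 i
  have m4' : ∀ i, ρ.Gm 0 (u i) ∈ Submodule.span ℂ s := fun i => by simpa using m4 1 i
  refine (span_simple hs.simple s ?_ ?_ ?_ ?_ ?_).elim
    (fun h0 => absurd (h0 (u 0) (Or.inl (Or.inl (Or.inl ⟨0, rfl⟩)))) (h.ne 0)) id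
  · rintro v (((⟨i, rfl⟩ | ⟨i, rfl⟩) | ⟨i, rfl⟩) | ⟨i, rfl⟩)
    · exact Or.inl (h.ev i)
    · exact Or.inl (ρ.Gp_odd _ _ (ρ.Gm_even _ _ (h.ev i)))
    · exact Or.inr (ρ.Gp_even _ _ (h.ev i))
    · exact Or.inr (ρ.Gm_even _ _ (h.ev i))
  · rintro m v (((⟨i, rfl⟩ | ⟨i, rfl⟩) | ⟨i, rfl⟩) | ⟨i, rfl⟩)
    · rw [h.L]; exact m1 _ _
    · simp only; rw [h.L_upm]; exact add_mem (m2 _ _) (m1 _ _)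
    · simp only; rw [h.L_up]; exact m3 _ _
    · simp only; rw [h.L_um]; exact m4 _ _
  · rintro m v (((⟨i, rfl⟩ | ⟨i, rfl⟩) | ⟨i, rfl⟩) | ⟨i, rfl⟩)
    · rw [h.H]; exact m1 _ _
    · simp only; rw [h.H_upm]; exact sub_mem (m2 _ _) (m1 _ _)
    · simp only; rw [h.H_up]; exact m3 _ _
    · simp only; rw [h.H_um]; exact m4 _ _
  · rintro m v (((⟨i, rfl⟩ | ⟨i, rfl⟩) | ⟨i, rfl⟩) | ⟨i, rfl⟩)
    · rw [h.Gp]; exact m3' _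
    · simp only; rw [h.Gp_upm]; exact m3 _ _
    · simp only; rw [h.Gp_up]; exact zero_mem _
    · simp only; rw [h.Gp_um]; exact add_mem (m2' _) (m1 _ _)
  · rintro m v (((⟨i, rfl⟩ | ⟨i, rfl⟩) | ⟨i, rfl⟩) | ⟨i, rfl⟩)
    · rw [h.Gm]; exact m4' _
    · simp only; rw [h.Gm_upm]; exact m4 _ _
    · simp only; rw [h.Gm_up]; exact sub_mem (neg_mem (m2' _)) (m1 _ _)
    · simp only; rw [h.Gm_um]; exact zero_mem _

lemma wu (i : ℤ) : u i ∈ ρ.even ∧ ρ.L 0 (u i) = (a + i) • u i :=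
  ⟨h.ev i, by rw [h.L]; simp⟩

lemma wup (i : ℤ) : ρ.Gp 0 (u i) ∈ ρ.odd ∧ ρ.L 0 (ρ.Gp 0 (u i)) = (a + i) • ρ.Gp 0 (u i) :=
  ⟨ρ.Gp_even _ _ (h.ev i), by rw [h.L_up]; simp⟩

lemma wum (i : ℤ) : ρ.Gm 0 (u i) ∈ ρ.odd ∧ ρ.L 0 (ρ.Gm 0 (u i)) = (a + i) • ρ.Gm 0 (u i) :=
  ⟨ρ.Gm_even _ _ (h.ev i), by rw [h.L_um]; simp⟩

lemma wupm (i : ℤ) : ρ.Gp 0 (ρ.Gm 0 (u i)) ∈ ρ.even ∧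
    ρ.L 0 (ρ.Gp 0 (ρ.Gm 0 (u i))) = (a + i) • ρ.Gp 0 (ρ.Gm 0 (u i)) :=
  ⟨ρ.Gp_odd _ _ (h.wum i).1, by rw [h.L_upm]; simp⟩

/-- If all `up` vanish, contradiction. -/
lemma up_false (hs : Hyp ρ) (h0 : ∀ i, ρ.Gp 0 (u i) = 0) : False := by
  refine two_fam_false hs a u (fun i => ρ.Gm 0 (u i)) h.wu h.wum ?_
  rw [eq_top_iff, ← h.span_top hs, Submodule.span_le]
  rintro v (((⟨i, rfl⟩ | ⟨i, rfl⟩) | ⟨i, rfl⟩) | ⟨i, rfl⟩)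
  · exact Submodule.subset_span (Or.inl ⟨i, rfl⟩)
  · have := h.Gm_up 0 i
    rw [h0, map_zero, zero_add] at this
    have e : ρ.Gp 0 (ρ.Gm 0 (u i)) = -(2 * a + 2 * (i : ℂ) + (2 * b + c) * ((0 : ℤ) : ℂ)) • u (i + 0) := by
      rw [← sub_eq_zero, ← neg_eq_zero, this]; module
    simp only [SetLike.mem_coe]
    rw [e]
    exact Submodule.smul_mem _ _ (Submodule.subset_span (Or.inl ⟨_, rfl⟩))
  · simp only [SetLike.mem_coe]; rw [h0]; exact zero_mem _
  · exact Submodule.subset_span (Or.inr ⟨i, rfl⟩)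

lemma um_false (hs : Hyp ρ) (h0 : ∀ i, ρ.Gm 0 (u i) = 0) : False := h.flip.up_false hs.flip h0

lemma cond (hs : Hyp ρ) : 2 * b - c ≠ 2 := by
  intro hbc
  have e0 : 2 * b - c - 2 = 0 := by rw [hbc]; ring
  have e1 : c + 2 - 2 * b = 0 := by linear_combination -e0
  set s := Set.range (fun i => ρ.Gp 0 (ρ.Gm 0 (u i))) ∪ Set.range (fun i => ρ.Gm 0 (u i)) with hsdef
  have m2 : ∀ (x : ℂ) i, x • ρ.Gp 0 (ρ.Gm 0 (u i)) ∈ Submodule.span ℂ s := fun x i =>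
    Submodule.smul_mem _ _ (Submodule.subset_span (Or.inl ⟨i, rfl⟩))
  have m4 : ∀ (x : ℂ) i, x • ρ.Gm 0 (u i) ∈ Submodule.span ℂ s := fun x i =>
    Submodule.smul_mem _ _ (Submodule.subset_span (Or.inr ⟨i, rfl⟩))
  have m2' : ∀ i, ρ.Gp 0 (ρ.Gm 0 (u i)) ∈ Submodule.span ℂ s := fun i => by simpa using m2 1 i
  refine (span_simple hs.simple s ?_ ?_ ?_ ?_ ?_).elim
    (fun h0 => h.um_false hs fun i => h0 _ (Or.inr ⟨i, rfl⟩))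
    (fun h0 => two_fam_false hs a _ _ h.wupm h.wum h0)
  · rintro v (⟨i, rfl⟩ | ⟨i, rfl⟩)
    · exact Or.inl (h.wupm i).1
    · exact Or.inr (h.wum i).1
  · rintro m v (⟨i, rfl⟩ | ⟨i, rfl⟩)
    · simp only; rw [h.L_upm, e0, mul_zero, zero_mul, zero_smul, add_zero]; exact m2 _ _
    · simp only; rw [h.L_um]; exact m4 _ _
  · rintro m v (⟨i, rfl⟩ | ⟨i, rfl⟩)
    · simp only; rw [h.H_upm, e0, mul_zero, zero_smul, sub_zero]; exact m2 _ _
    · simp only; rw [h.H_um]; exact m4 _ _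
  · rintro m v (⟨i, rfl⟩ | ⟨i, rfl⟩)
    · simp only; rw [h.Gp_upm, e0, zero_mul, zero_smul]; exact zero_mem _
    · simp only; rw [h.Gp_um, e1, zero_mul, zero_smul, add_zero]; exact m2' _
  · rintro m v (⟨i, rfl⟩ | ⟨i, rfl⟩)
    · simp only; rw [h.Gm_upm]; exact m4 _ _
    · simp only; rw [h.Gm_um]; exact zero_mem _

lemma cond2 (hs : Hyp ρ) : 2 * b + c ≠ 2 := by
  have := h.flip.cond hs.flip
  rwa [sub_neg_eq_add] at this

lemma up_ne (hs : Hyp ρ) (N : ℤ) : ρ.Gp 0 (u N) ≠ 0 := by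
  intro hN
  have hc1 := h.cond hs
  have hc2 := h.cond2 hs
  have key : ∀ N, ρ.Gp 0 (u N) = 0 → ∀ M s : ℤ, ((2 * b - c - 2) * s + 2 * a + 2 * N + (2 * b + c) * (M - s - N)) • ρ.Gp 0 (u M) = 0 := by
    intro N hN M s
    have h1 := h.Gm_up (M - s - N) N
    rw [hN, map_zero, show M - s - N + N = M - s by ring, show N + (M - s - N) = M - s by ring] at h1
    have h2 := congrArg (ρ.Gp s) h1
    rw [map_zero, map_sub, map_neg, map_smul, h.Gp_upm, h.Gp s, show s + (M - s) = M by ring] at h2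
    rw [← neg_eq_zero, h2]
    push_cast; module
  apply h.up_false hs
  intro M
  by_contra hM
  have key2 : ∀ N, ρ.Gp 0 (u N) = 0 → ∀ M, ρ.Gp 0 (u M) ≠ 0 → ∀ s : ℤ, (2 * b - c - 2) * s + 2 * a + 2 * N + (2 * b + c) * (M - s - N) = 0 :=
    fun N hN M hM s => (smul_eq_zero.1 (key N hN M s)).resolve_right hM
  have hc : c = -1 := by
    have h1 := key2 N hN M hM 0
    have h2 := key2 N hN M hM 1
    push_cast at h1 h2
    linear_combination (h1 - h2) / 2
  subst hc
  have hb1 : 2 * b - 1 ≠ 0 := fun h0 => hc1 (by linear_combination h0)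
  obtain ⟨N', hN'1, hN'2⟩ : ∃ N' : ℤ, N' ≠ M ∧ N' ≠ N := by
    refine ⟨max M N + 1, ?_, ?_⟩
    · have := le_max_left M N; omega
    · have := le_max_right M N; omega
  have e1 := key2 N hN M hM 0
  have hN'0 : ρ.Gp 0 (u N') = 0 := by
    by_contra h3
    have e2 := key2 N hN N' h3 0
    have : (2 * b - 1) * ((N' : ℂ) - M) = 0 := by linear_combination e2 - e1
    rcases mul_eq_zero.1 this with h4 | h4
    · exact hb1 h4
    · apply hN'1; exact_mod_cast sub_eq_zero.1 h4
  have e3 := key2 N' hN'0 M hM 0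
  have : (2 * b + (-1) - 2) * ((N' : ℂ) - N) = 0 := by linear_combination e1 - e3
  rcases mul_eq_zero.1 this with h4 | h4
  · exact hc2 (by linear_combination h4)
  · apply hN'2; exact_mod_cast sub_eq_zero.1 h4

lemma um_ne (hs : Hyp ρ) (N : ℤ) : ρ.Gm 0 (u N) ≠ 0 := h.flip.up_ne hs.flip N

lemma upm_ne (hs : Hyp ρ) (N : ℤ) (α : ℂ) : ρ.Gp 0 (ρ.Gm 0 (u N)) ≠ α • u N := by
  intro h0
  have key : ∀ r : ℤ, (2 * b - c - 2) * r = α := by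
    intro r
    have h1 := congrArg (ρ.Gp r) h0
    rw [h.Gp_upm, map_smul, h.Gp r N] at h1
    exact smul_left_injective ℂ (h.up_ne hs (r + N)) h1
  have k0 := key 0
  have k1 := key 1
  push_cast at k0 k1
  exact h.cond hs (by linear_combination k1 - k0)

lemma isRabc (hs : Hyp ρ) : ρ.IsRabc u (fun i => ρ.Gp 0 (ρ.Gm 0 (u i))) (fun i => ρ.Gp 0 (u i))
    (fun i => ρ.Gm 0 (u i)) a b c := by
  have hpar : ∀ v ∈ ρ.even, v ∈ ρ.odd → v = 0 := by
    intro v h1 h2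
    have := ρ.grading.disjoint.le_bot ⟨h1, h2⟩
    simpa using this
  have hsp := h.span_top hs
  have hle1 : Submodule.span ℂ (Set.range u ∪ Set.range (fun i => ρ.Gp 0 (ρ.Gm 0 (u i)))) ≤ ρ.even := by
    rw [Submodule.span_le]
    rintro v (⟨i, rfl⟩ | ⟨i, rfl⟩)
    · exact (h.wu i).1
    · exact (h.wupm i).1
  have hle2 : Submodule.span ℂ (Set.range (fun i => ρ.Gp 0 (u i)) ∪ Set.range (fun i => ρ.Gm 0 (u i))) ≤ ρ.odd := by
    rw [Submodule.span_le]
    rintro v (⟨i, rfl⟩ | ⟨i, rfl⟩)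
    · exact (h.wup i).1
    · exact (h.wum i).1
  have hsp2 : Submodule.span ℂ (Set.range u ∪ Set.range (fun i => ρ.Gp 0 (ρ.Gm 0 (u i)))) ⊔
    Submodule.span ℂ (Set.range (fun i => ρ.Gp 0 (u i)) ∪ Set.range (fun i => ρ.Gm 0 (u i))) = ⊤ := by
    rw [← Submodule.span_union, ← Set.union_assoc, hsp]
  refine ⟨h.c0, ?_, hsp, ?_, ?_, h.L, h.L_up, h.L_um, h.L_upm, h.H, h.H_up, h.H_um, h.H_upm, h.Gp, h.Gm,
    h.Gp_up, h.Gm_um, h.Gp_um, h.Gm_up, h.Gm_upm, h.Gp_upm⟩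
  · set f : ℤ → (Bool × Bool) → V := fun i x => if x.1 then (if x.2 then ρ.Gm 0 (u i) else ρ.Gp 0 (u i))
      else (if x.2 then ρ.Gp 0 (ρ.Gm 0 (u i)) else u i) with hf
    have hwt : ∀ (i : ℤ) x, f i x ∈ Module.End.eigenspace (ρ.L 0) (a + i) := by
      intro i x
      rw [Module.End.mem_eigenspace_iff]
      rcases x with ⟨_ | _, _ | _⟩
      · exact (h.wu i).2
      · exact (h.wupm i).2
      · exact (h.wup i).2
      · exact (h.wum i).2
    have hli := linearIndependent_iUnion_finite (R := ℂ) (f := f) ?_ ?_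
    · have hinj : Function.Injective (fun x : (Bool × Bool) × ℤ => (⟨x.2, x.1⟩ : Σ _ : ℤ, Bool × Bool)) := by
        rintro ⟨x, i⟩ ⟨y, j⟩ hxy
        simp only [Sigma.mk.injEq, heq_eq_eq] at hxy
        simp [hxy]
      exact hli.comp _ hinj
    · intro i
      rw [Fintype.linearIndependent_iff]
      intro g hg
      rw [Fintype.sum_prod_type] at hg
      simp only [Fintype.univ_bool, Finset.mem_singleton, Bool.true_eq_false, not_false_eq_true,
        Finset.sum_insert, Finset.sum_singleton, hf, if_true, Bool.false_eq_true, if_false] at hg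
      have hev : g (false, true) • ρ.Gp 0 (ρ.Gm 0 (u i)) + g (false, false) • u i = 0 := by
        apply hpar
        · exact add_mem (Submodule.smul_mem _ _ (h.wupm i).1) (Submodule.smul_mem _ _ (h.wu i).1)
        · rw [eq_neg_of_add_eq_zero_right hg]
          exact neg_mem (add_mem (Submodule.smul_mem _ _ (h.wum i).1) (Submodule.smul_mem _ _ (h.wup i).1))
      rw [hev, add_zero] at hg
      have hft : g (false, true) = 0 := by
        by_contra hne
        apply h.upm_ne hs i (-(g (false, false) / g (false, true)))
        have e : ρ.Gp 0 (ρ.Gm 0 (u i)) = (g (false, true))⁻¹ • (g (false, true) • ρ.Gp 0 (ρ.Gm 0 (u i))) := by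
          rw [smul_smul, inv_mul_cancel₀ hne, one_smul]
        rw [e, eq_neg_of_add_eq_zero_left hev]; module
      have hff : g (false, false) = 0 := by
        rw [hft, zero_smul, zero_add] at hev
        exact (smul_eq_zero.1 hev).resolve_right (h.ne i)
      have hH := congrArg (ρ.H 0) hg
      rw [map_add, map_smul, map_smul, h.H_um, h.H_up, map_zero, zero_add] at hH
      have htt : g (true, true) = 0 := by
        have : (2 * g (true, true)) • ρ.Gm 0 (u i) = 0 := by
          calc _ = (c + 1) • (g (true, true) • ρ.Gm 0 (u i) + g (true, false) • ρ.Gp 0 (u i))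
              - (g (true, true) • (c - 1) • ρ.Gm 0 (u i) + g (true, false) • (c + 1) • ρ.Gp 0 (u i)) := by module
            _ = 0 := by rw [hg, hH]; simp
        have := (smul_eq_zero.1 this).resolve_right (h.um_ne hs i)
        simpa using this
      have htf : g (true, false) = 0 := by
        rw [htt, zero_smul, zero_add] at hg
        exact (smul_eq_zero.1 hg).resolve_right (h.up_ne hs i)
      rintro ⟨_ | _, _ | _⟩ <;> assumption
    · intro i t ht hit
      have hind := Module.End.eigenspaces_iSupIndep (ρ.L 0)
      refine (hind (a + i)).mono ?_ ?_
      · rw [Submodule.span_le]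
        rintro _ ⟨x, rfl⟩
        exact hwt i x
      · refine iSup₂_le fun j hj => ?_
        rw [Submodule.span_le]
        rintro _ ⟨x, rfl⟩
        refine Submodule.mem_iSup_of_mem (a + j) (Submodule.mem_iSup_of_mem ?_ (hwt j x))
        intro e
        have : (j : ℂ) = i := add_left_cancel e
        have : j = i := by exact_mod_cast this
        subst this
        exact hit hj
  · refine (eq_of_le_of_inf_le_of_sup_le hle1 (z := ρ.odd) ?_ ?_).symm
    · rw [ρ.grading.inf_eq_bot]; exact bot_le
    · exact le_top.trans (hsp2 ▸ sup_le_sup_left hle2 _)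
  · refine (eq_of_le_of_inf_le_of_sup_le hle2 (z := ρ.even) ?_ ?_).symm
    · rw [inf_comm, ρ.grading.inf_eq_bot]; exact bot_le
    · exact le_top.trans (hsp2 ▸ (sup_comm _ _).le.trans (sup_le_sup_left hle1 _))

end Core

end Ramond15

namespace Ramond15

variable {V : Type} [AddCommGroup V] [Module ℂ V]

lemma heis_pow {P Q : Module.End ℂ V} {κ : ℂ} (hPQ : ∀ v, P (Q v) - Q (P v) = κ • v) {x : ℂ} {z : V}
    (hz : P (Q z) = x • z) (j : ℕ) : P (Q ((P ^ j) z)) = (x - j * κ) • (P ^ j) z := by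
  induction j with
  | zero => simp [hz]
  | succ j ih =>
    rw [pow_succ', Module.End.mul_apply]
    have h1 := hPQ ((P ^ j) z)
    rw [ih, sub_eq_iff_eq_add, ← sub_eq_iff_eq_add'] at h1
    rw [← h1, map_sub, map_smul, map_smul]; push_cast; module

lemma heis_ne {P Q : Module.End ℂ V} {κ : ℂ} (hPQ : ∀ v, P (Q v) - Q (P v) = κ • v) {x : ℂ}
    (hx : ∀ n : ℕ, x ≠ (n + 1) * κ) {z : V} (hz0 : z ≠ 0)
    (hz : P (Q z) = x • z) (j : ℕ) : (P ^ j) z ≠ 0 := by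
  induction j with
  | zero => simpa using hz0
  | succ j ih =>
    rw [pow_succ', Module.End.mul_apply]
    intro h0
    have h1 := hPQ ((P ^ j) z)
    rw [h0, map_zero, sub_zero, heis_pow hPQ hz] at h1
    have h2 := smul_left_injective ℂ ih h1
    apply hx j
    linear_combination h2

lemma heis {P Q : Module.End ℂ V} {κ : ℂ} (hκ : κ ≠ 0) (hPQ : ∀ v, P (Q v) - Q (P v) = κ • v) (x : ℂ) :
    (∀ z, z ≠ 0 → P (Q z) = x • z → ∀ j : ℕ, (P ^ j) z ≠ 0 ∧ P (Q ((P ^ j) z)) = (x - j * κ) • (P ^ j) z) ∨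
    (∀ z, z ≠ 0 → P (Q z) = x • z → ∀ j : ℕ, (Q ^ j) z ≠ 0 ∧ P (Q ((Q ^ j) z)) = (x + j * κ) • (Q ^ j) z) := by
  by_cases hx : ∀ n : ℕ, x ≠ (n + 1) * κ
  · left
    intro z hz0 hz j
    exact ⟨heis_ne hPQ hx hz0 hz j, heis_pow hPQ hz j⟩
  · right
    push Not at hx
    obtain ⟨n, hn⟩ := hx
    intro z hz0 hz j
    have hQP : ∀ v, Q (P v) - P (Q v) = (-κ) • v := fun v => by rw [neg_smul, ← hPQ]; abel
    have hz' : Q (P z) = (x - κ) • z := by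
      have := hPQ z
      rw [hz, sub_eq_iff_eq_add, ← sub_eq_iff_eq_add'] at this
      rw [← this]; module
    refine ⟨heis_ne hQP (x := x - κ) ?_ hz0 hz' j, ?_⟩
    · intro m h
      have : ((n + m + 1 : ℕ) : ℂ) * κ = 0 := by push_cast; linear_combination h - hn
      rcases mul_eq_zero.1 this with h | h
      · exact Nat.cast_ne_zero.2 (Nat.succ_ne_zero (n + m)) h
      · exact hκ h
    · have h1 := heis_pow hQP hz' j
      have h2 := hPQ ((Q ^ j) z)
      rw [h1, sub_eq_iff_eq_add] at h2
      rw [h2]; module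

lemma H_pow_D {ρ : RamondRep V} {μ : ℂ} {τ : ZMod 2} {v : V} (hv : v ∈ ρ.wt μ ⊓ ρ.parity τ) (m : ℤ) (j : ℕ) :
    (ρ.H m ^ j) v ∈ ρ.wt (μ + m * j) ⊓ ρ.parity τ := by
  induction j with
  | zero => simpa using hv
  | succ j ih =>
    rw [pow_succ', Module.End.mul_apply]
    refine ⟨?_, ?_⟩
    · have := H_L0 (ρ := ρ) (m := m) (Module.End.mem_eigenspace_iff.1 ih.1)
      refine Module.End.mem_eigenspace_iff.2 ?_
      rw [this]; push_cast; module
    · have := ih.2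
      unfold RamondRep.parity at *
      split_ifs at * with h
      · exact ρ.H_even m _ this
      · exact ρ.H_odd m _ this

theorem c0_zero {ρ : RamondRep V} (hs : Hyp ρ) : ρ.c₀ = 0 := by
  by_contra hc
  obtain ⟨μ, τ, hr⟩ := hs.eq
  set D := ρ.wt μ ⊓ ρ.parity τ with hD
  have hDne : D ≠ ⊥ := by
    intro h0
    rw [h0] at hr
    simp at hr
  have hcomm : ∀ m n : ℤ, m + n ≠ 0 → Commute (ρ.H m) (ρ.H n) := by
    intro m n hmn
    ext v
    have := ρ.rel_HH m n v
    simp only [hmn, if_false, mul_zero, zero_mul, zero_smul, sub_eq_zero] at this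
    exact this
  have hrel : ∀ m : ℤ, ∀ v, ρ.H m (ρ.H (-m) v) - ρ.H (-m) (ρ.H m v) = (1 / 3 * m * ρ.c₀) • v := by
    intro m v
    have := ρ.rel_HH m (-m) v
    simpa using this
  have hDX : ∀ m : ℤ, ∀ v ∈ D, ρ.H m (ρ.H (-m) v) ∈ D := by
    intro m v hv
    have h1 := H_pow_D hv (-m) 1
    have h2 := H_pow_D h1 m 1
    rw [hD, Submodule.mem_inf]
    simpa using h2
  obtain ⟨x1, v1, hv1, hv1n, hv1e⟩ := exists_eigvec (hs.bd μ τ) hDne (ρ.H 1 * ρ.H (-1)) (hDX 1)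
  have hX12 : Commute (ρ.H 1 * ρ.H (-1)) (ρ.H 2 * ρ.H (-2)) :=
    ((hcomm 1 2 (by norm_num)).mul_right (hcomm 1 (-2) (by norm_num))).mul_left
      ((hcomm (-1) 2 (by norm_num)).mul_right (hcomm (-1) (-2) (by norm_num)))
  obtain ⟨x2, z, hz, hz0, hz2⟩ := exists_eigvec (S := D ⊓ Module.End.eigenspace (ρ.H 1 * ρ.H (-1)) x1)
    ((Submodule.rank_mono inf_le_left).trans (hs.bd μ τ)) (by
      intro h0
      have : v1 ∈ D ⊓ Module.End.eigenspace (ρ.H 1 * ρ.H (-1)) x1 := ⟨hv1, Module.End.mem_eigenspace_iff.2 hv1e⟩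
      rw [h0] at this
      exact hv1n (by simpa using this)) (ρ.H 2 * ρ.H (-2)) (by
      intro v hv
      refine ⟨hDX 2 v hv.1, ?_⟩
      have h1 := Module.End.mem_eigenspace_iff.1 hv.2
      refine Module.End.mem_eigenspace_iff.2 ?_
      rw [← Module.End.mul_apply, hX12.eq, Module.End.mul_apply, h1, map_smul])
  have hz1 := Module.End.mem_eigenspace_iff.1 hz.2
  -- the sign choice
  have sign : ∀ m : ℤ, m ≠ 0 → ∀ x : ℂ, ∃ (s : ℤ) (δ : ℂ), (s = 1 ∨ s = -1) ∧ δ ≠ 0 ∧ ∀ z, z ≠ 0 → ρ.H m (ρ.H (-m) z) = x • z →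
      ∀ j : ℕ, (ρ.H (m * s) ^ j) z ≠ 0 ∧
        ρ.H m (ρ.H (-m) ((ρ.H (m * s) ^ j) z)) = (x + j * δ) • (ρ.H (m * s) ^ j) z := by
    intro m hm x
    have hκ : (1 / 3 * m * ρ.c₀ : ℂ) ≠ 0 := by
      refine mul_ne_zero (mul_ne_zero (by norm_num) (by exact_mod_cast hm)) hc
    rcases heis hκ (hrel m) x with h | h
    · refine ⟨1, -(1 / 3 * m * ρ.c₀), Or.inl rfl, neg_ne_zero.2 hκ, fun z h0 h1 j => ?_⟩
      rw [mul_one]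
      refine ⟨(h z h0 h1 j).1, ?_⟩
      rw [(h z h0 h1 j).2]; module
    · refine ⟨-1, (1 / 3 * m * ρ.c₀), Or.inr rfl, hκ, fun z h0 h1 j => ?_⟩
      rw [mul_neg_one]
      exact h z h0 h1 j
  obtain ⟨s, δ, hs1, hδ, hS⟩ := sign 1 one_ne_zero x1
  obtain ⟨s', δ', hs1', -, hS'⟩ := sign 2 two_ne_zero x2
  rw [one_mul] at hS
  obtain ⟨k, hk⟩ : ∃ k : Fin 3 → ℕ, ∃ w : ℤ, ∀ j : Fin 3, 2 * s' * k j + s * (2 * j.1 : ℕ) = w := by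
    by_cases hss : s = s'
    · refine ⟨fun j => 2 - j.1, 4 * s, fun j => ?_⟩
      subst hss
      fin_cases j <;> simp <;> ring
    · refine ⟨fun j => j.1, 0, fun j => ?_⟩
      have : s' = -s := by omega
      subst this
      push_cast; ring
  obtain ⟨w, hw⟩ := hk
  set y : Fin 3 → V := fun j => (ρ.H s ^ (2 * j.1)) ((ρ.H (2 * s') ^ (k j)) z) with hy
  have hcm : Commute (ρ.H 1 * ρ.H (-1)) (ρ.H (2 * s')) :=
    (hcomm 1 (2 * s') (by omega)).mul_left (hcomm (-1) (2 * s') (by omega))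
  have hy1 : ∀ j : Fin 3, y j ≠ 0 ∧ ρ.H 1 (ρ.H (-1) (y j)) = (x1 + (2 * j.1 : ℕ) * δ) • y j := by
    intro j
    refine hS _ (hS' z hz0 hz2 (k j)).1 ?_ _
    have := congrArg (fun f : Module.End ℂ V => f z) (hcm.pow_right (k j)).eq
    simp only [Module.End.mul_apply] at this
    rw [this]
    rw [Module.End.mul_apply] at hz1
    rw [hz1, map_smul]
  refine not_indep3 (hs.bd (μ + w) τ) y ?_ ?_
  · intro j
    have h1 := H_pow_D (H_pow_D hz.1 (2 * s') (k j)) s (2 * j.1)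
    have e : (w : ℂ) = ((2 * s' : ℤ) : ℂ) * k j + s * ((2 * j.1 : ℕ) : ℂ) := by
      rw [← hw j]; push_cast; ring
    rw [e, ← add_assoc]
    exact h1
  · refine Module.End.eigenvectors_linearIndependent' (ρ.H 1 * ρ.H (-1)) (fun j : Fin 3 => x1 + (2 * j.1 : ℕ) * δ) ?_ y ?_
    · intro i j hij
      simp only [add_right_inj] at hij
      have := mul_right_cancel₀ hδ hij
      have : 2 * i.1 = 2 * j.1 := by exact_mod_cast this
      exact Fin.ext (by omega)
    · intro j
      exact ⟨Module.End.mem_eigenspace_iff.2 (hy1 j).2, (hy1 j).1⟩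

end Ramond15

namespace Ramond15

variable {V : Type} [AddCommGroup V] [Module ℂ V] {ρ : RamondRep V} {a c : ℂ}

lemma fam_simple (hs : ρ.IsSimple) (F : ℤ → ℤ → Submodule ℂ V) (hF : ∀ i k, F i k ≤ E ρ a c i k)
    (hL : ∀ m i k : ℤ, ∀ v ∈ F i k, ρ.L m v ∈ F (i + m) k)
    (hH : ∀ m i k : ℤ, ∀ v ∈ F i k, ρ.H m v ∈ F (i + m) k)
    (hGp : ∀ m i k : ℤ, ∀ v ∈ F i k, ρ.Gp m v ∈ F (i + m) (k + 1))
    (hGm : ∀ m i k : ℤ, ∀ v ∈ F i k, ρ.Gm m v ∈ F (i + m) (k - 1)) :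
    (∀ i k, F i k = ⊥) ∨ (⨆ x : ℤ × ℤ, F x.1 x.2 = ⊤) := by
  rcases span_simple hs {v | ∃ i k, v ∈ F i k} (fun v ⟨i, k, hv⟩ => par_or (mem_E.1 (hF i k hv)).2.2)
    (fun m v ⟨i, k, hv⟩ => Submodule.subset_span ⟨_, _, hL m i k v hv⟩)
    (fun m v ⟨i, k, hv⟩ => Submodule.subset_span ⟨_, _, hH m i k v hv⟩)
    (fun m v ⟨i, k, hv⟩ => Submodule.subset_span ⟨_, _, hGp m i k v hv⟩)
    (fun m v ⟨i, k, hv⟩ => Submodule.subset_span ⟨_, _, hGm m i k v hv⟩) with h | h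
  · left
    intro i k
    rw [Submodule.eq_bot_iff]
    exact fun v hv => h v ⟨i, k, hv⟩
  · right
    rw [eq_top_iff, ← h, Submodule.span_le]
    rintro v ⟨i, k, hv⟩
    exact Submodule.mem_iSup_of_mem (i, k) hv

lemma fam_simple' (hs : ρ.IsSimple) (F : ℤ → ℤ → Submodule ℂ V) (hF : ∀ i k, F i k ≤ E ρ a c i k)
    (hL : ∀ m i k : ℤ, ∀ v ∈ F i k, ρ.L m v ∈ F (i + m) k)
    (hH : ∀ m i k : ℤ, ∀ v ∈ F i k, ρ.H m v ∈ F (i + m) k)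
    (hGp : ∀ m i k : ℤ, ∀ v ∈ F i k, ρ.Gp m v ∈ F (i + m) (k + 1))
    (hGm : ∀ m i k : ℤ, ∀ v ∈ F i k, ρ.Gm m v ∈ F (i + m) (k - 1)) :
    (∀ i k, F i k = ⊥) ∨ (∀ i k, F i k = E ρ a c i k) := by
  rcases fam_simple hs F hF hL hH hGp hGm with h | h
  · exact Or.inl h
  · right
    intro i k
    exact fam_eq (F := fun x : ℤ × ℤ => F x.1 x.2) (indep_E ρ a c) (fun x => hF x.1 x.2) h (i, k)

lemma sup_E (hs : ρ.IsSimple) {i k : ℤ} (h : E ρ a c i k ≠ ⊥) : ⨆ x : ℤ × ℤ, E ρ a c x.1 x.2 = ⊤ := by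
  rcases fam_simple hs (E ρ a c) (fun _ _ => le_rfl) (fun m i k v hv => L_E hv) (fun m i k v hv => H_E hv)
    (fun m i k v hv => Gp_E hv) (fun m i k v hv => Gm_E hv) with h1 | h1
  · exact absurd (h1 i k) h
  · exact h1

lemma exists_E (hs : Hyp ρ) : ∃ (σ : RamondRep V) (a c : ℂ), (σ = ρ ∨ σ = pshift ρ) ∧ E σ a c 0 0 ≠ ⊥ := by
  obtain ⟨μ, τ, hr⟩ := hs.eq
  have hDne : ρ.wt μ ⊓ ρ.parity τ ≠ ⊥ := by
    intro h0
    rw [h0] at hr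
    simp at hr
  obtain ⟨χ, v, hv, hv0, he⟩ := exists_eigvec (hs.bd μ τ) hDne (ρ.H 0) (by
    intro v hv
    have := H_pow_D hv 0 1
    rw [Submodule.mem_inf]
    simpa using this)
  have hw := Module.End.mem_eigenspace_iff.1 hv.1
  by_cases hτ : τ = 0
  · refine ⟨ρ, μ, χ, Or.inl rfl, fun h0 => hv0 ?_⟩
    have : v ∈ E ρ μ χ 0 0 := by
      rw [mem_E]
      refine ⟨by simpa using hw, by simpa using he, ?_⟩
      have := hv.2
      simpa [par, RamondRep.parity, hτ] using this
    rw [h0] at this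
    simpa using this
  · refine ⟨pshift ρ, μ, χ, Or.inr rfl, fun h0 => hv0 ?_⟩
    have : v ∈ E (pshift ρ) μ χ 0 0 := by
      rw [mem_E]
      have hw2 : ρ.L 0 v = (μ + ((0 : ℤ) : ℂ)) • v := by simpa using hw
      have he2 : ρ.H 0 v = (χ + ((0 : ℤ) : ℂ)) • v := by simpa using he
      refine ⟨hw2, he2, ?_⟩
      have := hv.2
      simpa [par, RamondRep.parity, hτ, pshift] using this
    rw [h0] at this
    simpa using this

lemma near {i k : ℤ} (hk : c + k ≠ 0) (h : E ρ a c i k ≠ ⊥) {n : ℤ} (hn : n ≠ 0) :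
    E ρ a c (i + n) k ≠ ⊥ ∨ E ρ a c (i - n) k ≠ ⊥ := by
  by_contra hcon
  push Not at hcon
  obtain ⟨v, hv, hv0⟩ := Submodule.exists_mem_ne_zero_of_ne_bot h
  have h1 : ρ.L n v = 0 := by
    have := L_E (m := n) hv
    rw [hcon.1] at this
    simpa using this
  have h2 : ρ.H (-n) v = 0 := by
    have := H_E (m := -n) hv
    rw [← sub_eq_add_neg, hcon.2] at this
    simpa using this
  have h3 := ρ.rel_LH n (-n) v
  rw [h1, h2, map_zero, map_zero, sub_zero, add_neg_cancel, (mem_E.1 hv).2.1, smul_smul] at h3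
  rcases smul_eq_zero.1 h3.symm with h4 | h4
  · rcases mul_eq_zero.1 h4 with h5 | h5
    · apply hn
      push_cast at h5
      exact_mod_cast neg_eq_zero.1 h5
    · exact hk h5
  · exact hv0 h4

lemma count_par (hs : Hyp ρ) (i : ℤ) (T : Finset ℤ) (hT : ∀ k ∈ T, E ρ a c i k ≠ ⊥)
    (P : Submodule ℂ V) (hP : ∃ τ, P = ρ.parity τ) (hTP : ∀ k ∈ T, par ρ k = P) : T.card ≤ 2 := by
  by_contra hcon
  push Not at hcon
  obtain ⟨k1, k2, k3, h1, h2, h3, h12, h13, h23⟩ := Finset.two_lt_card_iff.1 hcon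
  obtain ⟨τ, rfl⟩ := hP
  have hk : ∀ j : Fin 3, (![k1, k2, k3] : Fin 3 → ℤ) j ∈ T := by
    intro j; fin_cases j <;> assumption
  have : ∀ j : Fin 3, ∃ v ∈ E ρ a c i ((![k1, k2, k3] : Fin 3 → ℤ) j), v ≠ 0 := fun j =>
    Submodule.exists_mem_ne_zero_of_ne_bot (hT _ (hk j))
  choose v hv hv0 using this
  refine not_indep3 (hs.bd (a + i) τ) v ?_ ?_
  · intro j
    have := hv j
    rw [← hTP _ (hk j)]
    exact ⟨this.1.1, this.2⟩
  · refine Module.End.eigenvectors_linearIndependent' (ρ.H 0) (fun j : Fin 3 => c + ((![k1, k2, k3] : Fin 3 → ℤ) j : ℤ)) ?_ v ?_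
    · intro x y hxy
      have h5 := add_left_cancel hxy
      have h6 : (![k1, k2, k3] : Fin 3 → ℤ) x = (![k1, k2, k3] : Fin 3 → ℤ) y := by exact_mod_cast h5
      fin_cases x <;> fin_cases y <;> simp_all
    · intro j
      exact ⟨Module.End.mem_eigenspace_iff.2 (mem_E.1 (hv j)).2.1, hv0 j⟩

lemma count (hs : Hyp ρ) (i : ℤ) (T : Finset ℤ) (hT : ∀ k ∈ T, E ρ a c i k ≠ ⊥) : T.card ≤ 4 := by
  classical
  rw [← Finset.card_filter_add_card_filter_not (s := T) (fun k => Even k)]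
  have h1 := count_par hs i (T.filter fun k => Even k) (fun k hk => hT k (Finset.mem_filter.1 hk).1) ρ.even
    ⟨0, by simp [RamondRep.parity]⟩ (fun k hk => by simp [par, (Finset.mem_filter.1 hk).2])
  have h2 := count_par hs i (T.filter fun k => ¬ Even k) (fun k hk => hT k (Finset.mem_filter.1 hk).1) ρ.odd
    ⟨1, by simp [RamondRep.parity]⟩ (fun k hk => by rw [par, if_neg (Finset.mem_filter.1 hk).2])
  omega

lemma supp_finite (hs : Hyp ρ) (a c : ℂ) : {k : ℤ | ∃ i, E ρ a c i k ≠ ⊥}.Finite := by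
  classical
  by_contra hinf
  have hinf2 : ({k : ℤ | ∃ i, E ρ a c i k ≠ ⊥} \ {k | c + (k : ℂ) = 0}).Infinite := by
    refine Set.Infinite.sdiff hinf (Set.Subsingleton.finite ?_)
    intro x hx y hy
    have : (x : ℂ) = y := add_left_cancel ((show c + (x : ℂ) = 0 from hx).trans (show c + (y : ℂ) = 0 from hy).symm)
    exact_mod_cast this
  obtain ⟨K, hK, hKc⟩ := hinf2.exists_subset_card_eq 9
  have hK' : ∀ k : ℤ, ∃ i, k ∈ K → E ρ a c i k ≠ ⊥ := by
    intro k
    by_cases hk : k ∈ K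
    · obtain ⟨i, hi⟩ := (hK hk).1
      exact ⟨i, fun _ => hi⟩
    · exact ⟨0, fun h => absurd h hk⟩
  choose i hi using hK'
  set R : ℕ := K.sup (fun k => (i k).natAbs) with hR
  have hiR : ∀ k ∈ K, (i k).natAbs ≤ R := fun k hk => Finset.le_sup (f := fun k => (i k).natAbs) hk
  set N : ℕ := 8 * R + 5 with hN
  set J : Finset ℤ := Finset.Icc (-((N + R : ℕ) : ℤ)) ((N + R : ℕ) : ℤ) with hJ
  have hJc : J.card = 2 * (N + R) + 1 := by
    rw [hJ, Int.card_Icc]; omega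
  have h1 : ∀ k ∈ K, N ≤ (J.filter fun j => E ρ a c j k ≠ ⊥).card := by
    intro k hk
    have hck : c + (k : ℂ) ≠ 0 := (hK hk).2
    have hb := hiR k hk
    set f : ℕ → ℤ := fun n => if E ρ a c (i k + (n + 1 : ℕ)) k ≠ ⊥ then i k + (n + 1 : ℕ) else i k - (n + 1 : ℕ) with hf
    have := Finset.card_le_card_of_injOn (s := Finset.range N) (t := J.filter fun j => E ρ a c j k ≠ ⊥) f ?_ ?_
    · simpa using this
    · intro n hn
      have hn' : n < N := by simpa using hn
      have hnr := near hck (hi k hk) (n := ((n + 1 : ℕ) : ℤ)) (by omega)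
      simp only [Finset.coe_filter, Set.mem_ofPred_eq, hf, hJ, Finset.mem_Icc]
      split_ifs with hh
      · exact ⟨by omega, hh⟩
      · exact ⟨by omega, hnr.resolve_left hh⟩
    · intro n hn m hm hnm
      simp only [hf] at hnm
      split_ifs at hnm <;> omega
  have h2 : ∀ j ∈ J, (K.filter fun k => E ρ a c j k ≠ ⊥).card ≤ 4 := by
    intro j _
    exact count hs j _ fun k hk => (Finset.mem_filter.1 hk).2
  have h3 := Finset.sum_card_bipartiteAbove_eq_sum_card_bipartiteBelow (s := K) (t := J)
    (fun k j => E ρ a c j k ≠ ⊥)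
  have h4 : K.card * N ≤ ∑ k ∈ K, (J.filter fun j => E ρ a c j k ≠ ⊥).card := by
    rw [← smul_eq_mul]; exact Finset.card_nsmul_le_sum _ _ _ h1
  have h5 : ∑ j ∈ J, (K.filter fun k => E ρ a c j k ≠ ⊥).card ≤ J.card * 4 := by
    rw [← smul_eq_mul]; exact Finset.sum_le_card_nsmul _ _ _ h2
  have h6 : K.card * N ≤ J.card * 4 := h4.trans (h3.le.trans h5)
  rw [hKc, hJc] at h6
  omega

structure Top (ρ : RamondRep V) (a c : ℂ) : Prop where
  hs : Hyp ρ
  c0 : ρ.c₀ = 0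
  sup : ⨆ x : ℤ × ℤ, E ρ a c x.1 x.2 = ⊤
  top : ∀ i k : ℤ, 0 < k → E ρ a c i k = ⊥
  ne : ∃ i, E ρ a c i 0 ≠ ⊥
  cne : c ≠ 0

lemma E_shift (ρ : RamondRep V) (a c : ℂ) (K : ℤ) : ∃ σ : RamondRep V, (σ = ρ ∨ σ = pshift ρ) ∧
    ∀ i k, E σ a (c + K) i k = E ρ a c i (k + K) := by
  by_cases h : Even K
  · refine ⟨ρ, Or.inl rfl, fun i k => ?_⟩
    have e : c + K + (k : ℂ) = c + ((k + K : ℤ) : ℂ) := by push_cast; ring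
    have e2 : par ρ k = par ρ (k + K) := by simp [par, Int.even_add, h]
    unfold E
    rw [e, e2]
  · refine ⟨pshift ρ, Or.inr rfl, fun i k => ?_⟩
    have e : c + K + (k : ℂ) = c + ((k + K : ℤ) : ℂ) := by push_cast; ring
    have e2 : par (pshift ρ) k = par ρ (k + K) := by
      rw [par_pshift]; simp only [par, Int.even_add, h, iff_false, Int.not_even_one]
    unfold E
    rw [e, e2]
    rfl

lemma top_of_max (hs : Hyp ρ) {K : ℤ} (hK : ∃ i, E ρ a c i K ≠ ⊥) (hmax : ∀ i k, K < k → E ρ a c i k = ⊥)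
    (hcK : c + (K : ℂ) ≠ 0) : ∃ (σ : RamondRep V) (a c : ℂ), (σ = ρ ∨ σ = pshift ρ) ∧ Top σ a c := by
  obtain ⟨σ, hσ, hE⟩ := E_shift ρ a c K
  have hsσ : Hyp σ := by
    rcases hσ with rfl | rfl
    · exact hs
    · exact hs.pshift
  obtain ⟨i, hi⟩ := hK
  have hi' : E σ a (c + K) i 0 ≠ ⊥ := by rw [hE, zero_add]; exact hi
  refine ⟨σ, a, c + K, hσ, hsσ, c0_zero hsσ, sup_E hsσ.simple hi', ?_, ⟨i, hi'⟩, hcK⟩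
  intro i k hk
  rw [hE]
  exact hmax _ _ (by omega)

lemma E_flip (ρ : RamondRep V) (a c : ℂ) (i k : ℤ) : E (flip ρ) a (-c) i k = E ρ a c i (-k) := by
  ext v
  rw [mem_E, mem_E, par_neg]
  have e : (flip ρ).H 0 v = -(ρ.H 0 v) := rfl
  rw [e]
  have : -(ρ.H 0 v) = (-c + k) • v ↔ ρ.H 0 v = (c + ((-k : ℤ) : ℂ)) • v := by
    rw [neg_eq_iff_eq_neg, ← neg_smul]
    have : -(-c + (k : ℂ)) = c + ((-k : ℤ) : ℂ) := by push_cast; ring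
    rw [this]
  rw [this]
  rfl

theorem exists_top (hs : Hyp ρ) : ∃ (σ : RamondRep V) (a c : ℂ),
    (σ = ρ ∨ σ = pshift ρ ∨ σ = flip ρ ∨ σ = flip (pshift ρ)) ∧ Top σ a c := by
  obtain ⟨ρ1, a, c, hρ1, hE⟩ := exists_E hs
  have hs1 : Hyp ρ1 := by
    rcases hρ1 with rfl | rfl
    · exact hs
    · exact hs.pshift
  have hfin := supp_finite hs1 a c
  have hne : {k : ℤ | ∃ i, E ρ1 a c i k ≠ ⊥}.Nonempty := ⟨0, 0, hE⟩
  obtain ⟨K, hK, hKmax⟩ := Set.exists_max_image _ id hfin hne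
  obtain ⟨K', hK', hKmin⟩ := Set.exists_min_image _ id hfin hne
  simp only [Set.mem_ofPred_eq, id] at hK hK' hKmax hKmin
  by_cases hcK : c + (K : ℂ) = 0
  · by_cases hKK : K' = K
    · exfalso
      subst hKK
      have hbot : ∀ i k, k ≠ K' → E ρ1 a c i k = ⊥ := by
        intro i k hk
        by_contra h0
        have h1 := hKmax k ⟨i, h0⟩
        have h2 := hKmin k ⟨i, h0⟩
        omega
      have hsup := sup_E hs1.simple hE
      have ext : ∀ f : V →ₗ[ℂ] V, (∀ i k, ∀ v ∈ E ρ1 a c i k, f v = 0) → ∀ v, f v = 0 := by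
        intro f hf v
        have : (⊤ : Submodule ℂ V) ≤ LinearMap.ker f := by
          rw [← hsup]
          exact iSup_le fun x v hv => hf _ _ v hv
        exact this (Submodule.mem_top (x := v))
      have hp : ∀ m v, ρ1.Gp m v = 0 := by
        intro m
        apply ext
        intro i k v hv
        by_cases hk : k = K'
        · have := Gp_E (m := m) hv
          rw [hbot _ _ (by omega)] at this
          simpa using this
        · rw [hbot _ _ hk] at hv
          rw [(Submodule.mem_bot ℂ).1 hv, map_zero]
      have hm : ∀ m v, ρ1.Gm m v = 0 := by
        intro m
        apply ext
        intro i k v hv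
        by_cases hk : k = K'
        · have := Gm_E (m := m) hv
          rw [hbot _ _ (by omega)] at this
          simpa using this
        · rw [hbot _ _ hk] at hv
          rw [(Submodule.mem_bot ℂ).1 hv, map_zero]
      have hrel : ∀ p q v, (-2 : ℂ) • ρ1.L (p + q) v + ((p : ℂ) - q) • ρ1.H (p + q) v = 0 := by
        intro p q v
        have := ρ1.rel_GpGm p q v
        rw [hp, hm, c0_zero hs1, mul_zero, zero_smul] at this
        simpa using this.symm
      have hH : ∀ m v, ρ1.H m v = 0 := by
        intro m v
        have h1 := hrel (m + 1) (-1) v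
        have h2 := hrel m 0 v
        rw [show m + 1 + -1 = m by ring] at h1
        rw [add_zero] at h2
        have : (2 : ℂ) • ρ1.H m v = 0 := by
          rw [← sub_eq_zero.2 (h1.trans h2.symm)]
          push_cast; module
        exact (smul_eq_zero.1 this).resolve_left two_ne_zero
      have hL : ∀ m v, ρ1.L m v = 0 := by
        intro m v
        have h2 := hrel m 0 v
        rw [add_zero, hH, smul_zero, add_zero] at h2
        exact (smul_eq_zero.1 h2).resolve_left (by norm_num)
      exact hs1.simple.1 fun m v => ⟨hL m v, hH m v, hp m v, hm m v⟩
    · have hcK' : -c + ((-K' : ℤ) : ℂ) ≠ 0 := by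
        intro h0
        apply hKK
        have : (K' : ℂ) = K := by push_cast at h0; linear_combination -h0 - hcK
        exact_mod_cast this
      obtain ⟨i, hi⟩ := hK'
      obtain ⟨σ, a', c', hσ, hT⟩ := top_of_max (ρ := flip ρ1) (a := a) (c := -c) hs1.flip (K := -K')
        ⟨i, by rw [E_flip, neg_neg]; exact hi⟩ (by
          intro i k hk
          rw [E_flip]
          by_contra h0
          have := hKmin (-k) ⟨i, h0⟩
          omega) hcK'
      refine ⟨σ, a', c', ?_, hT⟩
      rcases hρ1 with rfl | rfl <;> rcases hσ with rfl | rfl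
      · exact Or.inr (Or.inr (Or.inl rfl))
      · exact Or.inr (Or.inr (Or.inr rfl))
      · exact Or.inr (Or.inr (Or.inr rfl))
      · exact Or.inr (Or.inr (Or.inl rfl))
  · obtain ⟨σ, a', c', hσ, hT⟩ := top_of_max hs1 hK (by
          intro i k hk
          by_contra h0
          have := hKmax k ⟨i, h0⟩
          omega) hcK
    refine ⟨σ, a', c', ?_, hT⟩
    rcases hρ1 with rfl | rfl <;> rcases hσ with rfl | rfl
    · exact Or.inl rfl
    · exact Or.inr (Or.inl rfl)
    · exact Or.inr (Or.inl rfl)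
    · exact Or.inl rfl

end Ramond15

namespace Ramond15

variable {V : Type} [AddCommGroup V] [Module ℂ V] {ρ : RamondRep V} {a c : ℂ}

/-- coinduced family -/
def co (ρ : RamondRep V) (a c : ℂ) (N : ℤ → Submodule ℂ V) : ℕ → ℤ → Submodule ℂ V
  | 0, i => N i
  | n + 1, i => E ρ a c i (-((n : ℤ) + 1)) ⊓ ⨅ p : ℤ, (co ρ a c N n (i + p)).comap (ρ.Gp p)

lemma mem_co_succ {N : ℤ → Submodule ℂ V} {n : ℕ} {i : ℤ} {v : V} : v ∈ co ρ a c N (n + 1) i ↔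
    v ∈ E ρ a c i (-((n : ℤ) + 1)) ∧ ∀ p, ρ.Gp p v ∈ co ρ a c N n (i + p) := by
  simp [co, Submodule.mem_inf, Submodule.mem_iInf]

/-- the anticommutator when the central charge vanishes -/
lemma Top.GG (h : Top ρ a c) (p q : ℤ) (v : V) : ρ.Gp p (ρ.Gm q v) + ρ.Gm q (ρ.Gp p v) =
    (-2 : ℂ) • ρ.L (p + q) v + ((p : ℂ) - q) • ρ.H (p + q) v := by
  have := ρ.rel_GpGm p q v
  rw [h.c0, mul_zero, zero_smul, add_zero] at this
  exact this

lemma Top.LL (h : Top ρ a c) (m n : ℤ) (v : V) : ρ.L m (ρ.L n v) - ρ.L n (ρ.L m v) =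
    ((n : ℂ) - m) • ρ.L (m + n) v := by
  have := ρ.rel_LL m n v
  rw [h.c0, mul_zero, zero_smul, add_zero] at this
  exact this

lemma Top.HH (h : Top ρ a c) (m n : ℤ) (v : V) : ρ.H m (ρ.H n v) = ρ.H n (ρ.H m v) := by
  have := ρ.rel_HH m n v
  rw [h.c0, mul_zero, zero_smul, sub_eq_zero] at this
  exact this

lemma Top.Gp0 (h : Top ρ a c) {i : ℤ} {v : V} (hv : v ∈ E ρ a c i 0) (p : ℤ) : ρ.Gp p v = 0 := by
  have := Gp_E (m := p) hv
  rw [h.top _ _ (by norm_num)] at this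
  simpa using this

section
variable {N : ℤ → Submodule ℂ V} (h : Top ρ a c) (hN : ∀ i, N i ≤ E ρ a c i 0)
  (hL : ∀ m i : ℤ, ∀ v ∈ N i, ρ.L m v ∈ N (i + m)) (hH : ∀ m i : ℤ, ∀ v ∈ N i, ρ.H m v ∈ N (i + m))

include hN in
lemma co_le (n : ℕ) (i : ℤ) : co ρ a c N n i ≤ E ρ a c i (-(n : ℤ)) := by
  cases n with
  | zero => simpa [co] using hN i
  | succ n =>
    intro v hv
    have := (mem_co_succ.1 hv).1
    push_cast
    exact this

include hL in
lemma co_L (n : ℕ) : ∀ m i : ℤ, ∀ v ∈ co ρ a c N n i, ρ.L m v ∈ co ρ a c N n (i + m) := by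
  induction n with
  | zero => exact hL
  | succ n ih =>
    intro m i v hv
    rw [mem_co_succ] at hv ⊢
    refine ⟨L_E hv.1, fun p => ?_⟩
    have h1 := ρ.rel_LGp m p v
    have h2 : ρ.Gp p (ρ.L m v) = ρ.L m (ρ.Gp p v) - ((p : ℂ) - (m : ℂ) / 2) • ρ.Gp (p + m) v := by
      rw [← h1]; abel
    rw [h2]
    have h3 := ih m _ _ (hv.2 p)
    have h4 := hv.2 (p + m)
    rw [show i + p + m = i + m + p by ring] at h3
    rw [show i + (p + m) = i + m + p by ring] at h4
    exact sub_mem h3 (Submodule.smul_mem _ _ h4)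

include hH in
lemma co_H (n : ℕ) : ∀ m i : ℤ, ∀ v ∈ co ρ a c N n i, ρ.H m v ∈ co ρ a c N n (i + m) := by
  induction n with
  | zero => exact hH
  | succ n ih =>
    intro m i v hv
    rw [mem_co_succ] at hv ⊢
    refine ⟨H_E hv.1, fun p => ?_⟩
    have h1 := ρ.rel_HGp m p v
    have h2 : ρ.Gp p (ρ.H m v) = ρ.H m (ρ.Gp p v) - ρ.Gp (m + p) v := by
      rw [← h1]; abel
    rw [h2]
    have h3 := ih m _ _ (hv.2 p)
    have h4 := hv.2 (m + p)
    rw [show i + p + m = i + m + p by ring] at h3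
    rw [show i + (m + p) = i + m + p by ring] at h4
    exact sub_mem h3 h4

include h hN hL hH in
lemma co_Gm (n : ℕ) : ∀ m i : ℤ, ∀ v ∈ co ρ a c N n i, ρ.Gm m v ∈ co ρ a c N (n + 1) (i + m) := by
  have key : ∀ n : ℕ, ∀ m i p : ℤ, ∀ v ∈ co ρ a c N n i, ρ.Gm m (ρ.Gp p v) ∈ co ρ a c N n (i + m + p) →
      ρ.Gp p (ρ.Gm m v) ∈ co ρ a c N n (i + m + p) := by
    intro n m i p v hv hG
    have h1 : ρ.Gp p (ρ.Gm m v) = (-2 : ℂ) • ρ.L (p + m) v + ((p : ℂ) - m) • ρ.H (p + m) v - ρ.Gm m (ρ.Gp p v) := by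
      rw [← h.GG]; abel
    rw [h1]
    have h3 := co_L hL n (p + m) i v hv
    have h4 := co_H hH n (p + m) i v hv
    rw [show i + (p + m) = i + m + p by ring] at h3 h4
    exact sub_mem (add_mem (Submodule.smul_mem _ _ h3) (Submodule.smul_mem _ _ h4)) hG
  have hE : ∀ n : ℕ, ∀ m i : ℤ, ∀ v ∈ co ρ a c N n i, ρ.Gm m v ∈ E ρ a c (i + m) (-((n : ℤ) + 1)) := by
    intro n m i v hv
    have := Gm_E (m := m) (co_le hN n i hv)
    rwa [show -(n : ℤ) - 1 = -((n : ℤ) + 1) by ring] at this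
  induction n with
  | zero =>
    intro m i v hv
    rw [mem_co_succ]
    refine ⟨hE 0 m i v hv, fun p => key 0 m i p v hv ?_⟩
    rw [h.Gp0 (hN i hv), map_zero]
    exact zero_mem _
  | succ n ih =>
    intro m i v hv
    rw [mem_co_succ]
    refine ⟨hE (n + 1) m i v hv, fun p => key (n + 1) m i p v hv ?_⟩
    have := ih m _ _ ((mem_co_succ.1 hv).2 p)
    rwa [show i + p + m = i + m + p by ring] at this

include h hN hL hH in
lemma co_simple : (∀ n i, co ρ a c N n i = ⊥) ∨ (∀ n i, co ρ a c N n i = E ρ a c i (-(n : ℤ))) := by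
  set F : ℤ → ℤ → Submodule ℂ V := fun i k => if 0 < k then ⊥ else co ρ a c N (-k).toNat i with hF
  have Fneg : ∀ (n : ℕ) i, F i (-(n : ℤ)) = co ρ a c N n i := by
    intro n i
    have : ¬ (0 : ℤ) < -(n : ℤ) := by omega
    simp only [hF, if_neg this, neg_neg, Int.toNat_natCast]
  have Fpos : ∀ i k, 0 < k → F i k = ⊥ := fun i k hk => by simp only [hF, if_pos hk]
  have cases : ∀ k : ℤ, 0 < k ∨ ∃ n : ℕ, k = -(n : ℤ) := by
    intro k
    by_cases hk : 0 < k
    · exact Or.inl hk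
    · exact Or.inr ⟨(-k).toNat, by omega⟩
  have triv : ∀ (f : V →ₗ[ℂ] V) (i k j l : ℤ), 0 < k → ∀ v ∈ F i k, f v ∈ F j l := by
    intro f i k j l hk v hv
    rw [Fpos i k hk, Submodule.mem_bot] at hv
    rw [hv, map_zero]
    exact zero_mem _
  have := fam_simple' (a := a) (c := c) h.hs.simple F ?_ ?_ ?_ ?_ ?_
  · rcases this with h1 | h1
    · exact Or.inl fun n i => by rw [← Fneg, h1]
    · exact Or.inr fun n i => by rw [← Fneg, h1]
  · intro i k
    rcases cases k with hk | ⟨n, rfl⟩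
    · rw [Fpos i k hk]; exact bot_le
    · rw [Fneg]; exact co_le hN n i
  · intro m i k
    rcases cases k with hk | ⟨n, rfl⟩
    · exact triv _ _ _ _ _ hk
    · rw [Fneg, Fneg]; exact co_L hL n m i
  · intro m i k
    rcases cases k with hk | ⟨n, rfl⟩
    · exact triv _ _ _ _ _ hk
    · rw [Fneg, Fneg]; exact co_H hH n m i
  · intro m i k
    rcases cases k with hk | ⟨n, rfl⟩
    · exact triv _ _ _ _ _ hk
    · rw [Fneg]
      intro v hv
      cases n with
      | zero =>
        rw [h.Gp0 (hN i hv)]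
        exact zero_mem _
      | succ n =>
        rw [show -((n + 1 : ℕ) : ℤ) + 1 = -(n : ℤ) by push_cast; ring, Fneg]
        exact (mem_co_succ.1 hv).2 m
  · intro m i k
    rcases cases k with hk | ⟨n, rfl⟩
    · exact triv _ _ _ _ _ hk
    · rw [Fneg, show -(n : ℤ) - 1 = -((n + 1 : ℕ) : ℤ) by push_cast; ring, Fneg]
      exact co_Gm h hN hL hH n m i

end

lemma Top.topsimple (h : Top ρ a c) (N : ℤ → Submodule ℂ V) (hN : ∀ i, N i ≤ E ρ a c i 0)
    (hL : ∀ m i : ℤ, ∀ v ∈ N i, ρ.L m v ∈ N (i + m)) (hH : ∀ m i : ℤ, ∀ v ∈ N i, ρ.H m v ∈ N (i + m)) :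
    (∀ i, N i = ⊥) ∨ (∀ i, N i = E ρ a c i 0) := by
  rcases co_simple h hN hL hH with h1 | h1
  · exact Or.inl fun i => h1 0 i
  · exact Or.inr fun i => by simpa [co] using h1 0 i

lemma Top.inj (h : Top ρ a c) (n : ℕ) {i : ℤ} {w : V} (hw : w ∈ E ρ a c i (-((n : ℤ) + 1)))
    (hG : ∀ p, ρ.Gp p w = 0) : w = 0 := by
  rcases co_simple h (N := fun _ => ⊥) (fun _ => bot_le) (by simp) (by simp) with h1 | h1
  · have : w ∈ co ρ a c (fun _ => ⊥) (n + 1) i := by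
      rw [mem_co_succ]
      refine ⟨hw, fun p => ?_⟩
      rw [hG p]; exact zero_mem _
    rw [h1] at this
    simpa using this
  · exfalso
    obtain ⟨i, hi⟩ := h.ne
    apply hi
    have := h1 0 i
    simpa [co] using this.symm

lemma Top.inj1 (h : Top ρ a c) {i : ℤ} {w w' : V} (hw : w ∈ E ρ a c i (-1)) (hw' : w' ∈ E ρ a c i (-1))
    (hG : ∀ p, ρ.Gp p w = ρ.Gp p w') : w = w' := by
  have := h.inj 0 (i := i) (w := w - w') (by simpa using sub_mem hw hw') (fun p => by
    rw [map_sub, hG, sub_self])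
  exact sub_eq_zero.1 this

lemma Top.inj2 (h : Top ρ a c) {i : ℤ} {w w' : V} (hw : w ∈ E ρ a c i (-2)) (hw' : w' ∈ E ρ a c i (-2))
    (hG : ∀ p, ρ.Gp p w = ρ.Gp p w') : w = w' := by
  have := h.inj 1 (i := i) (w := w - w') (by
    have := sub_mem hw hw'
    norm_num
    exact this) (fun p => by
    rw [map_sub, hG, sub_self])
  exact sub_eq_zero.1 this

set_option maxHeartbeats 1000000 in
/-- the top layer -/
lemma Top.HHc (h : Top ρ a c) {i : ℤ} {v : V} (hv : v ∈ E ρ a c i 0) (m n : ℤ) :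
    ρ.H m (ρ.H n v) = c • ρ.H (m + n) v := by
  set M : Submodule ℂ V := ⨆ i, E ρ a c i 0 with hM
  have iota : ∀ i, E ρ a c i 0 ≤ M := fun i => le_iSup (fun i => E ρ a c i 0) i
  have stab : ∀ (f : V →ₗ[ℂ] V) (m : ℤ), (∀ i, ∀ v ∈ E ρ a c i 0, f v ∈ E ρ a c (i + m) 0) → ∀ v ∈ M, f v ∈ M := by
    intro f m hf
    have : M ≤ M.comap f := iSup_le fun i v hv => iota _ (hf i v hv)
    exact this
  have sL : ∀ m, ∀ v ∈ M, ρ.L m v ∈ M := fun m => stab _ m fun i v hv => L_E hv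
  have sH : ∀ m, ∀ v ∈ M, ρ.H m v ∈ M := fun m => stab _ m fun i v hv => H_E hv
  have hMc : ∀ v ∈ M, ρ.H 0 v = c • v := by
    have : M ≤ LinearMap.ker (ρ.H 0 - c • LinearMap.id) := iSup_le fun i v hv => by
      have := (mem_E.1 hv).2.1
      rw [Int.cast_zero, add_zero] at this
      simp [this]
    intro v hv
    have := this hv
    simpa [sub_eq_zero] using this
  have hMp : ∀ v ∈ M, v ∈ par ρ 0 := by
    have : M ≤ par ρ 0 := iSup_le fun i v hv => (mem_E.1 hv).2.2
    exact this
  have hmem : ∀ i : ℤ, ∀ v ∈ M, ρ.L 0 v = (a + i) • v → v ∈ E ρ a c i 0 := by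
    intro i v hv hw
    rw [mem_E]
    exact ⟨hw, by rw [hMc v hv]; simp, hMp v hv⟩
  let Lr : ℤ → Module.End ℂ M := fun m => (ρ.L m).restrict (sL m)
  let Hr : ℤ → Module.End ℂ M := fun m => (ρ.H m).restrict (sH m)
  have key := lemA Lr Hr (fun i => (E ρ a c i 0).comap M.subtype) a c h.cne ?_ ?_ ?_ ?_ ?_ ?_ ?_ ?_ ?_ m n
  · have := congrArg (fun f : Module.End ℂ M => ((f ⟨v, iota i hv⟩ : M) : V)) key
    simpa [Lr, Hr, Module.End.mul_apply] using this
  · intro i v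
    constructor
    · intro hv
      have hv1 : (v : V) ∈ E ρ a c i 0 := hv
      apply Subtype.ext
      have h2 := (mem_E.1 hv1).1
      simpa [Lr] using h2
    · intro hv
      have h2 := congrArg Subtype.val hv
      have h3 : ρ.L 0 (v : V) = (a + i) • (v : V) := by simpa [Lr] using h2
      exact hmem i v v.2 h3
  · rw [eq_top_iff]
    rintro ⟨v, hv⟩ -
    have h1 : M ≤ (⨆ i, (E ρ a c i 0).comap M.subtype).map M.subtype := by
      refine iSup_le fun i v hv => ?_
      exact ⟨⟨v, iota i hv⟩, Submodule.mem_iSup_of_mem i hv, rfl⟩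
    obtain ⟨w, hw, hwv⟩ := h1 hv
    have : w = ⟨v, hv⟩ := Subtype.ext hwv
    rw [← this]; exact hw
  · intro i
    have := rank_E (a := a) (c := c) h.hs i 0
    rw [← LinearEquiv.rank_eq (Submodule.comapSubtypeEquivOfLe (iota i))] at this
    exact this
  · ext v
    simpa [Hr] using hMc v v.2
  · intro m n
    ext v
    simpa [Hr, Module.End.mul_apply] using h.HH m n v
  · intro m n
    ext v
    simpa [Hr, Lr, Module.End.mul_apply] using ρ.rel_LH m n v
  · intro m i v hv
    have hv1 : (v : V) ∈ E ρ a c i 0 := hv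
    have h2 : ρ.L m (v : V) ∈ E ρ a c (i + m) 0 := L_E hv1
    simpa [Lr, Submodule.mem_comap] using h2
  · obtain ⟨i, hi⟩ := h.ne
    refine ⟨i, fun h0 => hi ?_⟩
    rw [Submodule.eq_bot_iff] at h0 ⊢
    intro v hv
    have := h0 ⟨v, iota i hv⟩ hv
    exact congrArg Subtype.val this
  · intro N hN hL hH
    have := h.topsimple (fun i => (N i).map M.subtype) ?_ ?_ ?_
    · rcases this with h1 | h1
      · left
        intro i
        rw [Submodule.eq_bot_iff]
        intro v hv
        have : (v : V) ∈ (N i).map M.subtype := ⟨v, hv, rfl⟩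
        rw [h1 i, Submodule.mem_bot] at this
        exact Subtype.ext this
      · right
        intro i
        refine le_antisymm (hN i) ?_
        intro v hv
        have : (v : V) ∈ (N i).map M.subtype := by rw [h1 i]; exact hv
        obtain ⟨w, hw, hwv⟩ := this
        rwa [← Subtype.ext hwv]
    · rintro i _ ⟨w, hw, rfl⟩
      exact hN i hw
    · rintro m i _ ⟨w, hw, rfl⟩
      exact ⟨Lr m w, hL m i w hw, rfl⟩
    · rintro m i _ ⟨w, hw, rfl⟩
      exact ⟨Hr m w, hH m i w hw, rfl⟩

end Ramond15

namespace Ramond15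

lemma solve_rec (f : ℤ → ℂ) (hf : ∀ m n : ℤ, (n : ℂ) * f n - m * f m = ((n : ℂ) - m) * f (m + n)) (m : ℤ) :
    f m = f 0 + (f 1 - f 0) * m := by
  set h : ℤ → ℂ := fun m => f m - f 0 - (f 1 - f 0) * m with hh
  have h0 : h 0 = 0 := by simp [hh]
  have hrec : ∀ m n : ℤ, (n : ℂ) * h n - m * h m = ((n : ℂ) - m) * h (m + n) := by
    intro m n
    have := hf m n
    simp only [hh]
    push_cast
    linear_combination this
  have h1 : h 1 = 0 := by simp [hh]
  have hneg : ∀ n : ℕ, h (-(n : ℤ)) = 0 := by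
    intro n
    induction n with
    | zero => simpa using h0
    | succ n ih =>
      have := hrec 1 (-((n : ℤ) + 1))
      rw [h1, show 1 + -((n : ℤ) + 1) = -(n : ℤ) by ring, ih] at this
      push_cast at this ⊢
      have h2 : ((n : ℂ) + 1) * h (-((n : ℤ) + 1)) = 0 := by linear_combination -this
      rcases mul_eq_zero.1 h2 with h3 | h3
      · exact absurd h3 (by exact_mod_cast Nat.succ_ne_zero n)
      · rw [← h3]
  have hpos : ∀ n : ℕ, h (n : ℤ) = 0 := by
    intro n
    by_cases hn : n = 0
    · subst hn; simpa using h0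
    have := hrec (-(n : ℤ)) n
    rw [hneg, neg_add_cancel, h0] at this
    simp only [mul_zero, sub_zero] at this
    rcases mul_eq_zero.1 this with h3 | h3
    · exact absurd h3 (by exact_mod_cast hn)
    · exact h3
  have : h m = 0 := by
    rcases Int.eq_nat_or_neg m with ⟨n, rfl | rfl⟩
    · exact hpos n
    · exact hneg n
  simp only [hh] at this
  linear_combination this

variable {V : Type} [AddCommGroup V] [Module ℂ V] {ρ : RamondRep V} {a c : ℂ}

/-- the shift operators -/
noncomputable def tt (ρ : RamondRep V) (c : ℂ) (j : ℤ) : V →ₗ[ℂ] V := c⁻¹ • ρ.H j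

lemma tt_E {i j k : ℤ} {v : V} (hv : v ∈ E ρ a c i k) : tt ρ c j v ∈ E ρ a c (i + j) k :=
  Submodule.smul_mem _ _ (H_E hv)

namespace Top
variable (h : Top ρ a c) {i : ℤ} {v : V} (hv : v ∈ E ρ a c i 0)
include h

lemma H_tt (j : ℤ) : ρ.H j v = c • tt ρ c j v := by
  simp [tt, smul_smul, mul_inv_cancel₀ h.cne]

include hv

lemma ttt (m n : ℤ) : tt ρ c m (tt ρ c n v) = tt ρ c (m + n) v := by
  simp only [tt, LinearMap.smul_apply, map_smul]
  rw [h.HHc hv, smul_smul, smul_smul]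
  congr 1
  field_simp [h.cne]

lemma tt0 : tt ρ c 0 v = v := by
  have := (mem_E.1 hv).2.1
  simp [tt, this, smul_smul, inv_mul_cancel₀ h.cne]

omit h hv in
lemma L_tt (m n : ℤ) : ρ.L m (tt ρ c n v) = tt ρ c n (ρ.L m v) + (n : ℂ) • tt ρ c (m + n) v := by
  have := ρ.rel_LH m n v
  simp only [tt, LinearMap.smul_apply, map_smul]
  rw [sub_eq_iff_eq_add.1 this]; module

omit hv

/-- the degree zero operators -/
noncomputable def DD (ρ : RamondRep V) (c : ℂ) (m : ℤ) : V →ₗ[ℂ] V := tt ρ c (-m) ∘ₗ ρ.L m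

omit h in
lemma DD_E {m k : ℤ} (hv : v ∈ E ρ a c i k) : DD ρ c m v ∈ E ρ a c i k := by
  have := tt_E (c := c) (j := -m) (L_E (m := m) hv)
  rwa [add_neg_cancel_right] at this

include hv
lemma tt_DD (m : ℤ) : tt ρ c m (DD ρ c m v) = ρ.L m v := by
  have h1 := L_E (m := m) hv
  simp only [DD, LinearMap.comp_apply]
  rw [h.ttt h1, add_neg_cancel, h.tt0 h1]

lemma L_tt' (m n : ℤ) : ρ.L m (tt ρ c n v) = tt ρ c (m + n) (DD ρ c m v + (n : ℂ) • v) := by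
  rw [L_tt, ← h.tt_DD hv, h.ttt (DD_E hv), map_add, map_smul, add_comm n m]

omit hv
lemma tt_inj {j : ℤ} {x y : V} (hx : x ∈ E ρ a c i 0) (hy : y ∈ E ρ a c i 0) (hxy : tt ρ c j x = tt ρ c j y) : x = y := by
  have := congrArg (tt ρ c (-j)) hxy
  rwa [h.ttt hx, h.ttt hy, neg_add_cancel, h.tt0 hx, h.tt0 hy] at this

lemma DD_rel {x : V} (hx : x ∈ E ρ a c i 0) (m n : ℤ) :
    DD ρ c m (DD ρ c n x) - DD ρ c n (DD ρ c m x) + (n : ℂ) • DD ρ c n x - (m : ℂ) • DD ρ c m x =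
      ((n : ℂ) - m) • DD ρ c (m + n) x := by
  have h1 := h.LL m n x
  have e : ∀ m n, ρ.L m (ρ.L n x) = tt ρ c (m + n) (DD ρ c m (DD ρ c n x) + (n : ℂ) • DD ρ c n x) := by
    intro m n
    rw [← h.tt_DD hx n, h.L_tt' (DD_E hx)]
  rw [e m n, e n m, add_comm n m, ← h.tt_DD hx (m + n), ← map_sub, ← map_smul (tt ρ c (m + n))] at h1
  have h2 := h.tt_inj (i := i) ?_ ?_ h1
  · rw [← h2]; abel
  · exact sub_mem (add_mem (DD_E (DD_E hx)) (Submodule.smul_mem _ _ (DD_E hx)))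
      (add_mem (DD_E (DD_E hx)) (Submodule.smul_mem _ _ (DD_E hx)))
  · exact Submodule.smul_mem _ _ (DD_E hx)

lemma DD0 {x : V} (hx : x ∈ E ρ a c 0 0) : DD ρ c 0 x = a • x := by
  have := (mem_E.1 hx).1
  simp only [DD, LinearMap.comp_apply, this, neg_zero, map_smul, Int.cast_zero, add_zero, h.tt0 hx]

lemma E0_ne : E ρ a c 0 0 ≠ ⊥ := by
  obtain ⟨i, hi⟩ := h.ne
  obtain ⟨v, hv, hv0⟩ := Submodule.exists_mem_ne_zero_of_ne_bot hi
  intro h0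
  have h1 := tt_E (c := c) (j := -i) hv
  rw [add_neg_cancel, h0, Submodule.mem_bot] at h1
  apply hv0
  apply h.tt_inj hv (zero_mem _) (j := -i)
  rw [h1, map_zero]

/-- the composite phi_p y_q -/
lemma phi_y {x : V} (hx : x ∈ E ρ a c 0 0) (p q j : ℤ) :
    tt ρ c (-p - j) (ρ.Gp p (ρ.Gm q (tt ρ c (j - q) x))) =
      (-2 : ℂ) • DD ρ c (p + q) x + (-2 * ((j : ℂ) - q) + ((p : ℂ) - q) * c) • x := by
  have h1 : tt ρ c (j - q) x ∈ E ρ a c (0 + (j - q)) 0 := tt_E hx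
  have h2 := h.GG p q (tt ρ c (j - q) x)
  rw [h.Gp0 h1, map_zero, add_zero] at h2
  rw [h2, h.L_tt' hx, h.H_tt, h.ttt hx, show p + q + (j - q) = p + j by ring]
  simp only [map_add, map_smul]
  rw [h.ttt hx, h.ttt (DD_E hx), show -p - j + (p + j) = 0 by ring, h.tt0 hx, h.tt0 (DD_E hx)]
  push_cast
  module

lemma Psi (h2 : Module.rank ℂ (E ρ a c 0 0) = 2) (j : ℤ) (hj : a + j ≠ 0) {x : V} (hx : x ∈ E ρ a c 0 0) (p q : ℤ) :
    (2 * (a + j)) • ((2 : ℂ) • DD ρ c (p + q) x + (2 * ((j : ℂ) - q) - ((p : ℂ) - q) * c) • x) =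
     (2 : ℂ) • DD ρ c p ((2 : ℂ) • DD ρ c q x + (2 * ((j : ℂ) - q) + q * c) • x) +
      (2 * (j : ℂ) - p * c) • ((2 : ℂ) • DD ρ c q x + (2 * ((j : ℂ) - q) + q * c) • x) := by
  set Y : ℤ → V →ₗ[ℂ] V := fun q => ρ.Gm q ∘ₗ tt ρ c (j - q) with hY
  have hYE : ∀ q, ∀ x ∈ E ρ a c 0 0, Y q x ∈ E ρ a c j (-1) := by
    intro q x hx
    have := Gm_E (m := q) (tt_E (c := c) (j := j - q) hx)
    rw [show 0 + (j - q) + q = j by ring, zero_sub] at this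
    exact this
  have hphi : ∀ p q, ∀ x ∈ E ρ a c 0 0, tt ρ c (-p - j) (ρ.Gp p (Y q x)) =
      (-2 : ℂ) • DD ρ c (p + q) x + (-2 * ((j : ℂ) - q) + ((p : ℂ) - q) * c) • x :=
    fun p q x hx => h.phi_y hx p q j
  have h00 : ∀ x ∈ E ρ a c 0 0, tt ρ c (-0 - j) (ρ.Gp 0 (Y 0 x)) = (-2 * (a + j)) • x := by
    intro x hx
    rw [hphi 0 0 x hx, add_zero, h.DD0 hx]
    push_cast; module
  have hne : (-2 * (a + j)) ≠ 0 := mul_ne_zero (by norm_num) hj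
  have fd : ∀ S : Submodule ℂ V, Module.rank ℂ S ≤ 2 → FiniteDimensional ℂ S := by
    intro S hS
    rw [FiniteDimensional, ← Module.rank_lt_aleph0_iff]
    exact hS.trans_lt (by exact_mod_cast Cardinal.natCast_lt_aleph0 (n := 2))
  have hsurj : ∀ w ∈ E ρ a c j (-1), ∃ x ∈ E ρ a c 0 0, Y 0 x = w := by
    have f1 := fd _ (rank_E (a := a) (c := c) h.hs 0 0)
    have f2 := fd _ (rank_E (a := a) (c := c) h.hs j (-1))
    let g : E ρ a c 0 0 →ₗ[ℂ] E ρ a c j (-1) := (Y 0).restrict (hYE 0)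
    have ginj : Function.Injective g := by
      rw [← LinearMap.ker_eq_bot, LinearMap.ker_eq_bot']
      rintro ⟨x, hx⟩ hgx
      have h3 : Y 0 x = 0 := congrArg Subtype.val hgx
      have h4 := h00 x hx
      rw [h3, map_zero, map_zero] at h4
      apply Subtype.ext
      exact (smul_eq_zero.1 h4.symm).resolve_left hne
    have r1 : Module.finrank ℂ (E ρ a c 0 0) = 2 := by
      rw [Module.finrank, h2]; simp
    have r2 : Module.finrank ℂ (E ρ a c j (-1)) ≤ 2 := by
      have := rank_E (a := a) (c := c) h.hs j (-1)
      rw [← Module.finrank_eq_rank] at this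
      exact_mod_cast this
    have r3 := LinearMap.finrank_le_finrank_of_injective ginj
    have gs := (LinearMap.injective_iff_surjective_of_finrank_eq_finrank (f := g) (by omega)).1 ginj
    intro w hw
    obtain ⟨x, hx⟩ := gs ⟨w, hw⟩
    exact ⟨x, x.2, congrArg Subtype.val hx⟩
  obtain ⟨z, hz, hzY⟩ := hsurj _ (hYE q x hx)
  have e1 := h00 z hz
  rw [hzY, hphi 0 q x hx] at e1
  have e2 := hphi p 0 z hz
  rw [hzY, hphi p q x hx, add_zero] at e2
  have e1' : (2 * (a + j)) • z = (2 : ℂ) • DD ρ c q x + (2 * ((j : ℂ) - q) + q * c) • x := by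
    rw [zero_add] at e1
    have := congrArg (fun v => -v) e1
    rw [show (2 * (a + j)) • z = -((-2 * (a + j)) • z) by module, ← this]
    push_cast; module
  rw [← e1', map_smul]
  have e2' := congrArg (fun v => (-(2 * (a + j))) • v) e2
  calc _ = (-(2 * (a + j))) • ((-2 : ℂ) • DD ρ c (p + q) x + (-2 * ((j : ℂ) - q) + ((p : ℂ) - q) * c) • x) := by module
    _ = _ := e2'
    _ = _ := by push_cast; module

lemma DD_add (h2 : Module.rank ℂ (E ρ a c 0 0) = 2) {x : V} (hx : x ∈ E ρ a c 0 0) (p q : ℤ) :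
    DD ρ c (p + q) x + a • x = DD ρ c p x + DD ρ c q x := by
  obtain ⟨j, hj, hj'⟩ : ∃ j : ℤ, a + j ≠ 0 ∧ a + ((j + 1 : ℤ) : ℂ) ≠ 0 := by
    by_cases h1 : a = 0
    · exact ⟨2, by rw [h1]; norm_num, by rw [h1]; norm_num⟩
    by_cases h2 : a = -1
    · exact ⟨2, by rw [h2]; norm_num, by rw [h2]; norm_num⟩
    · exact ⟨0, by simpa using h1, by
        intro h3; apply h2; push_cast at h3; linear_combination h3⟩
  have e1 := h.Psi h2 j hj hx p q
  have e2 := h.Psi h2 (j + 1) hj' hx p q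
  push_cast at e1 e2
  simp only [map_add, map_smul] at e1 e2
  have e3 := congrArg₂ (fun u v => (1 / 4 : ℂ) • (u - v)) e2 e1
  have e4 : DD ρ c (p + q) x + a • x - (DD ρ c p x + DD ρ c q x) = 0 := by
    rw [← sub_eq_zero] at e3
    rw [← e3]
    module
  exact sub_eq_zero.1 e4

theorem exists_u0 : ∃ (b : ℂ) (x : V), x ∈ E ρ a c 0 0 ∧ x ≠ 0 ∧ ∀ m : ℤ, DD ρ c m x = (a + b * m) • x := by
  have hr := rank_E (a := a) (c := c) h.hs 0 0
  by_cases h2 : Module.rank ℂ (E ρ a c 0 0) = 2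
  · obtain ⟨χ, x, hx, hx0, hχ⟩ := exists_eigvec hr h.E0_ne (DD ρ c 1) (fun v hv => DD_E hv)
    refine ⟨χ - a, x, hx, hx0, fun m => ?_⟩
    let f : ℤ →+ V := AddMonoidHom.mk' (fun p => DD ρ c p x - a • x) (by
      intro p q
      have := h.DD_add h2 hx p q
      rw [← eq_sub_iff_add_eq] at this
      simp only [this]; abel)
    have h3 := map_zsmul f m 1
    rw [smul_eq_mul, mul_one] at h3
    have h4 : DD ρ c m x - a • x = m • (DD ρ c 1 x - a • x) := h3
    rw [sub_eq_iff_eq_add] at h4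
    rw [h4, hχ, ← Int.cast_smul_eq_zsmul ℂ]
    module
  · have : FiniteDimensional ℂ (E ρ a c 0 0) := by
      rw [FiniteDimensional, ← Module.rank_lt_aleph0_iff]
      exact hr.trans_lt (by exact_mod_cast Cardinal.natCast_lt_aleph0 (n := 2))
    rw [← Module.finrank_eq_rank] at hr h2
    have hf : Module.finrank ℂ (E ρ a c 0 0) ≤ 1 := by
      have h3 : Module.finrank ℂ (E ρ a c 0 0) ≤ 2 := by exact_mod_cast hr
      have h4 : Module.finrank ℂ (E ρ a c 0 0) ≠ 2 := by exact_mod_cast h2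
      omega
    obtain ⟨⟨x, hx⟩, hsp⟩ := finrank_le_one_iff.1 hf
    have hsp' : ∀ v ∈ E ρ a c 0 0, ∃ r : ℂ, v = r • x := by
      intro v hv
      obtain ⟨r, hr⟩ := hsp ⟨v, hv⟩
      exact ⟨r, (congrArg Subtype.val hr).symm⟩
    have hx0 : x ≠ 0 := by
      obtain ⟨v, hv, hv0⟩ := Submodule.exists_mem_ne_zero_of_ne_bot h.E0_ne
      rintro rfl
      obtain ⟨r, hr⟩ := hsp' v hv
      exact hv0 (by rw [hr, smul_zero])
    choose f hf using fun m : ℤ => hsp' _ (DD_E (m := m) hx)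
    have h0 : f 0 = a := by
      have := hf 0
      rw [h.DD0 hx] at this
      exact (smul_left_injective ℂ hx0 this).symm
    refine ⟨f 1 - f 0, x, hx, hx0, fun m => ?_⟩
    rw [hf m, solve_rec f ?_ m, h0]
    intro m n
    have := h.DD_rel hx m n
    simp only [hf, map_smul] at this
    apply smul_left_injective ℂ hx0
    simp only
    rw [← sub_eq_zero] at this ⊢
    rw [← this]
    module

end Top

/-- A sequence in the top layer. -/
structure WSeq (ρ : RamondRep V) (a b c : ℂ) (w : ℤ → V) : Prop where
  top : Top ρ a c
  mem : ∀ i, w i ∈ E ρ a c i 0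
  ne : ∀ i, w i ≠ 0
  L : ∀ m i : ℤ, ρ.L m (w i) = (a + i + b * m) • w (m + i)
  H : ∀ m i : ℤ, ρ.H m (w i) = c • w (m + i)

theorem exists_wseq (h : Top ρ a c) : ∃ b w, WSeq ρ a b c w := by
  obtain ⟨b, x, hx, hx0, hD⟩ := h.exists_u0
  refine ⟨b, fun j => tt ρ c j x, h, fun i => ?_, fun i h0 => hx0 ?_, fun m i => ?_, fun m i => ?_⟩
  · have := tt_E (c := c) (j := i) hx
    rwa [zero_add] at this
  · apply h.tt_inj hx (zero_mem _) (j := i)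
    rw [h0, map_zero]
  · rw [h.L_tt' hx, hD, ← add_smul, map_smul]
    congr 1; ring
  · rw [h.H_tt, h.ttt hx]

end Ramond15

namespace Ramond15

variable {V : Type} [AddCommGroup V] [Module ℂ V] {ρ : RamondRep V} {a b c : ℂ} {w : ℤ → V}

namespace WSeq
variable (s : WSeq ρ a b c w)
include s

lemma y_mem (q j : ℤ) : ρ.Gm q (w (j - q)) ∈ E ρ a c j (-1) := by
  have := Gm_E (m := q) (s.mem (j - q))
  rwa [sub_add_cancel, zero_sub] at this

lemma Gp_y (p q j : ℤ) : ρ.Gp p (ρ.Gm q (w (j - q))) =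
    (-2 * (a + j) + (c - 2 * b) * p + (2 - 2 * b - c) * q) • w (p + j) := by
  have h2 := s.top.GG p q (w (j - q))
  rw [s.top.Gp0 (s.mem _), map_zero, add_zero, s.L, s.H, show p + q + (j - q) = p + j by ring] at h2
  rw [h2]
  push_cast
  module

lemma gamma_ne : 2 - 2 * b - c ≠ 0 := by
  intro hg
  have hY : ∀ q j : ℤ, ρ.Gm q (w (j - q)) = ρ.Gm 0 (w j) := by
    intro q j
    have h0 := s.y_mem 0 j
    have h1 := fun p => s.Gp_y p 0 j
    rw [sub_zero] at h0
    simp only [sub_zero] at h1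
    apply s.top.inj1 (s.y_mem q j) h0
    intro p
    rw [s.Gp_y, h1, hg, zero_mul, zero_mul]
  have hY' : ∀ q i : ℤ, ρ.Gm q (w i) = ρ.Gm 0 (w (q + i)) := by
    intro q i
    have := hY q (q + i)
    rwa [show q + i - q = i by ring] at this
  set S : Set V := Set.range w ∪ Set.range (fun j => ρ.Gm 0 (w j)) with hS
  have mw : ∀ i, w i ∈ Submodule.span ℂ S := fun i => Submodule.subset_span (Or.inl ⟨i, rfl⟩)
  have my : ∀ i, ρ.Gm 0 (w i) ∈ Submodule.span ℂ S := fun i => Submodule.subset_span (Or.inr ⟨i, rfl⟩)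
  have hev : ∀ i, w i ∈ ρ.even := by
    intro i
    have := (mem_E.1 (s.mem i)).2.2
    simpa [par] using this
  have hodd : ∀ i, ρ.Gm 0 (w i) ∈ ρ.odd := fun i => ρ.Gm_even 0 _ (hev i)
  have := span_simple s.top.hs.simple S ?_ ?_ ?_ ?_ ?_
  · rcases this with h1 | h1
    · exact s.ne 0 (h1 _ (Or.inl ⟨0, rfl⟩))
    · refine two_fam_false s.top.hs a w (fun j => ρ.Gm 0 (w j)) (fun i => ⟨hev i, (mem_E.1 (s.mem i)).1⟩)
        (fun i => ⟨hodd i, ?_⟩) h1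
      have := s.y_mem 0 i
      rw [sub_zero] at this
      exact (mem_E.1 this).1
  · rintro v (⟨i, rfl⟩ | ⟨i, rfl⟩)
    · exact Or.inl (hev i)
    · exact Or.inr (hodd i)
  · rintro m v (⟨i, rfl⟩ | ⟨i, rfl⟩)
    · rw [s.L]; exact Submodule.smul_mem _ _ (mw _)
    · have := ρ.rel_LGm m 0 (w i)
      rw [sub_eq_iff_eq_add, zero_add, hY' m, s.L, map_smul] at this
      simp only
      rw [this]
      exact add_mem (Submodule.smul_mem _ _ (my _)) (Submodule.smul_mem _ _ (my _))
  · rintro m v (⟨i, rfl⟩ | ⟨i, rfl⟩)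
    · rw [s.H]; exact Submodule.smul_mem _ _ (mw _)
    · have := ρ.rel_HGm m 0 (w i)
      rw [sub_eq_iff_eq_add, add_zero, hY' m, s.H, map_smul] at this
      simp only
      rw [this]
      exact add_mem (neg_mem (my _)) (Submodule.smul_mem _ _ (my _))
  · rintro m v (⟨i, rfl⟩ | ⟨i, rfl⟩)
    · rw [s.top.Gp0 (s.mem i)]; exact zero_mem _
    · have := s.Gp_y m 0 i
      rw [sub_zero] at this
      simp only
      rw [this]
      exact Submodule.smul_mem _ _ (mw _)
  · rintro m v (⟨i, rfl⟩ | ⟨i, rfl⟩)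
    · rw [hY']; exact my _
    · simp only
      rw [← hY m i]
      have : ρ.Gm m (ρ.Gm m (w (i - m))) = 0 := GpGp0 (ρ := flip ρ) m _
      rw [this]; exact zero_mem _

theorem core : ∃ u, Core (pshift ρ) a (b + 1 / 2) (c - 1) u := by
  have hg := s.gamma_ne
  set γ : ℂ := 2 - 2 * b - c with hγ
  set u : ℤ → V := fun j => γ⁻¹ • (ρ.Gm 1 (w (j - 1)) - ρ.Gm 0 (w (j - 0))) with hu
  have umem : ∀ j, u j ∈ E ρ a c j (-1) := fun j =>
    Submodule.smul_mem _ _ (sub_mem (s.y_mem 1 j) (s.y_mem 0 j))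
  have Gpu : ∀ p j : ℤ, ρ.Gp p (u j) = w (p + j) := by
    intro p j
    simp only [hu]
    rw [map_smul, map_sub, s.Gp_y, s.Gp_y, ← sub_smul, smul_smul, ← hγ]
    have : γ⁻¹ * (-2 * (a + (j : ℂ)) + (c - 2 * b) * p + γ * ((1 : ℤ) : ℂ) -
      (-2 * (a + (j : ℂ)) + (c - 2 * b) * p + γ * ((0 : ℤ) : ℂ))) = 1 := by
      push_cast
      field_simp
      ring
    rw [this, one_smul]
  have uL : ∀ m j : ℤ, ρ.L m (u j) = (a + j + (b + 1 / 2) * m) • u (m + j) := by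
    intro m j
    have e1 := L_E (m := m) (umem j)
    rw [add_comm] at e1
    apply s.top.inj1 e1 (Submodule.smul_mem _ _ (umem _))
    intro p
    have h1 := ρ.rel_LGp m p (u j)
    rw [Gpu, Gpu, s.L, sub_eq_iff_eq_add, ← sub_eq_iff_eq_add'] at h1
    rw [← h1, map_smul, Gpu, show m + (p + j) = p + (m + j) by ring, show p + m + j = p + (m + j) by ring]
    push_cast; module
  have uH : ∀ m j : ℤ, ρ.H m (u j) = (c - 1) • u (m + j) := by
    intro m j
    have e1 := H_E (m := m) (umem j)
    rw [add_comm] at e1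
    apply s.top.inj1 e1 (Submodule.smul_mem _ _ (umem _))
    intro p
    have h1 := ρ.rel_HGp m p (u j)
    rw [Gpu, Gpu, s.H, sub_eq_iff_eq_add, ← sub_eq_iff_eq_add'] at h1
    rw [← h1, map_smul, Gpu, show m + (p + j) = p + (m + j) by ring, show m + p + j = p + (m + j) by ring]
    push_cast; module
  have yu : ∀ q j : ℤ, ρ.Gm q (w (j - q)) = ρ.Gm 0 (w j) + ((q : ℂ) * γ) • u j := by
    intro q j
    have h0 := s.y_mem 0 j
    have h1 := fun p => s.Gp_y p 0 j
    rw [sub_zero] at h0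
    simp only [sub_zero] at h1
    apply s.top.inj1 (s.y_mem q j) (add_mem h0 (Submodule.smul_mem _ _ (umem j)))
    intro p
    rw [s.Gp_y, map_add, map_smul, h1, Gpu, ← add_smul, ← hγ]
    congr 1
    push_cast; ring
  refine ⟨u, s.top.c0, fun i => ?_, fun i h0 => ?_, uL, uH, fun r i => ?_, fun r i => ?_⟩
  · have := (mem_E.1 (umem i)).2.2
    have h2 : u i ∈ ρ.odd := by simpa [par] using this
    exact h2
  · have := Gpu 0 i
    rw [h0, map_zero] at this
    exact s.ne _ this.symm
  · change ρ.Gp r (u i) = ρ.Gp 0 (u (r + i))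
    rw [Gpu, Gpu, zero_add]
  · change ρ.Gm r (u i) = ρ.Gm 0 (u (r + i))
    have e1 := Gm_E (m := r) (umem i)
    have e2 := Gm_E (m := 0) (umem (r + i))
    rw [add_comm i r] at e1
    rw [add_zero] at e2
    refine s.top.inj2 e1 e2 fun p => ?_
    have h1 := s.top.GG p r (u i)
    have h2 := s.top.GG p 0 (u (r + i))
    rw [← eq_sub_iff_add_eq] at h1 h2
    rw [h1, h2, Gpu, Gpu, uL, uL, uH, uH, add_zero, show p + r + i = p + (r + i) by ring]
    have h3 := yu r (p + (r + i))
    rw [show p + (r + i) - r = p + i by ring] at h3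
    rw [h3, hγ]
    push_cast
    module

end WSeq

theorem main {ρ : RamondRep V} (hs : Hyp ρ) : ∃ (σ : RamondRep V) (a b c : ℂ) (u : ℤ → V),
    (σ = ρ ∨ σ = pshift ρ) ∧ Core σ a b c u := by
  obtain ⟨σ, a, c, hσ, hT⟩ := exists_top hs
  obtain ⟨b, w, hw⟩ := exists_wseq hT
  obtain ⟨u, hu⟩ := hw.core
  rcases hσ with rfl | rfl | rfl | rfl
  · exact ⟨_, _, _, _, u, Or.inr rfl, hu⟩
  · exact ⟨_, _, _, _, u, Or.inl rfl, hu⟩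
  · refine ⟨_, _, _, _, u, Or.inr ?_, hu.flip⟩
    exact flip_flip (pshift ρ)
  · refine ⟨_, _, _, _, u, Or.inl ?_, hu.flip⟩
    exact flip_flip ρ

end Ramond15

/-- any nontrivial simple cuspidal `𝔤`-module of length 2 (all graded
weight multiplicities `≤ 2`, with equality attained somewhere) is isomorphic,
either as a graded `𝔤`-module or after interchanging the two parities, to
`R_{a,b,c}` for some `a, b, c ∈ ℂ` with `2b + c ≠ 2` and `2b - c ≠ 2`. -/
theorem stmt15 {V : Type} [AddCommGroup V] [Module ℂ V] (ρ : RamondRep V)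
    (hsimple : ρ.IsSimple) (hweight : ρ.IsWeight)
    (hbd : ∀ (μ : ℂ) (τ : ZMod 2), Module.rank ℂ ↥(ρ.wt μ ⊓ ρ.parity τ) ≤ 2)
    (heq : ∃ (μ : ℂ) (τ : ZMod 2), Module.rank ℂ ↥(ρ.wt μ ⊓ ρ.parity τ) = 2) :
    ∃ (a b c : ℂ), 2 * b + c ≠ 2 ∧ 2 * b - c ≠ 2 ∧
      ∃ (W : Type) (_ : AddCommGroup W) (_ : Module ℂ W)
        (σ : RamondRep W) (u upm up um : ℤ → W), σ.IsRabc u upm up um a b c ∧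
        ∃ (e : W ≃ₗ[ℂ] V) (ε : Bool),
          (∀ (m : ℤ) (w : W), e (σ.L m w) = ρ.L m (e w)) ∧
          (∀ (m : ℤ) (w : W), e (σ.H m w) = ρ.H m (e w)) ∧
          (∀ (m : ℤ) (w : W), e (σ.Gp m w) = ρ.Gp m (e w)) ∧
          (∀ (m : ℤ) (w : W), e (σ.Gm m w) = ρ.Gm m (e w)) ∧
          (∀ w ∈ σ.even, e w ∈ (if ε then ρ.odd else ρ.even)) ∧
          (∀ w ∈ σ.odd, e w ∈ (if ε then ρ.even else ρ.odd)) := by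
  have hs : Ramond15.Hyp ρ := ⟨hsimple, hweight, hbd, heq⟩
  obtain ⟨σ, a, b, c, u, hσ, hc⟩ := Ramond15.main hs
  rcases hσ with rfl | rfl
  · exact ⟨a, b, c, hc.cond2 hs, hc.cond hs, V, inferInstance, inferInstance, σ, _, _, _, _,
      hc.isRabc hs, LinearEquiv.refl ℂ V, false, fun _ _ => rfl, fun _ _ => rfl, fun _ _ => rfl,
      fun _ _ => rfl, fun _ h => h, fun _ h => h⟩
  · exact ⟨a, b, c, hc.cond2 hs.pshift, hc.cond hs.pshift, V, inferInstance, inferInstance,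
      Ramond15.pshift ρ, _, _, _, _,
      hc.isRabc hs.pshift, LinearEquiv.refl ℂ V, true, fun _ _ => rfl, fun _ _ => rfl,
      fun _ _ => rfl, fun _ _ => rfl, fun _ h => h, fun _ h => h⟩
end

section
/- For a, b, c ∈ ℂ, the 𝔤-module R_{a,b,c} is simple if and only if 2b + c ≠ 2 and 2b − c ≠ 2. -/
open Submodule

/-- A subspace spanned by even and odd vectors is graded. -/
theorem RamondRep.graded_of_span {V : Type} [AddCommGroup V] [Module ℂ V] (ρ : RamondRep V)
    (A B : Set V) (hA : A ⊆ ρ.even) (hB : B ⊆ ρ.odd) :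
    span ℂ (A ∪ B) = (span ℂ (A ∪ B) ⊓ ρ.even) ⊔ (span ℂ (A ∪ B) ⊓ ρ.odd) := by
  apply le_antisymm
  · rw [span_le]
    rintro x (hx | hx)
    · exact mem_sup_left ⟨subset_span (Or.inl hx), hA hx⟩
    · exact mem_sup_right ⟨subset_span (Or.inr hx), hB hx⟩
  · exact sup_le inf_le_left inf_le_left

/-- Invariance of a span can be tested on generators. -/
theorem RamondRep.submod_of_span {V : Type} [AddCommGroup V] [Module ℂ V] (ρ : RamondRep V)
    (A : Set V)
    (hA : ∀ x ∈ A, ∀ m : ℤ, ρ.L m x ∈ span ℂ A ∧ ρ.H m x ∈ span ℂ A ∧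
      ρ.Gp m x ∈ span ℂ A ∧ ρ.Gm m x ∈ span ℂ A) :
    ρ.IsSubmod (span ℂ A) := by
  have key : ∀ f : V →ₗ[ℂ] V, (∀ x ∈ A, f x ∈ span ℂ A) → ∀ v ∈ span ℂ A, f v ∈ span ℂ A := by
    intro f hf
    have : span ℂ A ≤ (span ℂ A).comap f := span_le.2 hf
    exact this
  exact ⟨fun m => key _ fun x hx => (hA x hx m).1, fun m => key _ fun x hx => (hA x hx m).2.1,
    fun m => key _ fun x hx => (hA x hx m).2.2.1, fun m => key _ fun x hx => (hA x hx m).2.2.2⟩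

/-- the `𝔤`-module `R_{a,b,c}` is simple if and only if
`2b + c ≠ 2` and `2b - c ≠ 2`. -/
theorem stmt16 (a b c : ℂ) {W : Type} [AddCommGroup W] [Module ℂ W]
    (σ : RamondRep W) (u upm up um : ℤ → W)
    (hRabc : σ.IsRabc u upm up um a b c) :
    σ.IsSimple ↔ (2 * b + c ≠ 2 ∧ 2 * b - c ≠ 2) := by
  obtain ⟨-, hli, hsp, hev, hod, Lu, Lup, Lum, Lupm, Hu, Hup, Hum, Hupm, Gpu, Gmu, Gpup, Gmum,
    Gpum, Gmup, Gmupm, Gpupm⟩ := hRabc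
  have hsp' : ⊤ ≤ span ℂ (Set.range (fun x : (Bool × Bool) × ℤ =>
    if x.1.1 then (if x.1.2 then um x.2 else up x.2)
    else (if x.1.2 then upm x.2 else u x.2))) := by
    rw [← hsp]
    apply span_mono
    rintro x (((⟨i, rfl⟩ | ⟨i, rfl⟩) | ⟨i, rfl⟩) | ⟨i, rfl⟩)
    · exact ⟨((false, false), i), by simp⟩
    · exact ⟨((false, true), i), by simp⟩
    · exact ⟨((true, false), i), by simp⟩
    · exact ⟨((true, true), i), by simp⟩
  obtain ⟨B, hB⟩ : ∃ B : Module.Basis ((Bool × Bool) × ℤ) ℂ W, ∀ x, B x =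
    if x.1.1 then (if x.1.2 then um x.2 else up x.2)
    else (if x.1.2 then upm x.2 else u x.2) :=
    ⟨Module.Basis.mk hli hsp', fun x => by rw [Module.Basis.mk_apply]⟩
  have Bu : ∀ i, u i = B ((false, false), i) := fun i => by simp [hB]
  have Bupm : ∀ i, upm i = B ((false, true), i) := fun i => by simp [hB]
  have Bup : ∀ i, up i = B ((true, false), i) := fun i => by simp [hB]
  have Bum : ∀ i, um i = B ((true, true), i) := fun i => by simp [hB]
  have evu : ∀ i, u i ∈ σ.even := fun i => hev ▸ subset_span (Or.inl ⟨i, rfl⟩)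
  have evupm : ∀ i, upm i ∈ σ.even := fun i => hev ▸ subset_span (Or.inr ⟨i, rfl⟩)
  have odup : ∀ i, up i ∈ σ.odd := fun i => hod ▸ subset_span (Or.inl ⟨i, rfl⟩)
  have odum : ∀ i, um i ∈ σ.odd := fun i => hod ▸ subset_span (Or.inr ⟨i, rfl⟩)
  constructor
  · rintro ⟨-, hs⟩
    constructor
    · intro hβ
      set x : ℤ → W := fun j => upm j + (2 * a + 2 * (j : ℂ)) • u j with hx
      have hxm : ∀ j, x j ∈ span ℂ (Set.range x ∪ Set.range up) :=
        fun j => subset_span (Or.inl ⟨j, rfl⟩)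
      have hupm : ∀ j, up j ∈ span ℂ (Set.range x ∪ Set.range up) :=
        fun j => subset_span (Or.inr ⟨j, rfl⟩)
      have hc : c = 2 - 2 * b := by linear_combination hβ
      have hsub : σ.IsSubmod (span ℂ (Set.range x ∪ Set.range up)) := by
        apply RamondRep.submod_of_span
        rintro y (⟨i, rfl⟩ | ⟨i, rfl⟩) m
        · refine ⟨?_, ?_, ?_, ?_⟩
          · have : σ.L m (x i) = (a + (i : ℂ) + (b - 1) * (m : ℂ)) • x (m + i) := by
              simp only [hx, map_add, map_smul, Lupm, Lu, add_comm i m, hc]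
              push_cast
              module
            rw [this]; exact smul_mem _ _ (hxm _)
          · have : σ.H m (x i) = c • x (m + i) := by
              simp only [hx, map_add, map_smul, Hupm, Hu, hc]
              push_cast
              module
            rw [this]; exact smul_mem _ _ (hxm _)
          · have : σ.Gp m (x i) = ((2 * b - c - 2) * (m : ℂ) + 2 * a + 2 * i) • up (m + i) := by
              simp only [hx, map_add, map_smul, Gpupm, Gpu]
              module
            rw [this]; exact smul_mem _ _ (hupm _)
          · have : σ.Gm m (x i) = 0 := by
              simp only [hx, map_add, map_smul, Gmupm, Gmu, hc]
              module
            rw [this]; exact zero_mem _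
        · refine ⟨?_, ?_, ?_, ?_⟩
          · rw [Lup]; exact smul_mem _ _ (hupm _)
          · rw [Hup]; exact smul_mem _ _ (hupm _)
          · rw [Gpup]; exact zero_mem _
          · have : σ.Gm m (up i) = (-1 : ℂ) • x (m + i) := by
              simp only [hx, Gmup, add_comm i m, hc]
              push_cast
              module
            rw [this]; exact smul_mem _ _ (hxm _)
      have hgr := σ.graded_of_span (Set.range x) (Set.range up)
        (by rintro _ ⟨i, rfl⟩; exact add_mem (evupm i) (smul_mem _ _ (evu i)))
        (by rintro _ ⟨i, rfl⟩; exact odup i)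
      rcases hs _ ⟨hsub, hgr⟩ with h | h
      · have := hupm 0
        rw [h, mem_bot, Bup] at this
        exact B.ne_zero _ this
      · have hle : span ℂ (Set.range x ∪ Set.range up) ≤
            LinearMap.ker (B.coord ((true, true), 0)) := by
          rw [span_le]
          rintro _ (⟨i, rfl⟩ | ⟨i, rfl⟩) <;>
            simp [hx, Bu, Bupm, Bup]
        rw [h] at hle
        have := hle (mem_top (x := um 0))
        simp [Bum] at this
    · intro hα
      have hxm : ∀ j, upm j ∈ span ℂ (Set.range upm ∪ Set.range um) :=
        fun j => subset_span (Or.inl ⟨j, rfl⟩)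
      have humm : ∀ j, um j ∈ span ℂ (Set.range upm ∪ Set.range um) :=
        fun j => subset_span (Or.inr ⟨j, rfl⟩)
      have hc : c = 2 * b - 2 := by linear_combination -hα
      have hsub : σ.IsSubmod (span ℂ (Set.range upm ∪ Set.range um)) := by
        apply RamondRep.submod_of_span
        rintro y (⟨i, rfl⟩ | ⟨i, rfl⟩) m
        · refine ⟨?_, ?_, ?_, ?_⟩
          · have : σ.L m (upm i) = (a + (i : ℂ) + (b - 1) * (m : ℂ)) • upm (m + i) := by
              rw [Lupm, hc]
              module
            rw [this]; exact smul_mem _ _ (hxm _)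
          · have : σ.H m (upm i) = c • upm (m + i) := by
              rw [Hupm, hc]
              module
            rw [this]; exact smul_mem _ _ (hxm _)
          · have : σ.Gp m (upm i) = 0 := by
              rw [Gpupm, hc]
              module
            rw [this]; exact zero_mem _
          · rw [Gmupm]; exact smul_mem _ _ (humm _)
        · refine ⟨?_, ?_, ?_, ?_⟩
          · rw [Lum]; exact smul_mem _ _ (humm _)
          · rw [Hum]; exact smul_mem _ _ (humm _)
          · have : σ.Gp m (um i) = upm (i + m) := by
              rw [Gpum, hc]
              module
            rw [this]; exact hxm _
          · rw [Gmum]; exact zero_mem _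
      have hgr := σ.graded_of_span (Set.range upm) (Set.range um)
        (by rintro _ ⟨i, rfl⟩; exact evupm i)
        (by rintro _ ⟨i, rfl⟩; exact odum i)
      rcases hs _ ⟨hsub, hgr⟩ with h | h
      · have := humm 0
        rw [h, mem_bot, Bum] at this
        exact B.ne_zero _ this
      · have hle : span ℂ (Set.range upm ∪ Set.range um) ≤
            LinearMap.ker (B.coord ((false, false), 0)) := by
          rw [span_le]
          rintro _ (⟨i, rfl⟩ | ⟨i, rfl⟩) <;>
            simp [Bum, Bupm]
        rw [h] at hle
        have := hle (mem_top (x := u 0))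
        simp [Bu] at this
  · rintro ⟨hβ, hα⟩
    refine ⟨fun ht => ?_, ?_⟩
    · have := (ht 0 (u 0)).2.2.1
      rw [Gpu, Bup] at this
      exact B.ne_zero _ this
    rintro S ⟨⟨SL, SH, SGp, SGm⟩, -⟩
    have hα' : 2 * b - c - 2 ≠ 0 := sub_ne_zero.2 hα
    have hβ' : 2 * b + c - 2 ≠ 0 := sub_ne_zero.2 hβ
    -- a nonzero multiple can be cancelled
    have cancel : ∀ {k : ℂ} {w : W}, k ≠ 0 → k • w ∈ S → w ∈ S :=
      fun hk h => (S.smul_mem_iff hk).1 h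
    rcases eq_or_ne S ⊥ with h0 | h0
    · exact Or.inl h0
    right
    -- it is enough to find one `up j`
    have final : ∀ j, up j ∈ S → S = ⊤ := by
      intro j hj
      have allup : ∀ n, up n ∈ S := by
        intro n
        by_cases hc1 : c + 1 = 0
        · have hc : c = -1 := by linear_combination hc1
          have step : ∀ j n : ℤ, up j ∈ S →
              2 * a + 2 * (j : ℂ) + (2 * b - c - 2) * ((n : ℂ) - j) ≠ 0 → up n ∈ S := by
            intro j n hj hne
            have h1 := SL (n - j) _ hj
            rw [Lup, sub_add_cancel] at h1
            refine cancel ?_ h1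
            intro h
            apply hne
            push_cast at h
            rw [hc]
            linear_combination 2 * h
          by_cases hne : 2 * a + 2 * (j : ℂ) + (2 * b - c - 2) * ((n : ℂ) - j) = 0
          · obtain ⟨t, ht0, htn⟩ : ∃ t : ℤ, t ≠ 0 ∧ t ≠ n - j := by
              by_cases h : n - j = 1
              · exact ⟨2, by norm_num, by omega⟩
              · exact ⟨1, by norm_num, by omega⟩
            have ht0' : (t : ℂ) ≠ 0 := by exact_mod_cast ht0
            have htn' : (t : ℂ) - ((n : ℂ) - j) ≠ 0 := by
              rw [sub_ne_zero]; exact_mod_cast htn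
            refine step (j + t) n (step j (j + t) hj ?_) ?_
            · intro h
              apply mul_ne_zero hα' htn'
              push_cast at h
              linear_combination h - hne
            · intro h
              apply mul_ne_zero hβ' ht0'
              push_cast at h
              linear_combination hne - h + 2 * t * hc
          · exact step j n hj hne
        · have h1 := SH (n - j) _ hj
          rw [Hup, sub_add_cancel] at h1
          exact cancel hc1 h1
      have allu : ∀ n, u n ∈ S := by
        intro n
        have h0 := SGm 0 _ (allup n)
        have h1 := SGm 1 _ (allup (n - 1))
        rw [Gmup] at h0 h1
        have e1 : 1 + (n - 1) = n := by ring
        have e2 : n - 1 + 1 = n := by ring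
        rw [e1, e2] at h1
        rw [zero_add, add_zero] at h0
        have h2 := sub_mem h0 h1
        refine cancel hβ' ?_
        convert h2 using 1
        push_cast
        module
      have allum : ∀ n, um n ∈ S := by
        intro n
        have := SGm 0 _ (allu n)
        rwa [Gmu, zero_add] at this
      have allupm : ∀ n, upm n ∈ S := by
        intro n
        have := SGp 0 _ (allum n)
        rw [Gpum, add_zero] at this
        convert this using 1
        simp
      rw [eq_top_iff, ← hsp, span_le]
      rintro x (((⟨i, rfl⟩ | ⟨i, rfl⟩) | ⟨i, rfl⟩) | ⟨i, rfl⟩)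
      · exact allu i
      · exact allupm i
      · exact allup i
      · exact allum i
    -- a nonzero even weight vector is enough
    have fromEven : ∀ (p q : ℂ) (i : ℤ), p • u i + q • upm i ∈ S → (p ≠ 0 ∨ q ≠ 0) → S = ⊤ := by
      intro p q i hS hpq
      have hr : ∀ r : ℤ, (p + q * ((2 * b - c - 2) * r)) • up (r + i) ∈ S := by
        intro r
        have := SGp r _ hS
        rw [map_add, map_smul, map_smul, Gpu, Gpupm, smul_smul, ← add_smul] at this
        exact this
      by_cases hp : p = 0
      · have hq : q ≠ 0 := by tauto
        refine final _ (cancel ?_ (hr 1))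
        simp [hp, hq, hα']
      · refine final _ (cancel ?_ (hr 0))
        simpa using hp
    have hL0 : ∀ y, σ.L 0 (B y) = (a + (y.2 : ℂ)) • B y := by
      rintro ⟨⟨_ | _, _ | _⟩, j⟩
      · rw [← Bu, Lu]; simp
      · rw [← Bupm, Lupm]; simp
      · rw [← Bup, Lup]; simp
      · rw [← Bum, Lum]; simp
    have hcoord : ∀ w y, B.repr (σ.L 0 w) y = (a + (y.2 : ℂ)) * B.repr w y := by
      intro w y
      have : B.coord y ∘ₗ σ.L 0 = (a + (y.2 : ℂ)) • B.coord y := by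
        apply B.ext
        intro z
        by_cases hzy : z = y
        · subst hzy
          simp [hL0]
        · simp [hL0, hzy]
      simpa using LinearMap.congr_fun this w
    -- choose a nonzero vector of minimal support
    obtain ⟨w, ⟨hwS, hw0⟩, hmin⟩ := exists_minimalFor_of_wellFoundedLT
      (fun w : W => w ∈ S ∧ w ≠ 0) (fun w => (B.repr w).support.card)
      (Submodule.exists_mem_ne_zero_of_ne_bot h0)
    obtain ⟨y₀, hy₀⟩ : ∃ y, B.repr w y ≠ 0 := by
      by_contra hcon
      push Not at hcon
      apply hw0
      apply B.ext_elem
      simpa using hcon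
    obtain ⟨s₀, i⟩ := y₀
    have hzero : ∀ s j, j ≠ i → B.repr w (s, j) = 0 := by
      intro s j hj
      by_contra hne
      have hij : (j : ℂ) - i ≠ 0 := by
        rw [sub_ne_zero]; exact_mod_cast hj
      obtain ⟨w', hw'⟩ : ∃ w', w' = σ.L 0 w - (a + (i : ℂ)) • w := ⟨_, rfl⟩
      have hc' : ∀ y, B.repr w' y = ((y.2 : ℂ) - i) * B.repr w y := by
        intro y
        rw [hw', map_sub, Finsupp.sub_apply, hcoord, map_smul, Finsupp.smul_apply, smul_eq_mul]
        ring
      have hw'S : w' ∈ S := hw' ▸ sub_mem (SL 0 _ hwS) (S.smul_mem _ hwS)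
      have hw'0 : w' ≠ 0 := by
        intro h
        have h1 := hc' (s, j)
        rw [h] at h1
        simp only [map_zero, Finsupp.coe_zero, Pi.zero_apply] at h1
        exact mul_ne_zero hij hne h1.symm
      have hlt : (B.repr w').support.card < (B.repr w).support.card := by
        apply Finset.card_lt_card
        rw [Finset.ssubset_iff_of_subset]
        · exact ⟨(s₀, i), Finsupp.mem_support_iff.2 hy₀, by simp [hc']⟩
        · intro y hy
          rw [Finsupp.mem_support_iff, hc'] at hy
          exact Finsupp.mem_support_iff.2 (right_ne_zero_of_mul hy)
      exact absurd (hmin ⟨hw'S, hw'0⟩ hlt.le) (not_le.2 hlt)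
    obtain ⟨p, hp⟩ : ∃ p, p = B.repr w ((false, false), i) := ⟨_, rfl⟩
    obtain ⟨q, hq⟩ : ∃ p, p = B.repr w ((false, true), i) := ⟨_, rfl⟩
    obtain ⟨r, hr⟩ : ∃ p, p = B.repr w ((true, false), i) := ⟨_, rfl⟩
    obtain ⟨s, hs⟩ : ∃ p, p = B.repr w ((true, true), i) := ⟨_, rfl⟩
    have hw : w = p • u i + q • upm i + r • up i + s • um i := by
      apply B.ext_elem
      rintro ⟨⟨_ | _, _ | _⟩, j⟩ <;> by_cases hj : j = i <;>
        simp [Bu, Bupm, Bup, Bum, hj, Finsupp.single_apply, hzero, hp, hq, hr, hs, Ne.symm]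
      all_goals grind
    have H1 : r • up i - s • um i ∈ S := by
      have h := sub_mem (SH 0 _ hwS) (S.smul_mem c hwS)
      convert h using 1
      rw [hw]
      simp only [map_add, map_smul, Hu, Hup, Hum, Hupm, zero_add]
      push_cast
      module
    have H2 : r • up i + s • um i ∈ S := by
      have h := sub_mem (SH 0 _ H1) (S.smul_mem c H1)
      convert h using 1
      simp only [map_sub, map_smul, Hup, Hum, zero_add]
      module
    by_cases hr0 : r = 0
    · by_cases hs0 : s = 0
      · subst hr0 hs0
        refine fromEven p q i ?_ ?_
        · rw [hw] at hwS
          simpa using hwS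
        · by_contra hcon
          push Not at hcon
          apply hw0
          rw [hw, hcon.1, hcon.2]
          simp
      · have h1 : um i ∈ S := by
          refine cancel hs0 ?_
          simpa [hr0] using H2
        refine fromEven 0 1 i ?_ (by simp)
        have := SGp 0 _ h1
        rw [Gpum, add_zero] at this
        convert this using 1
        simp
    · refine final i (cancel (mul_ne_zero two_ne_zero hr0) ?_)
      convert add_mem H1 H2 using 1
      module
end

section
/- Let a, b, c ∈ ℂ. If 2b − c = 2, then the linear span of {v_i^-, v_i^{+−} : i ∈ ℤ} is a 𝔤-submodule of R_{a,b,c}. If 2b + c = 2, then the linear span of {v_i^+, v_i^{+−} + 2(a+i)v_i : i ∈ ℤ} is a 𝔤-submodule of R_{a,b,c}. -/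
open Submodule

theorem isGradedSubmod_span_aux {W : Type} [AddCommGroup W] [Module ℂ W]
    (σ : RamondRep W) (x y : ℤ → W)
    (hx : ∀ i, x i ∈ σ.odd) (hy : ∀ i, y i ∈ σ.even)
    (hLx : ∀ m i, ∃ t : ℂ, σ.L m (x i) = t • x (m + i))
    (hLy : ∀ m i, ∃ t : ℂ, σ.L m (y i) = t • y (m + i))
    (hHx : ∀ m i, ∃ t : ℂ, σ.H m (x i) = t • x (m + i))
    (hHy : ∀ m i, ∃ t : ℂ, σ.H m (y i) = t • y (m + i))
    (hPx : ∀ m i, ∃ t : ℂ, σ.Gp m (x i) = t • y (m + i))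
    (hPy : ∀ m i, ∃ t : ℂ, σ.Gp m (y i) = t • x (m + i))
    (hMx : ∀ m i, ∃ t : ℂ, σ.Gm m (x i) = t • y (m + i))
    (hMy : ∀ m i, ∃ t : ℂ, σ.Gm m (y i) = t • x (m + i)) :
    σ.IsGradedSubmod (Submodule.span ℂ (Set.range x ∪ Set.range y)) := by
  have mx : ∀ i, x i ∈ Submodule.span ℂ (Set.range x ∪ Set.range y) :=
    fun i => Submodule.subset_span (Or.inl ⟨i, rfl⟩)
  have my : ∀ i, y i ∈ Submodule.span ℂ (Set.range x ∪ Set.range y) :=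
    fun i => Submodule.subset_span (Or.inr ⟨i, rfl⟩)
  have key : ∀ f : W →ₗ[ℂ] W,
      (∀ i, f (x i) ∈ Submodule.span ℂ (Set.range x ∪ Set.range y)) →
      (∀ i, f (y i) ∈ Submodule.span ℂ (Set.range x ∪ Set.range y)) →
      ∀ v ∈ Submodule.span ℂ (Set.range x ∪ Set.range y),
        f v ∈ Submodule.span ℂ (Set.range x ∪ Set.range y) := by
    intro f h1 h2 v hv
    have hle : Submodule.span ℂ (Set.range x ∪ Set.range y) ≤
        (Submodule.span ℂ (Set.range x ∪ Set.range y)).comap f := by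
      rw [Submodule.span_le]
      rintro _ (⟨i, rfl⟩ | ⟨i, rfl⟩)
      · exact h1 i
      · exact h2 i
    exact hle hv
  refine ⟨⟨fun m => key _ ?_ ?_, fun m => key _ ?_ ?_, fun m => key _ ?_ ?_,
    fun m => key _ ?_ ?_⟩, ?_⟩
  · intro i; obtain ⟨t, ht⟩ := hLx m i; rw [ht]; exact Submodule.smul_mem _ _ (mx _)
  · intro i; obtain ⟨t, ht⟩ := hLy m i; rw [ht]; exact Submodule.smul_mem _ _ (my _)
  · intro i; obtain ⟨t, ht⟩ := hHx m i; rw [ht]; exact Submodule.smul_mem _ _ (mx _)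
  · intro i; obtain ⟨t, ht⟩ := hHy m i; rw [ht]; exact Submodule.smul_mem _ _ (my _)
  · intro i; obtain ⟨t, ht⟩ := hPx m i; rw [ht]; exact Submodule.smul_mem _ _ (my _)
  · intro i; obtain ⟨t, ht⟩ := hPy m i; rw [ht]; exact Submodule.smul_mem _ _ (mx _)
  · intro i; obtain ⟨t, ht⟩ := hMx m i; rw [ht]; exact Submodule.smul_mem _ _ (my _)
  · intro i; obtain ⟨t, ht⟩ := hMy m i; rw [ht]; exact Submodule.smul_mem _ _ (mx _)
  · apply le_antisymm
    · refine Submodule.span_le.mpr ?_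
      rintro _ (⟨i, rfl⟩ | ⟨i, rfl⟩)
      · exact Submodule.mem_sup_right ⟨mx i, hx i⟩
      · exact Submodule.mem_sup_left ⟨my i, hy i⟩
    · exact sup_le inf_le_left inf_le_left

/-- in `R_{a,b,c}`, if `2b - c = 2` then
`span {v_i^-, v_i^{+-}}` is a `𝔤`-submodule, and if `2b + c = 2` then
`span {v_i^+, v_i^{+-} + 2(a+i) v_i}` is a `𝔤`-submodule. -/
theorem stmt17 (a b c : ℂ) {W : Type} [AddCommGroup W] [Module ℂ W]
    (σ : RamondRep W) (u upm up um : ℤ → W)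
    (hRabc : σ.IsRabc u upm up um a b c) :
    (2 * b - c = 2 →
      σ.IsGradedSubmod (Submodule.span ℂ (Set.range um ∪ Set.range upm))) ∧
    (2 * b + c = 2 →
      σ.IsGradedSubmod (Submodule.span ℂ (Set.range up ∪
        Set.range (fun i : ℤ => upm i + (2 * (a + (i : ℂ))) • u i)))) := by
  obtain ⟨-, -, -, hev, hod, Lu, Lp, Lm, Lpm, Hu, Hp, Hm, Hpm, Pu, Mu, Pp, Mm, Pm, Mp,
    Mpm, Ppm⟩ := hRabc
  have eu : ∀ i, u i ∈ σ.even := fun i => hev ▸ Submodule.subset_span (Or.inl ⟨i, rfl⟩)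
  have epm : ∀ i, upm i ∈ σ.even := fun i => hev ▸ Submodule.subset_span (Or.inr ⟨i, rfl⟩)
  have op : ∀ i, up i ∈ σ.odd := fun i => hod ▸ Submodule.subset_span (Or.inl ⟨i, rfl⟩)
  have om : ∀ i, um i ∈ σ.odd := fun i => hod ▸ Submodule.subset_span (Or.inr ⟨i, rfl⟩)
  constructor
  · intro h
    obtain rfl : c = 2 * b - 2 := by linear_combination -h
    apply isGradedSubmod_span_aux σ um upm om epm
    · exact fun m i => ⟨_, Lm m i⟩
    · refine fun m i => ⟨a + i + (b - 1) * m, ?_⟩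
      rw [Lpm, add_comm i m]; module
    · exact fun m i => ⟨_, Hm m i⟩
    · refine fun m i => ⟨2 * b - 2, ?_⟩
      rw [Hpm]; module
    · refine fun m i => ⟨1, ?_⟩
      rw [Pm, add_comm i m]; module
    · refine fun m i => ⟨0, ?_⟩
      rw [Ppm]; module
    · refine fun m i => ⟨0, ?_⟩
      rw [Mm]; module
    · exact fun m i => ⟨_, Mpm m i⟩
  · intro h
    obtain rfl : c = 2 - 2 * b := by linear_combination h
    apply isGradedSubmod_span_aux σ up _ op
      (fun i => Submodule.add_mem _ (epm i) (Submodule.smul_mem _ _ (eu i)))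
    · exact fun m i => ⟨_, Lp m i⟩
    · refine fun m i => ⟨a + i + (b - 1) * m, ?_⟩
      rw [map_add, map_smul, Lpm, Lu, add_comm i m]; push_cast; module
    · exact fun m i => ⟨_, Hp m i⟩
    · refine fun m i => ⟨2 - 2 * b, ?_⟩
      rw [map_add, map_smul, Hpm, Hu]; push_cast; module
    · refine fun m i => ⟨0, ?_⟩
      rw [Pp]; module
    · refine fun m i => ⟨(4 * b - 4) * m + 2 * (a + i), ?_⟩
      rw [map_add, map_smul, Ppm, Pu]; module
    · refine fun m i => ⟨-1, ?_⟩
      rw [Mp, add_comm i m]; push_cast; module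
    · refine fun m i => ⟨0, ?_⟩
      rw [map_add, map_smul, Mpm, Mu]; module
end

section
/- Let a, b, c ∈ ℂ and let f, g, h : ℤ × ℤ → ℂ be functions satisfying, for all m, r, k ∈ ℤ: g(0, k) = 0; g(r, k) + h(r, k) = −2(a + (2b−1)r + k); −f(m, r+k) + c·h(r, k) − (c+1)h(r, m+k) = −h(m+r, k); and f(m, r+k) + c·g(r, k) − (c−1)g(r, m+k) = g(m+r, k). Then g(m, k) = (c + 2 − 2b)m and h(m, k) = −(2a + 2k + (2b+c)m) for all m, k ∈ ℤ. -/
/-- the functional equations for the cross terms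
`G_r^+ v_k^- = v_{r+k}^{+-} + g(r,k) v_{r+k}` and
`G_r^- v_k^+ = −v_{r+k}^{+-} + h(r,k) v_{r+k}` in a cuspidal module of length 2
over the `N = 2` Ramond algebra.  If `g(0,k) = 0`,
`g(r,k) + h(r,k) = −2(a + (2b−1)r + k)`,
`−f(m, r+k) + c h(r,k) − (c+1) h(r, m+k) = −h(m+r, k)`, and
`f(m, r+k) + c g(r,k) − (c−1) g(r, m+k) = g(m+r, k)` for all `m, r, k ∈ ℤ`,
then `g(m,k) = (c + 2 − 2b) m` and `h(m,k) = −(2a + 2k + (2b+c) m)`. -/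
theorem stmt19 (a b c : ℂ) (f g h : ℤ → ℤ → ℂ)
    (h0 : ∀ k : ℤ, g 0 k = 0)
    (h1 : ∀ r k : ℤ,
      g r k + h r k = -2 * (a + (2 * b - 1) * (r : ℂ) + (k : ℂ)))
    (h2 : ∀ m r k : ℤ,
      -f m (r + k) + c * h r k - (c + 1) * h r (m + k) = -h (m + r) k)
    (h3 : ∀ m r k : ℤ,
      f m (r + k) + c * g r k - (c - 1) * g r (m + k) = g (m + r) k) :
    (∀ m k : ℤ, g m k = (c + 2 - 2 * b) * (m : ℂ)) ∧
      (∀ m k : ℤ, h m k = -(2 * a + 2 * (k : ℂ) + (2 * b + c) * (m : ℂ))) := by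
  have hg : ∀ m k : ℤ, g m k = (c + 2 - 2 * b) * (m : ℂ) := by
    intro m k
    have e2 := h2 m 0 k
    have e3 := h3 m 0 k
    have a1 := h1 0 k
    have a2 := h1 0 (m + k)
    have a3 := h1 m k
    rw [h0] at a1 a2
    rw [h0, h0] at e3
    simp only [add_zero, zero_add, Int.cast_zero, Int.cast_add, mul_zero] at *
    linear_combination (-1 / 2) * e2 - (1 / 2) * e3 + (c / 2) * a1 - ((c + 1) / 2) * a2 + (1 / 2) * a3
  refine ⟨hg, fun m k => ?_⟩
  have e := h1 m k
  rw [hg] at e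
  linear_combination e
end
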